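/- arXiv:2109.05758 — 4 statements merged into one kernel-verified Lean document; each statement's English description precedes it below -/
import Mathlib

section
/- Let p ∈ (0,1) be fixed. Then with high probability sat(G(n,p), K_{1,2}) = ⌈(n − α(G(n,p)))/2⌉, where α(G) denotes the independence number of G. -/
open MeasureTheory Filter Real

/-- The index type of potential edges of a graph on `Fin n`. -/
abbrev EdgeType (n : ℕ) := {e : Sym2 (Fin n) // ¬ e.IsDiag}

/-- The product Bernoulli measure on edge-indicator functions: the binomial
random graph `G(n,p)`. -/
noncomputable def erMeasure (n : ℕ) (p : ℝ) : Measure (EdgeType n → Bool) :=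
  Measure.pi fun _ => (PMF.bernoulli (min (Real.toNNReal p) 1) (min_le_right _ _)).toMeasure

/-- The simple graph determined by an edge-indicator function. -/
def graphOf {n : ℕ} (ω : EdgeType n → Bool) : SimpleGraph (Fin n) :=
  SimpleGraph.fromEdgeSet {e | ∃ h : ¬ e.IsDiag, ω ⟨e, h⟩ = true}

/-- `H` contains a (not necessarily induced) copy of `F`. -/
def ContainsCopy {α β : Type*} (F : SimpleGraph α) (H : SimpleGraph β) : Prop :=
  ∃ f : α → β, Function.Injective f ∧ ∀ ⦃a b⦄, F.Adj a b → H.Adj (f a) (f b)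

/-- `H` is `F`-saturated in `G`: `H` is a spanning subgraph of `G` that is `F`-free,
and adding any edge of `G` missing from `H` creates a copy of `F`. -/
def IsSaturatedIn {V : Type*} {α : Type*} (G H : SimpleGraph V) (F : SimpleGraph α) : Prop :=
  H ≤ G ∧ ¬ ContainsCopy F H ∧
    ∀ v w : V, G.Adj v w → ¬ H.Adj v w →
      ContainsCopy F (H ⊔ SimpleGraph.fromEdgeSet {s(v, w)})

/-- The saturation number `sat(G,F)`: the minimum number of edges of an
`F`-saturated spanning subgraph of `G`. -/
noncomputable def satNum {V α : Type*} (G : SimpleGraph V) (F : SimpleGraph α) : ℕ :=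
  sInf {k | ∃ H : SimpleGraph V, IsSaturatedIn G H F ∧ H.edgeSet.ncard = k}

/-- The cycle `C_m`, as a graph on `ZMod m`. -/
def cycGraph (m : ℕ) : SimpleGraph (ZMod m) :=
  SimpleGraph.fromRel (fun a b => a = b + 1)

/-- The independence number of a graph: the maximum size of an independent set. -/
noncomputable def indepNum {V : Type*} (G : SimpleGraph V) : ℕ :=
  sSup {k | ∃ s : Set V, (s.Pairwise fun a b => ¬ G.Adj a b) ∧ s.ncard = k}


/-- A matching of `G` inside `U`, encoded as an involution. -/
structure MatIn {V : Type*} (G : SimpleGraph V) (U : Finset V) (f : V → V) : Prop where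
  inv : ∀ v, f (f v) = v
  adj : ∀ v, f v ≠ v → G.Adj v (f v)
  out : ∀ v, v ∉ U → f v = v

/-- The graph of an involution. -/
def invGraph {V : Type*} (f : V → V) (hf : ∀ v, f (f v) = v) : SimpleGraph V where
  Adj v w := f v = w ∧ v ≠ w
  symm := ⟨by
    rintro v w ⟨h1, h2⟩
    exact ⟨by rw [← h1, hf], h2.symm⟩⟩
  loopless := ⟨by rintro v ⟨_, h⟩; exact h rfl⟩

theorem containsCopy_path {V : Type*} (H : SimpleGraph V) :
    ContainsCopy (SimpleGraph.pathGraph 3) H ↔ ∃ a b c, a ≠ c ∧ H.Adj b a ∧ H.Adj b c := by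
  constructor
  · rintro ⟨f, hf, h⟩
    refine ⟨f 0, f 1, f 2, fun h => by simpa using hf h, (h ?_).symm, h ?_⟩ <;>
      simp [SimpleGraph.pathGraph_adj]
  · rintro ⟨a, b, c, hac, h1, h2⟩
    refine ⟨![a, b, c], ?_, ?_⟩
    · have := h1.ne
      have := h2.ne
      intro i j hij
      fin_cases i <;> fin_cases j <;> simp_all
    · intro i j hij
      rw [SimpleGraph.pathGraph_adj] at hij
      fin_cases i <;> fin_cases j <;> simp_all [SimpleGraph.adj_comm]

theorem isSat_iff {V : Type*} (G H : SimpleGraph V) :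
    IsSaturatedIn G H (SimpleGraph.pathGraph 3) ↔
      H ≤ G ∧ (∀ a b c, H.Adj b a → H.Adj b c → a = c) ∧
      ∀ v w, G.Adj v w → (∃ u, H.Adj v u) ∨ (∃ u, H.Adj w u) := by
  unfold IsSaturatedIn
  simp only [containsCopy_path]
  refine and_congr_right fun hle => ?_
  constructor
  · rintro ⟨h1, h2⟩
    have h1' : ∀ a b c, H.Adj b a → H.Adj b c → a = c := by
      intro a b c hb hc
      by_contra hne
      exact h1 ⟨a, b, c, hne, hb, hc⟩
    refine ⟨h1', ?_⟩
    intro v w hvw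
    by_cases hH : H.Adj v w
    · exact Or.inl ⟨w, hH⟩
    obtain ⟨a, b, c, hac, hb, hc⟩ := h2 v w hvw hH
    simp only [SimpleGraph.sup_adj, SimpleGraph.fromEdgeSet_adj, Set.mem_singleton_iff,
      Sym2.eq_iff] at hb hc
    grind
  · rintro ⟨h1, h2⟩
    refine ⟨?_, ?_⟩
    · rintro ⟨a, b, c, hne, hb, hc⟩
      exact hne (h1 a b c hb hc)
    · intro v w hvw hH
      have hvw' := hvw.ne
      simp only [SimpleGraph.sup_adj, SimpleGraph.fromEdgeSet_adj, Set.mem_singleton_iff,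
        Sym2.eq_iff]
      rcases h2 v w hvw with ⟨u, hu⟩ | ⟨u, hu⟩
      · exact ⟨u, v, w, by rintro rfl; exact hH hu, Or.inl hu, Or.inr ⟨Or.inl ⟨rfl, rfl⟩, hvw'⟩⟩
      · exact ⟨u, w, v, by rintro rfl; exact hH hu.symm, Or.inl hu,
          Or.inr ⟨Or.inr ⟨rfl, rfl⟩, hvw'.symm⟩⟩

open Classical in
theorem two_mul_edges {V : Type*} [Fintype V] (H : SimpleGraph V)
    [DecidablePred fun v => ∃ u, H.Adj v u] (h : ∀ a b c, H.Adj b a → H.Adj b c → a = c) :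
    2 * H.edgeSet.ncard = (Finset.univ.filter fun v => ∃ u, H.Adj v u).card := by
  have h1 := H.sum_degrees_eq_twice_card_edges
  rw [Set.ncard_eq_toFinset_card' H.edgeSet]
  have h3 : H.edgeSet.toFinset = H.edgeFinset := rfl
  rw [h3, ← h1, Finset.card_filter]
  refine Finset.sum_congr rfl fun v _ => ?_
  split_ifs with hv
  · obtain ⟨u, hu⟩ := hv
    rw [← SimpleGraph.card_neighborFinset_eq_degree, Finset.card_eq_one]
    refine ⟨u, ?_⟩
    ext w
    simp only [SimpleGraph.mem_neighborFinset, Finset.mem_singleton]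
    exact ⟨fun hw => h _ _ _ hw hu, by rintro rfl; exact hu⟩
  · rw [← SimpleGraph.card_neighborFinset_eq_degree, Finset.card_eq_zero]
    ext w
    simp only [SimpleGraph.mem_neighborFinset, Finset.notMem_empty, iff_false]
    exact fun hw => hv ⟨w, hw⟩

theorem indep_le {n : ℕ} (G : SimpleGraph (Fin n)) (s : Finset (Fin n))
    (hs : ∀ a ∈ s, ∀ b ∈ s, ¬ G.Adj a b) : s.card ≤ indepNum G := by
  unfold indepNum
  refine le_csSup ⟨n, ?_⟩ ⟨(s : Set (Fin n)), fun a ha b hb _ => hs a ha b hb, by simp⟩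
  rintro k ⟨t, _, rfl⟩
  simpa using Set.ncard_le_card t

theorem indep_exists {n : ℕ} (G : SimpleGraph (Fin n)) :
    ∃ s : Finset (Fin n), (∀ a ∈ s, ∀ b ∈ s, ¬ G.Adj a b) ∧ s.card = indepNum G := by
  classical
  have : indepNum G ∈ {k | ∃ s : Set (Fin n), (s.Pairwise fun a b => ¬ G.Adj a b) ∧ s.ncard = k} := by
    unfold indepNum
    refine Nat.sSup_mem ⟨0, ∅, by simp, by simp⟩ ⟨n, ?_⟩
    rintro k ⟨t, _, rfl⟩
    simpa using Set.ncard_le_card t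
  obtain ⟨s, hs, hc⟩ := this
  refine ⟨s.toFinset, ?_, by rw [← hc, Set.ncard_eq_toFinset_card']⟩
  intro a ha b hb hab
  exact hs (by simpa using ha) (by simpa using hb) hab.ne hab

theorem MatIn.add {V : Type*} [DecidableEq V] {G : SimpleGraph V} {U : Finset V} {f : V → V}
    (hf : MatIn G U f) {x y : V} (hx : f x = x) (hy : f y = y) (hxy : G.Adj x y) :
    MatIn G (insert x (insert y U)) (fun v => if v = x then y else if v = y then x else f v) := by
  have := hxy.ne
  have := hxy.symm
  have h1 := hf.inv
  have h2 := hf.adj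
  have h3 := hf.out
  refine ⟨?_, ?_, ?_⟩ <;> intro v <;> grind

open Classical in
theorem near_perfect {V : Type*} [Fintype V] (G : SimpleGraph V) (U : Finset V) (k : ℕ)
    (h1 : ∀ A B : Finset V, Disjoint A B → A.card = k → B.card = k →
      ∃ a ∈ A, ∃ b ∈ B, G.Adj a b)
    (h2 : ∀ v ∈ U, 2 * k ≤ (U.filter fun w => G.Adj v w).card) :
    ∃ f, MatIn G U f ∧ ∀ x ∈ U, ∀ y ∈ U, f x = x → f y = y → x = y := by
  have hne : (Finset.univ.filter fun f : V → V => MatIn G U f).Nonempty :=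
    ⟨id, by simp; exact ⟨by simp, by simp, by simp⟩⟩
  obtain ⟨f, hf, hmax⟩ := Finset.exists_max_image _
    (fun f : V → V => (Finset.univ.filter fun v => f v ≠ v).card) hne
  simp only [Finset.mem_filter, Finset.mem_univ, true_and] at hf hmax
  have key : ∀ g, MatIn G U g → (∀ v, f v ≠ v → g v ≠ v) → ∀ x, f x = x → g x = x := by
    intro g hg hsub x hx
    by_contra hgx
    have := Finset.card_lt_card (s := Finset.univ.filter fun v => f v ≠ v)
      (t := Finset.univ.filter fun v => g v ≠ v) (by
        rw [Finset.ssubset_iff_of_subset]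
        · exact ⟨x, by simpa using hgx, by simpa using hx⟩
        · intro v; simpa using hsub v)
    exact absurd (hmax g hg) (by omega)
  refine ⟨f, hf, ?_⟩
  intro x hx y hy fx fy
  by_contra hxy
  have f1 := hf.inv
  have f2 := hf.adj
  have f3 := hf.out
  have finj : Function.Injective f := fun a b h => by rw [← f1 a, h, f1]
  have noadj : ∀ u ∈ U, ∀ w ∈ U, f u = u → f w = w → ¬ G.Adj u w := by
    intro u hu w hw fu fw huw
    have hg := hf.add fu fw huw
    rw [Finset.insert_eq_self.2 hw, Finset.insert_eq_self.2 hu] at hg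
    have := key _ hg (by have := huw.ne; grind) u fu
    simp at this
    exact huw.ne this.symm
  have hA : 2 * k ≤ ((U.filter fun w => G.Adj x w).image f).card := by
    rw [Finset.card_image_of_injective _ finj]; exact h2 x hx
  have hB : 2 * k ≤ ((U.filter fun w => G.Adj y w).image f).card := by
    rw [Finset.card_image_of_injective _ finj]; exact h2 y hy
  obtain ⟨A, hAs, hAc⟩ := Finset.exists_subset_card_eq (show k ≤ _ by omega : k ≤
    ((U.filter fun w => G.Adj x w).image f).card)
  have hB' : k ≤ (((U.filter fun w => G.Adj y w).image f) \ A).card := by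
    have := Finset.le_card_sdiff A ((U.filter fun w => G.Adj y w).image f)
    omega
  obtain ⟨B, hBs, hBc⟩ := Finset.exists_subset_card_eq hB'
  obtain ⟨a, ha, b, hb, hab⟩ := h1 A B
    (Finset.disjoint_left.2 fun v hv hv' => (Finset.mem_sdiff.1 (hBs hv')).2 hv) hAc hBc
  obtain ⟨c, hc, rfl⟩ := Finset.mem_image.1 (hAs ha)
  obtain ⟨d, hd, rfl⟩ := Finset.mem_image.1 (Finset.mem_sdiff.1 (hBs hb)).1
  simp only [Finset.mem_filter] at hc hd
  obtain ⟨hcU, hxc⟩ := hc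
  obtain ⟨hdU, hyd⟩ := hd
  have hc' : f c ≠ c := fun h => noadj x hx c hcU fx h hxc
  have hd' : f d ≠ d := fun h => noadj y hy d hdU fy h hyd
  have haU : f c ∈ U := by
    by_contra h
    have := f3 _ h
    rw [f1] at this; exact hc' this.symm
  have hbU : f d ∈ U := by
    by_contra h
    have := f3 _ h
    rw [f1] at this; exact hd' this.symm
  have fc := f1 c
  have fd := f1 d
  generalize hga : f c = a at *
  generalize hgb : f d = b at *
  have s1 := hxc.symm
  have s2 := hyd.symm
  have s3 := hab.symm
  have n1 := hab.ne
  have n2 := hxc.ne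
  have n3 := hyd.ne
  by_cases hbc : b = c
  · subst hbc
    have hda : d = a := by rw [← fd, hga]
    subst hda
    have hg : MatIn G U (fun v => if v = x then b else if v = b then x else
        if v = d then y else if v = y then d else f v) := by
      clear key noadj hmax hne h1 h2 hA hB hAs hBs hB' ha hb hAc hBc finj hf
      refine ⟨?_, ?_, ?_⟩ <;> intro v
      · have := f1 v
        grind (splits := 30)
      · have := f2 v
        grind
      · have := f3 v
        grind
    have := key _ hg (by
      clear key noadj hmax hne h1 h2 hA hB hAs hBs hB' ha hb hAc hBc finj hf hg f1 f2 f3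
      intro v hv
      grind) x fx
    simp at this
    exact n2 this.symm
  · have hcd : c ≠ d := by rintro rfl; exact n1 (hga.symm.trans hgb)
    have had : a ≠ d := by rintro rfl; exact hbc (hgb.symm.trans fc)
    have hg : MatIn G U (fun v => if v = x then c else if v = c then x else
        if v = d then y else if v = y then d else if v = a then b else
        if v = b then a else f v) := by
      clear key noadj hmax hne h1 h2 hA hB hAs hBs hB' ha hb hAc hBc finj hf
      refine ⟨?_, ?_, ?_⟩ <;> intro v
      · have := f1 v
        grind (splits := 30)
      · have := f2 v
        grind
      · have := f3 v
        grind
    have := key _ hg (by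
      clear key noadj hmax hne h1 h2 hA hB hAs hBs hB' ha hb hAc hBc finj hf hg f1 f2 f3
      intro v hv
      grind) x fx
    simp at this
    exact n2 this.symm

open Classical in
theorem sat_of_matIn {n : ℕ} (G : SimpleGraph (Fin n)) (U W : Finset (Fin n)) (f : Fin n → Fin n)
    [DecidablePred fun v => f v ≠ v]
    (hf : MatIn G U f) (hind : ∀ a ∈ W, ∀ b ∈ W, ¬ G.Adj a b) (hW : ∀ v, f v = v → v ∈ W) :
    {k | ∃ H : SimpleGraph (Fin n), IsSaturatedIn G H (SimpleGraph.pathGraph 3) ∧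
        H.edgeSet.ncard = k}.Nonempty ∧
    2 * satNum G (SimpleGraph.pathGraph 3) ≤ (Finset.univ.filter fun v => f v ≠ v).card := by
  set H := invGraph f hf.inv with hH
  have hadj : ∀ v w, H.Adj v w ↔ f v = w ∧ v ≠ w := fun v w => Iff.rfl
  have hmat : ∀ a b c, H.Adj b a → H.Adj b c → a = c := by
    intro a b c h1 h2
    rw [hadj] at h1 h2
    exact h1.1.symm.trans h2.1
  have hsat : IsSaturatedIn G H (SimpleGraph.pathGraph 3) := by
    rw [isSat_iff]
    refine ⟨?_, hmat, ?_⟩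
    · intro v w h
      rw [hadj] at h
      have := hf.adj v (by rw [h.1]; exact h.2.symm)
      rwa [h.1] at this
    · intro v w hvw
      by_contra hcon
      push Not at hcon
      refine hind v (hW v ?_) w (hW w ?_) hvw
      · by_contra h; exact hcon.1 (f v) ⟨rfl, fun h' => h h'.symm⟩
      · by_contra h; exact hcon.2 (f w) ⟨rfl, fun h' => h h'.symm⟩
  have hle : satNum G (SimpleGraph.pathGraph 3) ≤ H.edgeSet.ncard :=
    Nat.sInf_le ⟨H, hsat, rfl⟩
  have h2 := two_mul_edges H hmat
  have h3 : (Finset.univ.filter fun v => ∃ u, H.Adj v u)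
      = (Finset.univ.filter fun v => f v ≠ v) := by
    ext v
    simp only [Finset.mem_filter, Finset.mem_univ, true_and, hadj]
    exact ⟨fun ⟨u, h, h'⟩ => by rw [h]; exact h'.symm, fun h => ⟨f v, rfl, h.symm⟩⟩
  rw [h3] at h2
  exact ⟨⟨_, H, hsat, rfl⟩, by omega⟩

open Classical in
theorem sat_eq {n : ℕ} (G : SimpleGraph (Fin n)) (k : ℕ) (hk : 1 ≤ k)
    (h1 : ∀ A B : Finset (Fin n), Disjoint A B → A.card = k → B.card = k →
      ∃ a ∈ A, ∃ b ∈ B, G.Adj a b)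
    (h2 : ∀ v, 6 * k ≤ (Finset.univ.filter fun w => G.Adj v w).card) :
    satNum G (SimpleGraph.pathGraph 3) = (n - indepNum G + 1) / 2 := by
  obtain ⟨I, hI, hIc⟩ := indep_exists G
  have hI2 : I.card < 2 * k := by
    by_contra hcon
    push Not at hcon
    obtain ⟨A, hA, hAc⟩ := Finset.exists_subset_card_eq (show k ≤ I.card by omega)
    have := Finset.le_card_sdiff A I
    obtain ⟨B, hB, hBc⟩ := Finset.exists_subset_card_eq (show k ≤ (I \ A).card by omega)
    obtain ⟨a, ha, b, hb, hab⟩ := h1 A B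
      (Finset.disjoint_left.2 fun v hv hv' => (Finset.mem_sdiff.1 (hB hv')).2 hv) hAc hBc
    exact hI a (hA ha) b (Finset.mem_sdiff.1 (hB hb)).1 hab
  have hUc : Iᶜ.card = n - I.card := by rw [Finset.card_compl, Fintype.card_fin]
  have hIn : I.card ≤ n := by simpa using Finset.card_le_univ I
  obtain ⟨f, hf, huniq⟩ := near_perfect G Iᶜ k h1 (by
    intro v _
    have h3 : (Finset.univ.filter fun w => G.Adj v w) \ I ⊆ Iᶜ.filter fun w => G.Adj v w := by
      intro w; simp; tauto
    have := Finset.card_le_card h3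
    have := Finset.le_card_sdiff I (Finset.univ.filter fun w => G.Adj v w)
    have := h2 v
    omega)
  have hle : {k | ∃ H : SimpleGraph (Fin n), IsSaturatedIn G H (SimpleGraph.pathGraph 3) ∧
        H.edgeSet.ncard = k}.Nonempty ∧
      satNum G (SimpleGraph.pathGraph 3) ≤ (n - indepNum G + 1) / 2 := by
    rw [← hIc]
    by_cases hx : ∃ x ∈ Iᶜ, f x = x
    · obtain ⟨x, hx, fx⟩ := hx
      have : ∃ z ∈ I, G.Adj x z := by
        by_contra hcon
        push Not at hcon
        have := indep_le G (insert x I) (by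
          intro a ha b hb hab
          rw [Finset.mem_insert] at ha hb
          rcases ha with rfl | ha <;> rcases hb with rfl | hb
          · exact hab.ne rfl
          · exact hcon b hb hab
          · exact hcon a ha hab.symm
          · exact hI a ha b hb hab)
        rw [Finset.card_insert_of_notMem (by simpa using hx)] at this
        omega
      obtain ⟨z, hz, hxz⟩ := this
      have fz : f z = z := hf.out z (by simpa using hz)
      have hg := hf.add fx fz hxz
      obtain ⟨hne, this⟩ := sat_of_matIn G _ I _ hg hI (by
        intro v hv
        by_contra hvI
        have := huniq v (by simpa using hvI) x hx
        have := hxz.ne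
        grind)
      have hsub : (Finset.univ.filter fun v =>
          (if v = x then z else if v = z then x else f v) ≠ v) ⊆ insert z Iᶜ := by
        intro v hv
        have := hf.out v
        simp only [Finset.mem_filter, Finset.mem_univ, true_and, Finset.mem_insert] at hv ⊢
        grind
      have := Finset.card_le_card hsub
      have := Finset.card_insert_le z Iᶜ
      exact ⟨hne, by omega⟩
    · push Not at hx
      obtain ⟨hne, this⟩ := sat_of_matIn G _ I f hf hI (by
        intro v hv
        by_contra hvI
        exact hx v (by simpa using hvI) hv)
      have hsub : (Finset.univ.filter fun v => f v ≠ v) ⊆ Iᶜ := by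
        intro v hv
        by_contra h
        exact (Finset.mem_filter.1 hv).2 (hf.out v h)
      have := Finset.card_le_card hsub
      exact ⟨hne, by omega⟩
  refine le_antisymm hle.2 ?_
  -- lower bound
  have hmem : satNum G (SimpleGraph.pathGraph 3) ∈
      {k | ∃ H : SimpleGraph (Fin n), IsSaturatedIn G H (SimpleGraph.pathGraph 3) ∧
        H.edgeSet.ncard = k} := by
    exact Nat.sInf_mem hle.1
  obtain ⟨H, hH, hc⟩ := hmem
  rw [isSat_iff] at hH
  obtain ⟨_, hm, hcov⟩ := hH
  have h3 := two_mul_edges H hm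
  have h4 := indep_le G (Finset.univ.filter fun v => ∃ u, H.Adj v u)ᶜ (by
    intro a ha b hb hab
    simp only [Finset.mem_compl, Finset.mem_filter, Finset.mem_univ, true_and] at ha hb
    rcases hcov a b hab with h | h
    · exact ha h
    · exact hb h)
  rw [Finset.card_compl, Fintype.card_fin] at h4
  omega

theorem edge_prob (n : ℕ) (p : ℝ) (hp0 : 0 < p) (hp1 : p < 1) (S : Finset (EdgeType n)) :
    erMeasure n p {ω | ∀ e ∈ S, ω e = false} = (ENNReal.ofReal (1 - p)) ^ S.card := by
  classical
  have hset : {ω : EdgeType n → Bool | ∀ e ∈ S, ω e = false}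
      = Set.pi Set.univ (fun e => if e ∈ S then {false} else Set.univ) := by
    ext ω
    simp only [Set.mem_setOf_eq, Set.mem_pi, Set.mem_univ, true_imp_iff]
    refine forall_congr' fun e => ?_
    by_cases h : e ∈ S <;> simp [h]
  unfold erMeasure
  rw [hset, Measure.pi_pi]
  have : ∀ e : EdgeType n, (PMF.bernoulli (min (Real.toNNReal p) 1) (min_le_right _ _)).toMeasure
      (if e ∈ S then {false} else Set.univ) = if e ∈ S then ENNReal.ofReal (1 - p) else 1 := by
    intro e
    split_ifs
    · rw [PMF.toMeasure_apply_singleton _ _ (measurableSet_singleton _), PMF.bernoulli_apply]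
      have h1 : min (Real.toNNReal p) 1 = Real.toNNReal p :=
        min_eq_left (by simpa using hp1.le)
      simp only [cond_false, h1]
      rw [ENNReal.ofReal_sub _ hp0.le, ENNReal.ofReal_one]
      simp [ENNReal.ofReal]
    · exact measure_univ
  rw [Finset.prod_congr rfl fun e _ => this e, Finset.prod_ite]
  simp

/-- No edges between `A` and `B`. -/
def noEdge {n : ℕ} (A B : Finset (Fin n)) : Set (EdgeType n → Bool) :=
  {ω | ∀ a ∈ A, ∀ b ∈ B, ¬ (graphOf ω).Adj a b}

theorem pair_prob (n : ℕ) (p : ℝ) (hp0 : 0 < p) (hp1 : p < 1) (A B : Finset (Fin n))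
    (hAB : Disjoint A B) (m : ℕ) (hm : m ≤ A.card * B.card) :
    erMeasure n p (noEdge A B) ≤ (ENNReal.ofReal (1 - p)) ^ m := by
  classical
  set S : Finset (EdgeType n) :=
    Finset.univ.filter fun e => ∃ a ∈ A, ∃ b ∈ B, e.1 = s(a, b) with hS
  have hne : ∀ a ∈ A, ∀ b ∈ B, a ≠ b := fun a ha b hb h =>
    Finset.disjoint_left.1 hAB ha (h ▸ hb)
  have hcard : A.card * B.card ≤ S.card := by
    rw [← Finset.card_product, ← Finset.card_map (Function.Embedding.subtype _) (s := S),
      ← Finset.card_image_of_injOn (s := A ×ˢ B) (f := fun x => s(x.1, x.2))]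
    · refine Finset.card_le_card ?_
      intro e he
      obtain ⟨⟨a, b⟩, hab, rfl⟩ := Finset.mem_image.1 he
      rw [Finset.mem_product] at hab
      refine Finset.mem_map.2 ⟨⟨s(a, b), by simpa using hne a hab.1 b hab.2⟩, ?_, rfl⟩
      simp only [hS, Finset.mem_filter, Finset.mem_univ, true_and]
      exact ⟨a, hab.1, b, hab.2, rfl⟩
    · rintro ⟨a, b⟩ h ⟨c, d⟩ h' he
      simp only [Finset.coe_product, Set.mem_prod, Finset.mem_coe] at h h'
      simp only [Sym2.eq_iff] at he
      rcases he with ⟨rfl, rfl⟩ | ⟨rfl, rfl⟩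
      · rfl
      · exact absurd rfl (hne a h.1 a h'.2)
  calc erMeasure n p (noEdge A B) ≤ erMeasure n p {ω | ∀ e ∈ S, ω e = false} := by
        refine measure_mono ?_
        intro ω hω e he
        simp only [hS, Finset.mem_filter, Finset.mem_univ, true_and] at he
        obtain ⟨a, ha, b, hb, hab⟩ := he
        by_contra hcon
        refine hω a ha b hb ?_
        unfold graphOf
        rw [SimpleGraph.fromEdgeSet_adj]
        refine ⟨⟨by simpa using hne a ha b hb, ?_⟩, hne a ha b hb⟩
        have : e = ⟨s(a, b), by simpa using hne a ha b hb⟩ := Subtype.ext hab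
        rw [← this]
        simpa using hcon
    _ = (ENNReal.ofReal (1 - p)) ^ S.card := edge_prob n p hp0 hp1 S
    _ ≤ _ := pow_le_pow_of_le_one (zero_le) (by
        rw [ENNReal.ofReal_le_one]; linarith) (hm.trans hcard)

/-- A block of vertices. -/
def blk (n k j : ℕ) : Finset (Fin n) := Finset.univ.filter fun i => i.val / (k + 1) = j

theorem blk_card (n k j : ℕ) (h : (j + 1) * (k + 1) ≤ n) : k + 1 ≤ (blk n k j).card := by
  have hb : ∀ r : Fin (k + 1), j * (k + 1) + r.val < n := by
    intro r
    have := r.2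
    nlinarith
  have := Finset.card_le_card_of_injOn (s := (Finset.univ : Finset (Fin (k + 1)))) (t := blk n k j)
    (fun r => ⟨j * (k + 1) + r.val, hb r⟩) (by
      intro r _
      simp only [blk, Finset.coe_filter, Finset.mem_univ, true_and, Set.mem_setOf_eq]
      rw [Nat.add_comm, Nat.add_mul_div_right _ _ (Nat.succ_pos k), Nat.div_eq_of_lt r.2, zero_add])
    (by
      intro r _ r' _ h
      simp only [Fin.mk.injEq] at h
      exact Fin.ext (by omega))
  simpa using this

theorem bad_prob (n k : ℕ) (p : ℝ) (hp0 : 0 < p) (hp1 : p < 1) (hk : 1 ≤ k)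
    (hkn : 6 * k * (k + 1) ≤ n) :
    erMeasure n p {ω | satNum (graphOf ω) (SimpleGraph.pathGraph 3)
          = (n - indepNum (graphOf ω) + 1) / 2}ᶜ ≤
      ((n : ENNReal) ^ 2 * (ENNReal.ofReal (1 - p)) ^ k) ^ k
        + (n : ENNReal) ^ 2 * (ENNReal.ofReal (1 - p)) ^ k := by
  classical
  set q := ENNReal.ofReal (1 - p)
  set P := ((Finset.powersetCard k (Finset.univ : Finset (Fin n))) ×ˢ
    (Finset.powersetCard k (Finset.univ : Finset (Fin n)))).filter (fun x => Disjoint x.1 x.2)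
    with hP
  set Q := (Finset.univ : Finset (Fin n)) ×ˢ Finset.range (6 * k) with hQ
  have hsub : {ω | satNum (graphOf ω) (SimpleGraph.pathGraph 3)
          = (n - indepNum (graphOf ω) + 1) / 2}ᶜ ⊆
      (⋃ x ∈ P, noEdge x.1 x.2) ∪ (⋃ x ∈ Q, noEdge {x.1} ((blk n k x.2).erase x.1)) := by
    intro ω hω
    by_contra hcon
    simp only [Set.mem_union, Set.mem_iUnion, not_or, not_exists] at hcon
    obtain ⟨c1, c2⟩ := hcon
    refine hω (sat_eq (graphOf ω) k hk ?_ ?_)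
    · intro A B hAB hA hB
      have := c1 (A, B) (by simp [hP, Finset.mem_powersetCard, hA, hB, hAB])
      simp only [noEdge, Set.mem_setOf_eq] at this
      push Not at this
      exact this
    · intro v
      have hs : Finset.range (6 * k) ⊆
          (Finset.univ.filter fun w => (graphOf ω).Adj v w).image (fun w => w.val / (k + 1)) := by
        intro j hj
        have := c2 (v, j) (by simpa [hQ] using hj)
        simp only [noEdge, Set.mem_setOf_eq] at this
        push Not at this
        obtain ⟨a, ha, b, hb, hab⟩ := this
        rw [Finset.mem_singleton] at ha
        subst ha
        have hb' := (Finset.mem_erase.1 hb).2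
        simp only [blk, Finset.mem_filter, Finset.mem_univ, true_and] at hb'
        exact Finset.mem_image.2 ⟨b, by simpa using hab, hb'⟩
      have h1 := Finset.card_le_card hs
      have h2 := Finset.card_image_le (s := Finset.univ.filter fun w => (graphOf ω).Adj v w)
        (f := fun w => w.val / (k + 1))
      rw [Finset.card_range] at h1
      convert h1.trans h2
  refine (measure_mono hsub).trans ((measure_union_le _ _).trans (add_le_add ?_ ?_))
  · refine (measure_biUnion_finset_le _ _).trans ?_
    have hle : ∀ x ∈ P, erMeasure n p (noEdge x.1 x.2) ≤ q ^ (k * k) := by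
      intro x hx
      simp only [hP, Finset.mem_filter, Finset.mem_product, Finset.mem_powersetCard] at hx
      exact pair_prob n p hp0 hp1 _ _ hx.2 _ (by rw [hx.1.1.2, hx.1.2.2])
    refine (Finset.sum_le_card_nsmul _ _ _ hle).trans ?_
    have hc : P.card ≤ n ^ k * n ^ k := by
      refine (Finset.card_filter_le _ _).trans ?_
      rw [Finset.card_product, Finset.card_powersetCard, Finset.card_univ, Fintype.card_fin]
      exact Nat.mul_le_mul (Nat.choose_le_pow n k) (Nat.choose_le_pow n k)
    rw [nsmul_eq_mul, mul_pow, ← pow_mul, ← pow_mul]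
    gcongr
    calc (P.card : ENNReal) ≤ ((n ^ k * n ^ k : ℕ) : ENNReal) := by exact_mod_cast hc
      _ = _ := by push_cast; ring
  · refine (measure_biUnion_finset_le _ _).trans ?_
    have hle : ∀ x ∈ Q, erMeasure n p (noEdge {x.1} ((blk n k x.2).erase x.1)) ≤ q ^ k := by
      intro x hx
      simp only [hQ, Finset.mem_product, Finset.mem_range, Finset.mem_univ, true_and] at hx
      refine pair_prob n p hp0 hp1 _ _ (by simp) _ ?_
      have h1 := blk_card n k x.2 ((Nat.mul_le_mul_right (k + 1) hx).trans hkn)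
      have h2 := Finset.pred_card_le_card_erase (s := blk n k x.2) (a := x.1)
      rw [Finset.card_singleton]
      omega
    refine (Finset.sum_le_card_nsmul _ _ _ hle).trans ?_
    have hc : Q.card ≤ n ^ 2 := by
      rw [hQ, Finset.card_product, Finset.card_univ, Fintype.card_fin, Finset.card_range, sq]
      refine Nat.mul_le_mul_left n ?_
      nlinarith
    rw [nsmul_eq_mul]
    gcongr
    exact_mod_cast hc

theorem X_tendsto (q : ℝ) (hq0 : 0 < q) (hq1 : q < 1) :
    Tendsto (fun n : ℕ => (n : ℝ) ^ 2 * q ^ (Nat.sqrt n / 6)) atTop (nhds 0) := by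
  have hk : Tendsto (fun n : ℕ => Nat.sqrt n / 6 + 1) atTop atTop := by
    refine tendsto_atTop.2 fun b => ?_
    filter_upwards [eventually_ge_atTop ((6 * b) * (6 * b))] with n hn
    have : 6 * b ≤ Nat.sqrt n := Nat.le_sqrt.2 hn
    omega
  have h1 := (tendsto_pow_const_mul_const_pow_of_abs_lt_one 4 (r := q)
    (by rwa [abs_of_pos hq0])).comp hk
  have h2 := h1.const_mul (6 ^ 4 / q)
  rw [mul_zero] at h2
  refine squeeze_zero (fun n => by positivity) (fun n => ?_) h2
  simp only [Function.comp]
  set k := Nat.sqrt n / 6 with hkdef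
  have hs : Nat.sqrt n + 1 ≤ 6 * (k + 1) := by omega
  have hn : n ≤ (6 * (k + 1)) * (6 * (k + 1)) :=
    (Nat.lt_succ_sqrt n).le.trans (Nat.mul_le_mul hs hs)
  have hn' : (n : ℝ) ≤ (6 * ((k : ℝ) + 1)) * (6 * ((k : ℝ) + 1)) := by exact_mod_cast hn
  have : (n : ℝ) ^ 2 ≤ 6 ^ 4 * ((k : ℝ) + 1) ^ 4 := by
    calc (n : ℝ) ^ 2 ≤ ((6 * ((k : ℝ) + 1)) * (6 * ((k : ℝ) + 1))) ^ 2 := by gcongr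
      _ = _ := by ring
  calc (n : ℝ) ^ 2 * q ^ k ≤ (6 ^ 4 * ((k : ℝ) + 1) ^ 4) * q ^ k := by gcongr
    _ = _ := by push_cast; rw [pow_succ q k]; field_simp

/-- For fixed `p ∈ (0,1)`, whp
`sat(G(n,p), K_{1,2}) = ⌈(n − α(G(n,p)))/2⌉`.  (`K_{1,2}` is the path on 3
vertices; `⌈k/2⌉ = (k+1)/2` in natural-number division.) -/
theorem star_two_saturation (p : ℝ) (hp0 : 0 < p) (hp1 : p < 1) :
    Tendsto (fun n : ℕ =>
      erMeasure n p {ω |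
        satNum (graphOf ω) (SimpleGraph.pathGraph 3)
          = (n - indepNum (graphOf ω) + 1) / 2})
      atTop (nhds 1) := by
  have hprob : ∀ n, IsProbabilityMeasure (erMeasure n p) := by
    intro n; unfold erMeasure; infer_instance
  have hX := X_tendsto (1 - p) (by linarith) (by linarith)
  have hX2 : Tendsto (fun n : ℕ => 1 - (ENNReal.ofReal ((n : ℝ) ^ 2 * (1 - p) ^ (Nat.sqrt n / 6)) +
      ENNReal.ofReal ((n : ℝ) ^ 2 * (1 - p) ^ (Nat.sqrt n / 6)))) atTop (nhds 1) := by
    have h := ENNReal.tendsto_ofReal hX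
    have h' := ENNReal.Tendsto.sub (tendsto_const_nhds (x := (1 : ENNReal))) (h.add h)
      (Or.inl ENNReal.one_ne_top)
    simpa using h'
  refine tendsto_of_tendsto_of_tendsto_of_le_of_le' hX2 tendsto_const_nhds ?_
    (Eventually.of_forall fun n => prob_le_one)
  filter_upwards [eventually_ge_atTop 36, hX.eventually (ge_mem_nhds (zero_lt_one))] with n hn hx1
  set k := Nat.sqrt n / 6 with hk
  have h6 : 6 ≤ Nat.sqrt n := Nat.le_sqrt.2 (by omega)
  have hk1 : 1 ≤ k := by omega
  have hkn : 6 * k * (k + 1) ≤ n := by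
    have h1 : 6 * k ≤ Nat.sqrt n := by omega
    have h2 : (6 * k) * (6 * k) ≤ n := (Nat.mul_le_mul h1 h1).trans (Nat.sqrt_le n)
    nlinarith
  have hb := bad_prob n k p hp0 hp1 hk1 hkn
  have hq : 0 ≤ 1 - p := by linarith
  have heq : (n : ENNReal) ^ 2 * (ENNReal.ofReal (1 - p)) ^ k
      = ENNReal.ofReal ((n : ℝ) ^ 2 * (1 - p) ^ k) := by
    rw [ENNReal.ofReal_mul (by positivity), ENNReal.ofReal_pow hq, ENNReal.ofReal_pow (by positivity),
      ENNReal.ofReal_natCast]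
  rw [heq] at hb
  set x := ENNReal.ofReal ((n : ℝ) ^ 2 * (1 - p) ^ k)
  have hx1' : x ≤ 1 := ENNReal.ofReal_le_one.2 hx1
  have hxk : x ^ k ≤ x := pow_le_of_le_one (zero_le) hx1' (by omega)
  rw [tsub_le_iff_right]
  calc (1 : ENNReal) = erMeasure n p Set.univ := measure_univ.symm
    _ = erMeasure n p ({ω | satNum (graphOf ω) (SimpleGraph.pathGraph 3)
          = (n - indepNum (graphOf ω) + 1) / 2} ∪ {ω | satNum (graphOf ω) (SimpleGraph.pathGraph 3)
          = (n - indepNum (graphOf ω) + 1) / 2}ᶜ) := by rw [Set.union_compl_self]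
    _ ≤ _ := (measure_union_le _ _).trans (add_le_add le_rfl (hb.trans (add_le_add hxk le_rfl)))
end

section
/- Let p ∈ (0,1) be fixed. There exists a constant δ > 0 such that with high probability the following holds for G(n,p): for every set S ⊆ [n] of at most ⌊δn⌋ vertices, the diameter of the graph obtained from G(n,p) by deleting the vertices of S equals the diameter of G(n,p). -/
open MeasureTheory Filter Real

open ProbabilityTheory

lemma aux_inter {E ι : Type*} [Fintype E] [DecidableEq E] (ν : Measure Bool)
    [IsProbabilityMeasure ν] (e : ι × Bool → E) (he : Function.Injective e) (b : Bool)
    (s : Finset ι) :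
    Measure.pi (fun _ : E => ν) (⋂ i ∈ s, {ω : E → Bool | ∀ j, ω (e (i, j)) = b})
      = (ν {b}) ^ (2 * s.card) := by
  classical
  have h1 : (⋂ i ∈ s, {ω : E → Bool | ∀ j, ω (e (i, j)) = b})
      = Set.pi Set.univ
        (fun x => if x ∈ (s ×ˢ (Finset.univ : Finset Bool)).image e then {b} else Set.univ) := by
    ext ω
    simp only [Set.mem_iInter, Set.mem_ofPred_eq, Set.mem_pi, Set.mem_univ, true_imp_iff]
    constructor
    · intro h x
      split_ifs with hx
      · simp only [Finset.mem_image, Finset.mem_product, Finset.mem_univ, and_true] at hx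
        obtain ⟨⟨i, j⟩, hi, rfl⟩ := hx
        exact h i hi j
      · trivial
    · intro h i hi j
      have := h (e (i, j))
      rw [if_pos (Finset.mem_image_of_mem _ (by simp [hi]))] at this
      exact this
  rw [h1, Measure.pi_pi]
  simp only [apply_ite, measure_univ, Finset.prod_ite_mem, Finset.univ_inter]
  rw [Finset.prod_const, Finset.card_image_of_injective _ he, Finset.card_product]
  simp [mul_comm]

lemma aux_chernoff {E ι : Type*} [Fintype E] [DecidableEq E] [Fintype ι] (ν : Measure Bool)
    [IsProbabilityMeasure ν] (e : ι × Bool → E) (he : Function.Injective e) (b : Bool) (x : ℝ) :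
    (Measure.pi (fun _ : E => ν)).real
      {ω | (Nat.card {i : ι // ∀ j, ω (e (i, j)) = b} : ℝ) ≤ x}
      ≤ exp x * (1 - (ν.real {b}) ^ 2 * (1 - exp (-1))) ^ (Fintype.card ι) := by
  classical
  set μ := Measure.pi (fun _ : E => ν)
  set A : ι → Set (E → Bool) := fun i => {ω | ∀ j, ω (e (i, j)) = b}
  have hA : ∀ i, MeasurableSet (A i) := fun i => (Set.toFinite _).measurableSet
  have hsing : ∀ i, μ (A i) = ν {b} ^ 2 := by
    intro i
    have := aux_inter ν e he b {i}
    rwa [Finset.set_biInter_singleton, Finset.card_singleton, mul_one] at this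
  have hind : iIndepSet A μ := by
    rw [iIndepSet_iff_meas_biInter hA]
    intro s
    rw [aux_inter ν e he b s, Finset.prod_congr rfl (fun i _ => hsing i), Finset.prod_const,
      pow_mul]
  have hX : iIndepFun (fun i => (A i).indicator fun _ => (1 : ℝ)) μ :=
    hind.iIndepFun_indicator
  have hXm : ∀ i, Measurable ((A i).indicator fun _ => (1 : ℝ)) :=
    fun i => measurable_const.indicator (hA i)
  have hm := hX.mgf_sum (t := -1) hXm Finset.univ
  have hmgf : ∀ i, mgf ((A i).indicator fun _ => (1 : ℝ)) μ (-1)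
      = 1 - (ν.real {b}) ^ 2 * (1 - exp (-1)) := by
    intro i
    have h2 : (fun ω => exp (-1 * (A i).indicator (fun _ => (1 : ℝ)) ω))
        = fun ω => 1 - (1 - exp (-1)) * (A i).indicator (fun _ => (1 : ℝ)) ω := by
      ext ω
      by_cases h : ω ∈ A i <;> simp [h]
    have h3 : ∫ ω, (A i).indicator (fun _ => (1 : ℝ)) ω ∂μ = (ν.real {b}) ^ 2 := by
      rw [integral_indicator_const _ (hA i)]
      simp [measureReal_def, hsing]
    rw [mgf, h2, integral_sub (integrable_const _) (Integrable.of_finite),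
      integral_const_mul, h3]
    simp
    ring
  have hc := measure_le_le_exp_mul_mgf (μ := μ) (X := ∑ i, (A i).indicator fun _ => (1 : ℝ))
    (t := -1) x (by norm_num) Integrable.of_finite
  rw [hm, Finset.prod_congr rfl (fun i _ => hmgf i), Finset.prod_const, Finset.card_univ] at hc
  simp only [neg_neg, one_mul] at hc
  convert hc using 4 with ω
  rw [Finset.sum_apply]
  simp only [Set.indicator_apply, Finset.sum_boole, A, Set.mem_ofPred_eq]
  rw [Nat.card_eq_fintype_card, Fintype.card_subtype]

lemma ediam_two {V : Type*} (G : SimpleGraph V)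
    (h : ∀ u v, u ≠ v → ∃ w, G.Adj u w ∧ G.Adj w v)
    (h2 : ∃ u v, u ≠ v ∧ ¬ G.Adj u v) : G.ediam = 2 := by
  apply le_antisymm
  · apply SimpleGraph.ediam_le_of_edist_le
    intro u v
    by_cases huv : u = v
    · simp [huv]
    · obtain ⟨w, h1, h2⟩ := h u v huv
      have := SimpleGraph.edist_le (SimpleGraph.Walk.cons h1 (SimpleGraph.Walk.cons h2 .nil))
      simpa using this
  · obtain ⟨u, v, huv, hn⟩ := h2
    refine le_trans ?_ (SimpleGraph.edist_le_ediam (u := u) (v := v))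
    have : ¬ G.edist u v ≤ 1 := by
      rw [SimpleGraph.edist_le_one_iff_adj_or_eq]; tauto
    have := Order.add_one_le_of_lt (not_le.mp this)
    simpa [one_add_one_eq_two] using this

/-- the edge joining `w` to `u` (if `j`) or to `v` (otherwise) -/
def edg {n : ℕ} (u v : Fin n) (x : {w : Fin n // w ≠ u ∧ w ≠ v} × Bool) : EdgeType n :=
  ⟨s(cond x.2 u v, x.1.1), by
    obtain ⟨⟨w, h1, h2⟩, j⟩ := x
    cases j
    · simpa using h2.symm
    · simpa using h1.symm⟩

lemma edg_inj {n : ℕ} {u v : Fin n} (huv : u ≠ v) : Function.Injective (edg u v) := by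
  rintro ⟨⟨w, h1, h2⟩, j⟩ ⟨⟨w', h1', h2'⟩, j'⟩ h
  have h := congrArg Subtype.val h
  simp only [edg, Sym2.eq_iff] at h
  cases j <;> cases j' <;> simp at h ⊢ <;> grind

/-- number of common `b`-neighbours -/
noncomputable def cnt {n : ℕ} (b : Bool) (ω : EdgeType n → Bool) (u v : Fin n) : ℕ :=
  Nat.card {i : {w : Fin n // w ≠ u ∧ w ≠ v} // ∀ j, ω (edg u v (i, j)) = b}

lemma adj_iff {n : ℕ} (ω : EdgeType n → Bool) (u w : Fin n) :
    (graphOf ω).Adj u w ↔ ∃ h : ¬ (s(u, w)).IsDiag, ω ⟨s(u, w), h⟩ = true := by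
  simp only [graphOf, SimpleGraph.fromEdgeSet_adj, Set.mem_ofPred_eq]
  constructor
  · exact fun h => h.1
  · rintro ⟨h, h'⟩
    exact ⟨⟨h, h'⟩, by simpa using h⟩

lemma exists_out {n : ℕ} (b : Bool) (ω : EdgeType n → Bool) (u v : Fin n) (S : Set (Fin n))
    (h : S.ncard < cnt b ω u v) :
    ∃ w, w ∉ S ∧ w ≠ u ∧ w ≠ v ∧ ((graphOf ω).Adj u w ↔ b = true) ∧
      ((graphOf ω).Adj v w ↔ b = true) := by
  by_contra hcon
  refine absurd h (not_lt.mpr ?_)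
  rw [← Nat.card_coe_set_eq]
  refine Nat.card_le_card_of_injective (β := S) (fun i => ⟨i.1.1, ?_⟩) ?_
  · obtain ⟨⟨w, h1, h2⟩, hi⟩ := i
    by_contra hS
    have hu := hi true
    have hv := hi false
    refine hcon ⟨w, hS, h1, h2, ?_, ?_⟩
    · rw [adj_iff]
      constructor
      · rintro ⟨h, h'⟩; rw [← hu]; exact h'
      · intro hb
        exact ⟨(edg u v (⟨w, h1, h2⟩, true)).2, hu.trans hb⟩
    · rw [adj_iff]
      constructor
      · rintro ⟨h, h'⟩; rw [← hv]; exact h'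
      · intro hb
        exact ⟨(edg u v (⟨w, h1, h2⟩, false)).2, hv.trans hb⟩
  · rintro ⟨⟨w, h1⟩, hi⟩ ⟨⟨w', h1'⟩, hi'⟩ h
    simp only [Subtype.mk.injEq] at h ⊢
    exact h

lemma det_two {n : ℕ} (hn : 2 ≤ n) (ω : EdgeType n → Bool) (k : ℕ)
    (hω : ∀ b u v, u ≠ v → k < cnt b ω u v) (S : Set (Fin n)) (hS : S.ncard ≤ k) :
    ((graphOf ω).induce Sᶜ).ediam = 2 := by
  apply ediam_two
  · rintro ⟨u, hu⟩ ⟨v, hv⟩ huv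
    have huv' : u ≠ v := fun h => huv (by simp [h])
    obtain ⟨w, hw, -, -, h1, h2⟩ := exists_out true ω u v S (hS.trans_lt (hω true u v huv'))
    refine ⟨⟨w, hw⟩, ?_, ?_⟩
    · simpa using h1
    · simpa using (by simpa using h2 : (graphOf ω).Adj v w).symm
  · have h01 : (⟨0, by omega⟩ : Fin n) ≠ ⟨1, by omega⟩ := by simp
    obtain ⟨u, hu, hu0, -, -, -⟩ :=
      exists_out false ω _ _ S (hS.trans_lt (hω false _ _ h01))
    obtain ⟨w, hw, hwu, -, h1, -⟩ :=
      exists_out false ω _ _ S (hS.trans_lt (hω false _ _ hu0))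
    refine ⟨⟨u, hu⟩, ⟨w, hw⟩, fun h => hwu ?_, ?_⟩
    · simpa using (congrArg Subtype.val h).symm
    · simpa using h1

lemma good_ediam {n : ℕ} (hn : 2 ≤ n) (ω : EdgeType n → Bool) (k : ℕ)
    (hω : ∀ b u v, u ≠ v → k < cnt b ω u v) (S : Set (Fin n)) (hS : S.ncard ≤ k) :
    ((graphOf ω).induce Sᶜ).ediam = (graphOf ω).ediam := by
  rw [det_two hn ω k hω S hS]
  symm
  apply ediam_two
  · intro u v huv
    obtain ⟨w, hw, -, -, h1, h2⟩ := exists_out true ω u v ∅ (by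
      have := hω true u v huv
      simp; omega)
    refine ⟨w, ?_, ?_⟩
    · simpa using h1
    · simpa using (by simpa using h2 : (graphOf ω).Adj v w).symm
  · have h01 : (⟨0, by omega⟩ : Fin n) ≠ ⟨1, by omega⟩ := by simp
    obtain ⟨w, -, hw, -, h1, -⟩ :=
      exists_out false ω _ _ S (hS.trans_lt (hω false _ _ h01))
    exact ⟨_, w, hw.symm, by simpa using h1⟩

/-- one-edge law -/
noncomputable def nuB (p : ℝ) : Measure Bool :=
  (PMF.bernoulli (min (Real.toNNReal p) 1) (min_le_right _ _)).toMeasure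

instance (p : ℝ) : IsProbabilityMeasure (nuB p) := by unfold nuB; infer_instance

lemma nuB_pos (p : ℝ) (hp0 : 0 < p) (hp1 : p < 1) (b : Bool) : 0 < (nuB p).real {b} := by
  rw [measureReal_def, ENNReal.toReal_pos_iff]
  refine ⟨?_, measure_lt_top _ _⟩
  rw [nuB, PMF.toMeasure_apply_singleton _ _ (measurableSet_singleton _), PMF.bernoulli_apply]
  have h1 : Real.toNNReal p < 1 := by simpa using hp1
  cases b
  · simpa using h1
  · simpa using hp0

lemma bad_bound (p : ℝ) (n : ℕ) (b : Bool) (x : ℝ) (hn : 2 ≤ n) :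
    (erMeasure n p).real {ω | ∃ u v, u ≠ v ∧ (cnt b ω u v : ℝ) ≤ x} ≤
      n ^ 2 * (exp x * (1 - ((nuB p).real {b}) ^ 2 * (1 - exp (-1))) ^ (n - 2)) := by
  classical
  have hsub : {ω : EdgeType n → Bool | ∃ u v, u ≠ v ∧ (cnt b ω u v : ℝ) ≤ x} =
      ⋃ q ∈ (Finset.univ.filter fun q : Fin n × Fin n => q.1 ≠ q.2),
        {ω | (cnt b ω q.1 q.2 : ℝ) ≤ x} := by
    ext ω; simp
  haveI : IsProbabilityMeasure (erMeasure n p) := by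
    change IsProbabilityMeasure (Measure.pi fun _ => nuB p); infer_instance
  rw [hsub]
  have hle1 : (nuB p).real {b} ≤ 1 := measureReal_le_one
  have hexp : 0 < exp (-1) := exp_pos _
  have hexp1 : exp (-1) < 1 := by simp
  have hr : 0 ≤ 1 - ((nuB p).real {b}) ^ 2 * (1 - exp (-1)) := by
    have : ((nuB p).real {b}) ^ 2 ≤ 1 := pow_le_one₀ measureReal_nonneg hle1
    nlinarith
  refine (measureReal_biUnion_finset_le _ _).trans ?_
  have key : ∀ q ∈ (Finset.univ.filter fun q : Fin n × Fin n => q.1 ≠ q.2),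
      (erMeasure n p).real {ω | (cnt b ω q.1 q.2 : ℝ) ≤ x} ≤
      exp x * (1 - ((nuB p).real {b}) ^ 2 * (1 - exp (-1))) ^ (n - 2) := by
    rintro ⟨u, v⟩ hq
    have huv : u ≠ v := by simpa using hq
    have := aux_chernoff (nuB p) (edg u v) (edg_inj huv) b x
    have hcard : Fintype.card {w : Fin n // w ≠ u ∧ w ≠ v} = n - 2 := by
      rw [Fintype.card_subtype]
      have : (Finset.univ.filter fun w : Fin n => w ≠ u ∧ w ≠ v) = ({u, v} : Finset (Fin n))ᶜ := by
        ext w; simp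
      rw [this, Finset.card_compl, Finset.card_pair huv, Fintype.card_fin]
    rw [hcard] at this
    exact this
  refine (Finset.sum_le_card_nsmul _ _ _ key).trans ?_
  rw [nsmul_eq_mul]
  refine mul_le_mul_of_nonneg_right ?_ (by positivity)
  have : (Finset.univ.filter fun q : Fin n × Fin n => q.1 ≠ q.2).card ≤ n ^ 2 := by
    refine (Finset.card_le_univ _).trans ?_
    simp [sq]
  exact_mod_cast this

lemma bad_tendsto (p : ℝ) (hp0 : 0 < p) (hp1 : p < 1) (b : Bool) :
    ∃ δ > (0 : ℝ), Tendsto (fun n : ℕ => (erMeasure n p).real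
      {ω | ∃ u v, u ≠ v ∧ (cnt b ω u v : ℝ) ≤ δ * n}) atTop (nhds 0) := by
  have hc := nuB_pos p hp0 hp1 b
  have hle1 : (nuB p).real {b} ≤ 1 := measureReal_le_one
  have hexp : 0 < exp (-1) := exp_pos _
  have hexp1 : exp (-1) < 1 := by simp
  obtain ⟨r, hr⟩ : ∃ r, r = 1 - ((nuB p).real {b}) ^ 2 * (1 - exp (-1)) := ⟨_, rfl⟩
  have hr0 : 0 < r := by
    have : ((nuB p).real {b}) ^ 2 ≤ 1 := pow_le_one₀ measureReal_nonneg hle1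
    nlinarith
  have hr1 : r < 1 := by
    have : 0 < ((nuB p).real {b}) ^ 2 * (1 - exp (-1)) := mul_pos (by positivity) (by linarith)
    linarith
  have hlog : log r < 0 := log_neg hr0 hr1
  refine ⟨-log r / 2, by linarith, ?_⟩
  have hs1 : exp (log r / 2) < 1 := by rw [exp_lt_one_iff]; linarith
  have hlim : Tendsto (fun n : ℕ => (r ^ 2)⁻¹ * ((n : ℝ) ^ 2 * exp (log r / 2) ^ n))
      atTop (nhds 0) := by
    have := (tendsto_pow_const_mul_const_pow_of_lt_one 2 (exp_pos (log r / 2)).le hs1).const_mul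
      ((r ^ 2)⁻¹)
    simpa using this
  refine squeeze_zero' (Eventually.of_forall fun n => measureReal_nonneg) ?_ hlim
  filter_upwards [eventually_ge_atTop 2] with n hn
  refine (bad_bound p n b _ hn).trans (le_of_eq ?_)
  rw [← hr]
  have h1 : r ^ (n - 2) = r ^ n * (r ^ 2)⁻¹ := pow_sub₀ r hr0.ne' hn
  have h2 : exp (-log r / 2 * n) * r ^ n = exp (log r / 2) ^ n := by
    rw [← exp_nat_mul]
    nth_rewrite 2 [← exp_log hr0]
    rw [← exp_nat_mul, ← exp_add]
    congr 1; ring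
  rw [h1, ← h2]; ring

/-- For fixed `p ∈ (0,1)` there is `δ > 0` such that whp,
deleting any set of at most `⌊δn⌋` vertices from `G(n,p)` does not change its
diameter. -/
theorem diameter_stable_under_deletion (p : ℝ) (hp0 : 0 < p) (hp1 : p < 1) :
    ∃ δ > (0 : ℝ),
      Tendsto (fun n : ℕ =>
        erMeasure n p {ω |
          ∀ S : Set (Fin n), S.ncard ≤ ⌊δ * n⌋₊ →
            ((graphOf ω).induce Sᶜ).ediam = (graphOf ω).ediam})
        atTop (nhds 1) := by
  obtain ⟨δ₁, h1, t1⟩ := bad_tendsto p hp0 hp1 true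
  obtain ⟨δ₂, h2, t2⟩ := bad_tendsto p hp0 hp1 false
  refine ⟨min δ₁ δ₂, lt_min h1 h2, ?_⟩
  have hprob : ∀ n, IsProbabilityMeasure (erMeasure n p) := by
    intro n
    change IsProbabilityMeasure (Measure.pi fun _ => nuB p); infer_instance
  have t := (t1.add t2).const_sub 1
  simp only [add_zero, sub_zero] at t
  have main : Tendsto (fun n : ℕ => (erMeasure n p).real {ω |
          ∀ S : Set (Fin n), S.ncard ≤ ⌊min δ₁ δ₂ * n⌋₊ →
            ((graphOf ω).induce Sᶜ).ediam = (graphOf ω).ediam}) atTop (nhds 1) := by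
    refine tendsto_of_tendsto_of_tendsto_of_le_of_le' t tendsto_const_nhds ?_
      (Eventually.of_forall fun n => measureReal_le_one)
    filter_upwards [eventually_ge_atTop 2] with n hn
    set G := {ω : EdgeType n → Bool | ∀ S : Set (Fin n), S.ncard ≤ ⌊min δ₁ δ₂ * n⌋₊ →
            ((graphOf ω).induce Sᶜ).ediam = (graphOf ω).ediam} with hG
    have hsub : Gᶜ ⊆ {ω | ∃ u v, u ≠ v ∧ (cnt true ω u v : ℝ) ≤ δ₁ * n} ∪
        {ω | ∃ u v, u ≠ v ∧ (cnt false ω u v : ℝ) ≤ δ₂ * n} := by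
      intro ω hω
      by_contra hcon
      simp only [Set.mem_union, Set.mem_ofPred_eq, not_or, not_exists, not_and, not_le] at hcon
      obtain ⟨c1, c2⟩ := hcon
      apply hω
      intro S hS
      refine good_ediam hn ω _ ?_ S hS
      intro b u v huv
      have hn0 : (0 : ℝ) ≤ n := Nat.cast_nonneg n
      have hpos : 0 ≤ min δ₁ δ₂ * n := mul_nonneg (lt_min h1 h2).le hn0
      rw [Nat.floor_lt hpos]
      cases b
      · exact (mul_le_mul_of_nonneg_right (min_le_right _ _) hn0).trans_lt (c2 u v huv)
      · exact (mul_le_mul_of_nonneg_right (min_le_left _ _) hn0).trans_lt (c1 u v huv)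
    have hle := (measureReal_mono hsub).trans (measureReal_union_le (μ := erMeasure n p) _ _)
    have hcompl := probReal_compl_eq_one_sub (μ := erMeasure n p) (s := G)
      (Set.toFinite G).measurableSet
    linarith
  have := ENNReal.tendsto_ofReal main
  simpa [ofReal_measureReal] using this
end

section
/- Let p ∈ (0,1) be fixed and m ≥ 5 a fixed integer. With high probability, in G(n,p) there exists a 1-factor {S_1,…,S_ℓ} with ℓ = (n/(2·log_{1/(1−p)} n))·(1+o(1)) such that the set of central vertices of S_1,…,S_ℓ induces a subgraph of G(n,p) that contains an induced C_{m−2}-factor. -/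
open MeasureTheory Filter Real

/-- A `v`-factor in a graph `Γ` on `Fin n`, given by `ℓ` stars with centers `c i`
and leaf sets `L i`: the stars are induced, pairwise vertex-disjoint, their
centers are adjacent to `v`, and their vertex sets partition `[n] ∖ {v}`. -/
def IsStarFactor {n : ℕ} (Γ : SimpleGraph (Fin n)) (v : Fin n) (ℓ : ℕ)
    (c : Fin ℓ → Fin n) (L : Fin ℓ → Set (Fin n)) : Prop :=
  (∀ i, Γ.Adj v (c i)) ∧
  (∀ i, c i ∉ L i) ∧
  (∀ i, ∀ x ∈ L i, Γ.Adj (c i) x) ∧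
  (∀ i, (L i).Pairwise fun x y => ¬ Γ.Adj x y) ∧
  (Set.univ : Set (Fin ℓ)).PairwiseDisjoint (fun i => insert (c i) (L i)) ∧
  (⋃ i, insert (c i) (L i)) = {v}ᶜ

/-- The set `C` carries an induced `C_k`-factor in `Γ`: `C` can be partitioned
into parts, each inducing (in `Γ`) a copy of the cycle on `k` vertices. -/
def HasInducedCycleFactorOn {n : ℕ} (Γ : SimpleGraph (Fin n)) (k : ℕ)
    (C : Set (Fin n)) : Prop :=
  ∃ (t : ℕ) (g : Fin t → ZMod k → Fin n),
    (∀ i, Function.Injective (g i)) ∧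
    (Set.univ : Set (Fin t)).PairwiseDisjoint (fun i => Set.range (g i)) ∧
    (⋃ i, Set.range (g i)) = C ∧
    ∀ i a b, Γ.Adj (g i a) (g i b) ↔ (cycGraph k).Adj a b


namespace RG

section Prob

open scoped Classical

/-- Weight of one coin. -/
noncomputable def bw (p : ℝ) (b : Bool) : ℝ := if b = true then p else 1 - p

/-- Weight of a configuration. -/
noncomputable def W {ι : Type*} [Fintype ι] (p : ℝ) (ω : ι → Bool) : ℝ := ∏ e, bw p (ω e)

/-- Expectation. -/
noncomputable def EX {ι : Type*} [Fintype ι] (p : ℝ) (f : (ι → Bool) → ℝ) : ℝ :=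
  ∑ ω, W p ω * f ω

/-- Probability. -/
noncomputable def Pr {ι : Type*} [Fintype ι] (p : ℝ) (A : Set (ι → Bool)) : ℝ :=
  EX p (fun ω => if ω ∈ A then 1 else 0)

variable {ι : Type*} [Fintype ι] {p : ℝ}

lemma bw_nonneg (hp0 : 0 < p) (hp1 : p < 1) (b : Bool) : 0 ≤ bw p b := by
  unfold bw; split_ifs <;> linarith

lemma W_nonneg (hp0 : 0 < p) (hp1 : p < 1) (ω : ι → Bool) : 0 ≤ W p ω :=
  Finset.prod_nonneg fun _ _ => bw_nonneg hp0 hp1 _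

lemma EX_prod (φ : ι → Bool → ℝ) :
    EX p (fun ω => ∏ e, φ e (ω e)) = ∏ e, (p * φ e true + (1 - p) * φ e false) := by
  unfold EX W
  simp_rw [← Finset.prod_mul_distrib]
  rw [← Fintype.prod_sum (fun e b => bw p b * φ e b)]
  simp [bw]

lemma EX_one : EX p (fun _ : ι → Bool => (1 : ℝ)) = 1 := by
  have := EX_prod (ι := ι) (p := p) (fun _ _ => 1)
  simpa using this

lemma EX_mono (hp0 : 0 < p) (hp1 : p < 1) {f g : (ι → Bool) → ℝ} (h : ∀ ω, f ω ≤ g ω) :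
    EX p f ≤ EX p g :=
  Finset.sum_le_sum fun ω _ => mul_le_mul_of_nonneg_left (h ω) (W_nonneg hp0 hp1 ω)

lemma EX_add (f g : (ι → Bool) → ℝ) : EX p (fun ω => f ω + g ω) = EX p f + EX p g := by
  simp [EX, mul_add, Finset.sum_add_distrib]

lemma EX_sub (f g : (ι → Bool) → ℝ) : EX p (fun ω => f ω - g ω) = EX p f - EX p g := by
  simp [EX, mul_sub, Finset.sum_sub_distrib]

lemma EX_smul (c : ℝ) (f : (ι → Bool) → ℝ) : EX p (fun ω => c * f ω) = c * EX p f := by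
  unfold EX; rw [Finset.mul_sum]; congr 1; ext; ring

lemma EX_sum {α : Type*} (s : Finset α) (f : α → (ι → Bool) → ℝ) :
    EX p (fun ω => ∑ a ∈ s, f a ω) = ∑ a ∈ s, EX p (f a) := by
  unfold EX; simp_rw [Finset.mul_sum]; rw [Finset.sum_comm]

lemma Pr_nonneg (hp0 : 0 < p) (hp1 : p < 1) (A : Set (ι → Bool)) : 0 ≤ Pr p A :=
  Finset.sum_nonneg fun ω _ => mul_nonneg (W_nonneg hp0 hp1 ω) (by dsimp only; split_ifs <;> norm_num)

lemma Pr_mono (hp0 : 0 < p) (hp1 : p < 1) {A B : Set (ι → Bool)} (h : A ⊆ B) :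
    Pr p A ≤ Pr p B := by
  apply EX_mono hp0 hp1
  intro ω
  by_cases hA : ω ∈ A
  · simp [hA, h hA]
  · simp only [hA, if_false]; split_ifs <;> norm_num

lemma Pr_biUnion_le (hp0 : 0 < p) (hp1 : p < 1) {α : Type*} (s : Finset α)
    (A : α → Set (ι → Bool)) : Pr p {ω | ∃ a ∈ s, ω ∈ A a} ≤ ∑ a ∈ s, Pr p (A a) := by
  unfold Pr
  rw [← EX_sum]
  apply EX_mono hp0 hp1
  intro ω
  have hnn : ∀ a ∈ s, (0 : ℝ) ≤ (if ω ∈ A a then 1 else 0) := by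
    intro a _; split_ifs <;> norm_num
  by_cases h : ∃ a ∈ s, ω ∈ A a
  · obtain ⟨a, ha, hω⟩ := h
    have h1 : ω ∈ {ω | ∃ a ∈ s, ω ∈ A a} := ⟨a, ha, hω⟩
    rw [if_pos h1]
    have := Finset.single_le_sum hnn ha
    simpa [hω] using this
  · have h1 : ω ∉ {ω | ∃ a ∈ s, ω ∈ A a} := h
    rw [if_neg h1]
    exact Finset.sum_nonneg hnn

lemma Pr_union_le (hp0 : 0 < p) (hp1 : p < 1) (A B : Set (ι → Bool)) :
    Pr p (A ∪ B) ≤ Pr p A + Pr p B := by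
  unfold Pr
  rw [← EX_add]
  apply EX_mono hp0 hp1
  intro ω
  by_cases hA : ω ∈ A <;> by_cases hB : ω ∈ B <;> simp [hA, hB]

lemma Pr_compl (A : Set (ι → Bool)) : Pr p A = 1 - Pr p Aᶜ := by
  rw [← EX_one (ι := ι) (p := p)]
  unfold Pr
  rw [← EX_sub]
  congr 1; ext ω
  by_cases hA : ω ∈ A <;> simp [hA]

/-- Independence of functions of disjoint sets of coordinates. -/
lemma EX_mul_indep {f g : (ι → Bool) → ℝ} {F G : Set ι} (hf : DependsOn f F)
    (hg : DependsOn g G) (hFG : Disjoint F G) :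
    EX p (fun ω => f ω * g ω) = EX p f * EX p g := by
  have h1 : EX p (fun ω => f ω * g ω) = EX p (fun ω => f ω * g ω) * EX p (fun _ : ι → Bool => (1:ℝ)) := by
    rw [EX_one, mul_one]
  rw [h1]
  unfold EX
  rw [Finset.sum_mul_sum, Finset.sum_mul_sum, ← Finset.sum_product', ← Finset.sum_product']
  let sw : (ι → Bool) × (ι → Bool) → (ι → Bool) × (ι → Bool) := fun x =>
    (fun e => if e ∈ F then x.1 e else x.2 e, fun e => if e ∈ F then x.2 e else x.1 e)
  have hsw : Function.Involutive sw := by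
    intro x
    ext e <;> simp only [sw] <;> split_ifs <;> rfl
  simp only [Finset.univ_product_univ]
  refine Fintype.sum_equiv hsw.toPerm _ _ ?_
  intro x
  simp only [Function.Involutive.coe_toPerm]
  have hW : W p (sw x).1 * W p (sw x).2 = W p x.1 * W p x.2 := by
    unfold W
    rw [← Finset.prod_mul_distrib, ← Finset.prod_mul_distrib]
    refine Finset.prod_congr rfl fun e _ => ?_
    simp only [sw]; split_ifs <;> ring
  have hf' : f (sw x).1 = f x.1 := hf (fun e he => by simp [sw, he])
  have hg' : g (sw x).2 = g x.1 := hg (fun e he => by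
    have : e ∉ F := fun h => Set.disjoint_left.mp hFG h he
    simp [sw, this])
  rw [hf', hg']
  linear_combination (-(f x.1 * g x.1)) * hW

lemma Pr_eq {A : Set (ι → Bool)} {f : (ι → Bool) → ℝ} (h1 : ∀ ω ∈ A, f ω = 1)
    (h0 : ∀ ω, ω ∉ A → f ω = 0) : Pr p A = EX p f := by
  unfold Pr; congr 1; ext ω
  by_cases h : ω ∈ A
  · rw [if_pos h, h1 ω h]
  · rw [if_neg h, h0 ω h]

/-- Cylinder probabilities. -/
lemma Pr_cyl (F : Finset ι) (pat : ι → Bool) :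
    Pr p {ω | ∀ e ∈ F, ω e = pat e} = ∏ e ∈ F, bw p (pat e) := by
  rw [Pr_eq (f := fun ω => ∏ e, (if e ∈ F then (if ω e = pat e then 1 else 0) else 1))]
  rotate_left
  · intro ω h
    apply Finset.prod_eq_one
    intro e _
    by_cases he : e ∈ F
    · simp [he, h e he]
    · simp [he]
  · intro ω h
    have h : ¬ ∀ e ∈ F, ω e = pat e := h
    push Not at h
    obtain ⟨e, he, hne⟩ := h
    apply Finset.prod_eq_zero (Finset.mem_univ e)
    simp [he, hne]
  rw [EX_prod (fun e b => if e ∈ F then (if b = pat e then (1:ℝ) else 0) else 1)]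
  rw [← Finset.prod_subset (Finset.subset_univ F)]
  · refine Finset.prod_congr rfl fun e he => ?_
    cases h : pat e <;> simp [he, bw]
  · intro e _ he; simp [he]

lemma Pr_false (F : Finset ι) :
    Pr p {ω | ∀ e ∈ F, ω e = false} = (1 - p) ^ F.card := by
  rw [Pr_cyl F (fun _ => false)]; simp [bw]

lemma Pr_cyl_ge (hp0 : 0 < p) (hp1 : p < 1) (F : Finset ι) (pat : ι → Bool) (N : ℕ)
    (hN : F.card ≤ N) :
    (min p (1 - p)) ^ N ≤ Pr p {ω | ∀ e ∈ F, ω e = pat e} := by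
  rw [Pr_cyl]
  have h0 : 0 < min p (1 - p) := lt_min hp0 (by linarith)
  calc (min p (1 - p)) ^ N ≤ (min p (1 - p)) ^ F.card :=
        pow_le_pow_of_le_one h0.le ((min_le_left _ _).trans hp1.le) hN
    _ ≤ _ := by
        rw [← Finset.prod_const]
        refine Finset.prod_le_prod (fun _ _ => h0.le) fun e _ => ?_
        unfold bw; split_ifs
        · exact min_le_left _ _
        · exact min_le_right _ _

/-- Harris: a decreasing and an increasing event are negatively correlated. -/
lemma harris (hp0 : 0 < p) (hp1 : p < 1) {f g : (ι → Bool) → ℝ} (hf : Antitone f)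
    (hf1 : ∀ ω, f ω ≤ 1) (hg : Monotone g) (hg0 : ∀ ω, 0 ≤ g ω) :
    EX p (fun ω => f ω * g ω) ≤ EX p f * EX p g := by
  have h := fkg (fun ω => 1 - f ω) g (W p) (fun ω => W_nonneg hp0 hp1 ω)
    (fun ω => by simpa using hf1 ω) hg0
    (fun a b hab => by have := hf hab; dsimp only; linarith) hg (by
      intro a b
      apply le_of_eq
      unfold W
      rw [← Finset.prod_mul_distrib, ← Finset.prod_mul_distrib]
      refine Finset.prod_congr rfl fun e _ => ?_
      simp only [Pi.inf_apply, Pi.sup_apply]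
      cases a e <;> cases b e <;> simp [mul_comm])
  have e1 : ∑ a, W p a * (1 - f a) = 1 - EX p f := by
    have := EX_sub (p := p) (fun _ => 1) f
    rw [EX_one] at this
    exact this
  have e2 : ∑ a : ι → Bool, W p a = 1 := by
    rw [← EX_one (ι := ι) (p := p)]; simp [EX]
  have e3 : ∑ a, W p a * ((1 - f a) * g a) = EX p g - EX p (fun ω => f ω * g ω) := by
    rw [← EX_sub]; unfold EX; congr 1; ext; ring
  rw [e1, e2, e3] at h
  have e4 : ∑ a, W p a * g a = EX p g := rfl
  rw [e4] at h
  linarith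

end Prob

section Link

open scoped Classical

lemma erMeasure_eq (n : ℕ) {p : ℝ} (hp0 : 0 < p) (hp1 : p < 1) (A : Set (EdgeType n → Bool)) :
    erMeasure n p A = ENNReal.ofReal (Pr p A) := by
  have hs : ∀ ω : EdgeType n → Bool, erMeasure n p {ω} = ENNReal.ofReal (W p ω) := by
    intro ω
    unfold erMeasure W
    rw [Measure.pi_singleton, ENNReal.ofReal_prod_of_nonneg (fun e _ => bw_nonneg hp0 hp1 _)]
    refine Finset.prod_congr rfl fun e _ => ?_
    rw [PMF.toMeasure_apply_singleton _ _ (measurableSet_singleton _), PMF.bernoulli_apply]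
    have hm : min (Real.toNNReal p) 1 = Real.toNNReal p :=
      min_eq_left (by rw [Real.toNNReal_le_one]; exact hp1.le)
    cases h : ω e
    · simp only [cond_false, bw, hm]
      have h2 : (if false = true then p else 1 - p) = 1 - p := by simp
      rw [h2, ENNReal.ofReal_sub _ hp0.le]
      simp [ENNReal.ofReal]
    · simp only [cond_true, bw, hm]
      simp [ENNReal.ofReal]
  have hA : A = ((Finset.univ.filter (fun ω => ω ∈ A) : Finset (EdgeType n → Bool)) : Set _) := by
    ext; simp
  conv_lhs => rw [hA]
  rw [← MeasureTheory.sum_measure_singleton]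
  simp_rw [hs]
  rw [← ENNReal.ofReal_sum_of_nonneg (fun ω _ => W_nonneg hp0 hp1 ω)]
  congr 1
  unfold Pr EX
  rw [Finset.sum_filter]
  refine Finset.sum_congr (by ext; simp) fun ω _ => ?_
  dsimp only
  by_cases h : ω ∈ A
  · rw [if_pos h, if_pos h, mul_one]
  · rw [if_neg h, if_neg h, mul_zero]

end Link


section Chernoff

open scoped Classical

variable {ι : Type*} [Fintype ι] {p : ℝ}

lemma EX_half (A : Set (ι → Bool)) :
    EX p (fun ω => if ω ∈ A then (1/2 : ℝ) else 1) = 1 - Pr p A / 2 := by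
  have h : (fun ω : ι → Bool => if ω ∈ A then (1/2 : ℝ) else 1) =
      fun ω => 1 - (1/2) * (if ω ∈ A then (1:ℝ) else 0) := by
    ext ω; split_ifs <;> norm_num
  rw [h, EX_sub, EX_one, EX_smul]
  unfold Pr; ring

lemma EX_prod_half (hp0 : 0 < p) (hp1 : p < 1) {α : Type*} {δ : ℝ} (hδ1 : δ ≤ 1)
    (s : Finset α) (F : α → Set ι) (A : α → Set (ι → Bool))
    (hdisj : (s : Set α).PairwiseDisjoint F)
    (hdep : ∀ a ∈ s, DependsOn (fun ω => ω ∈ A a) (F a)) (hA : ∀ a ∈ s, δ ≤ Pr p (A a)) :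
    EX p (fun ω => ∏ a ∈ s, (if ω ∈ A a then (1/2 : ℝ) else 1)) ≤ (1 - δ / 2) ^ s.card := by
  induction s using Finset.induction_on with
  | empty => simp [EX_one]
  | insert a s ha ih =>
    have ih' := ih (hdisj.subset (by simp)) (fun b hb => hdep b (Finset.mem_insert_of_mem hb))
      (fun b hb => hA b (Finset.mem_insert_of_mem hb))
    simp_rw [Finset.prod_insert ha]
    rw [Finset.card_insert_of_notMem ha]
    rw [EX_mul_indep (F := F a) (G := ⋃ b ∈ s, F b)]
    · rw [EX_half, pow_succ, mul_comm]
      have h1 := hA a (Finset.mem_insert_self a s)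
      refine mul_le_mul ih' (by linarith) ?_ (pow_nonneg (by linarith) _)
      rw [← EX_half]
      exact Finset.sum_nonneg fun ω _ => mul_nonneg (W_nonneg hp0 hp1 ω)
        (by dsimp only; split_ifs <;> norm_num)
    · intro x y hxy
      have := hdep a (Finset.mem_insert_self a s) hxy
      simp only at this
      simp only [this]
    · intro x y hxy
      refine Finset.prod_congr rfl fun b hb => ?_
      have := hdep b (Finset.mem_insert_of_mem hb)
        (fun i hi => hxy i (Set.mem_biUnion hb hi))
      simp only at this
      simp only [this]
    · rw [Set.disjoint_iUnion₂_right]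
      intro b hb
      exact hdisj (by simp) (by simp [hb]) (fun h => ha (h ▸ hb))

lemma chernoff (hp0 : 0 < p) (hp1 : p < 1) {δ : ℝ} (hδ0 : 0 < δ) (hδ1 : δ ≤ 1) :
    ∃ θ > (0:ℝ), ∃ κ : ℝ, 0 < κ ∧ κ < 1 ∧ ∀ (ι : Type) [Fintype ι] (α : Type)
    (s : Finset α) (F : α → Set ι) (A : α → Set (ι → Bool)),
    (s : Set α).PairwiseDisjoint F →
    (∀ a ∈ s, DependsOn (fun ω => ω ∈ A a) (F a)) → (∀ a ∈ s, δ ≤ Pr p (A a)) →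
    Pr p {ω | ((s.filter (fun a => ω ∈ A a)).card : ℝ) ≤ θ * s.card} ≤ κ ^ s.card := by
  have hq : 1 < (1 - δ/4) / (1 - δ/2) := by
    rw [lt_div_iff₀ (by linarith)]; linarith
  refine ⟨Real.logb 2 ((1 - δ/4) / (1 - δ/2)), Real.logb_pos (by norm_num) hq, 1 - δ/4,
    by linarith, by linarith, ?_⟩
  intro ι _ α s F A hdisj hdep hA
  set θ := Real.logb 2 ((1 - δ/4) / (1 - δ/2)) with hθ
  have h2θ : (2:ℝ) ^ θ = (1 - δ/4) / (1 - δ/2) :=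
    Real.rpow_logb (by norm_num) (by norm_num) (by linarith)
  have key : Pr p {ω | ((s.filter (fun a => ω ∈ A a)).card : ℝ) ≤ θ * s.card} ≤
      EX p (fun ω => (2:ℝ) ^ (θ * s.card) * ∏ a ∈ s, (if ω ∈ A a then (1/2 : ℝ) else 1)) := by
    apply EX_mono hp0 hp1
    intro ω
    have hprod : ∏ a ∈ s, (if ω ∈ A a then (1/2 : ℝ) else 1) =
        (2:ℝ) ^ (-((s.filter (fun a => ω ∈ A a)).card : ℝ)) := by
      rw [Finset.prod_ite]
      simp [Real.rpow_neg]
    rw [hprod, ← Real.rpow_add (by norm_num)]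
    split_ifs with h
    · apply Real.one_le_rpow (by norm_num)
      have h' : ((s.filter (fun a => ω ∈ A a)).card : ℝ) ≤ θ * s.card := h
      linarith
    · positivity
  refine key.trans ?_
  rw [EX_smul]
  have h3 := EX_prod_half hp0 hp1 hδ1 s F A hdisj hdep hA
  calc _ ≤ (2:ℝ) ^ (θ * s.card) * (1 - δ / 2) ^ s.card := by gcongr
    _ = ((2:ℝ) ^ θ * (1 - δ/2)) ^ s.card := by
      rw [mul_pow, Real.rpow_mul (by norm_num), Real.rpow_natCast]
    _ = _ := by rw [h2θ, div_mul_cancel₀]; linarith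

end Chernoff

section Janson

open scoped Classical

variable {ι : Type*} [Fintype ι] {p : ℝ}

lemma janson_step (hp0 : 0 < p) (hp1 : p < 1) {X : Type*} (E : X → Finset ι) (N : ℕ)
    (hE : ∀ x, (E x).card = N) (l : Finset X) (x : X)
    (hR : ∑ y ∈ l, (if Disjoint (E y) (E x) then (0:ℝ) else (1 - p) ^ (E y ∪ E x).card)
      ≤ (1 - p) ^ N / 2) :
    Pr p {ω : ι → Bool | ∀ y ∈ insert x l, ¬ ∀ e ∈ E y, ω e = false} ≤
      (1 - (1 - p) ^ N / 2) * Pr p {ω : ι → Bool | ∀ y ∈ l, ¬ ∀ e ∈ E y, ω e = false} := by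
  -- indicators
  let c : X → (ι → Bool) → ℝ := fun y ω => if ∀ e ∈ E y, ω e = false then 1 else 0
  let nl : (ι → Bool) → ℝ := fun ω => if ∀ y ∈ l, ¬ ∀ e ∈ E y, ω e = false then 1 else 0
  let I := l.filter (fun y => Disjoint (E y) (E x))
  let D := l.filter (fun y => ¬ Disjoint (E y) (E x))
  let ni : (ι → Bool) → ℝ := fun ω => if ∀ y ∈ I, ¬ ∀ e ∈ E y, ω e = false then 1 else 0
  have hnl : Pr p {ω : ι → Bool | ∀ y ∈ l, ¬ ∀ e ∈ E y, ω e = false} = EX p nl :=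
    Pr_eq (fun ω h => if_pos h) (fun ω h => if_neg h)
  have hins : Pr p {ω : ι → Bool | ∀ y ∈ insert x l, ¬ ∀ e ∈ E y, ω e = false} =
      EX p nl - EX p (fun ω => c x ω * nl ω) := by
    rw [← EX_sub]
    apply Pr_eq
    · intro ω h
      have h1 : ∀ y ∈ l, ¬ ∀ e ∈ E y, ω e = false := fun y hy => h y (Finset.mem_insert_of_mem hy)
      have h2 : ¬ ∀ e ∈ E x, ω e = false := h x (Finset.mem_insert_self x l)
      simp only [nl, c]
      rw [if_pos h1, if_neg h2]; norm_num
    · intro ω h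
      simp only [nl, c]
      by_cases h1 : ∀ y ∈ l, ¬ ∀ e ∈ E y, ω e = false
      · have h2 : ∀ e ∈ E x, ω e = false := by
          by_contra h2
          apply h
          intro y hy
          rcases Finset.mem_insert.mp hy with rfl | hy
          · exact h2
          · exact h1 y hy
        rw [if_pos h1, if_pos h2]; norm_num
      · rw [if_neg h1]; norm_num
  have hc01 : ∀ y ω, 0 ≤ c y ω ∧ c y ω ≤ 1 := by
    intro y ω; simp only [c]; split_ifs <;> norm_num
  have hni01 : ∀ ω, 0 ≤ ni ω ∧ ni ω ≤ 1 := by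
    intro ω; simp only [ni]; split_ifs <;> norm_num
  have hle : EX p nl ≤ EX p ni := by
    apply EX_mono hp0 hp1
    intro ω
    simp only [nl, ni]
    by_cases h1 : ∀ y ∈ l, ¬ ∀ e ∈ E y, ω e = false
    · rw [if_pos h1, if_pos (fun y hy => h1 y (Finset.mem_filter.mp hy).1)]
    · rw [if_neg h1]; split_ifs <;> norm_num
  have hnl0 : 0 ≤ EX p nl := by rw [← hnl]; exact Pr_nonneg hp0 hp1 _
  have hcx : EX p (fun ω => c x ω * ni ω) = (1 - p) ^ N * EX p ni := by
    rw [EX_mul_indep (F := (E x : Set ι)) (G := ⋃ y ∈ I, (E y : Set ι))]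
    · congr 1
      rw [← hE x, ← Pr_false]
      symm
      exact Pr_eq (fun ω h => if_pos h) (fun ω h => if_neg h)
    · intro a b hab
      have : (∀ e ∈ E x, a e = false) ↔ (∀ e ∈ E x, b e = false) :=
        forall₂_congr fun e he => by rw [hab e he]
      simp only [c, this]
    · intro a b hab
      have : (∀ y ∈ I, ¬ ∀ e ∈ E y, a e = false) ↔ (∀ y ∈ I, ¬ ∀ e ∈ E y, b e = false) :=
        forall₂_congr fun y hy => not_congr <| forall₂_congr fun e he => by
          rw [hab e (Set.mem_biUnion hy he)]
      simp only [ni, this]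
    · rw [Set.disjoint_iUnion₂_right]
      intro y hy
      have := (Finset.mem_filter.mp hy).2
      exact_mod_cast this.symm
  have hcxy : ∀ y, EX p (fun ω => (c y ω * c x ω) * ni ω) ≤
      (1 - p) ^ (E y ∪ E x).card * EX p ni := by
    intro y
    have h1 : EX p (fun ω => c y ω * c x ω) = (1 - p) ^ (E y ∪ E x).card := by
      rw [← Pr_false]
      symm
      apply Pr_eq
      · intro ω h
        have h1 : ∀ e ∈ E y, ω e = false := fun e he => h e (Finset.mem_union_left _ he)
        have h2 : ∀ e ∈ E x, ω e = false := fun e he => h e (Finset.mem_union_right _ he)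
        simp only [c]
        rw [if_pos h1, if_pos h2]; norm_num
      · intro ω h
        simp only [c]
        by_cases h1 : ∀ e ∈ E y, ω e = false
        · have h2 : ¬ ∀ e ∈ E x, ω e = false := by
            intro h2
            apply h
            intro e he
            rcases Finset.mem_union.mp he with he | he
            · exact h1 e he
            · exact h2 e he
          rw [if_neg h2]; norm_num
        · rw [if_neg h1]; norm_num
    rw [← h1]
    have hanti : ∀ z, Antitone (c z) := by
      intro z a b hab
      simp only [c]
      by_cases h : ∀ e ∈ E z, b e = false
      · have h' : ∀ e ∈ E z, a e = false := by
          intro e he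
          have h3 := hab e
          rw [h e he] at h3
          exact le_bot_iff.mp h3
        rw [if_pos h, if_pos h']
      · rw [if_neg h]; split_ifs <;> norm_num
    apply harris hp0 hp1
    · intro a b hab
      exact mul_le_mul (hanti y hab) (hanti x hab) (hc01 _ _).1 (hc01 _ _).1
    · intro ω
      exact mul_le_one₀ (hc01 _ _).2 (hc01 _ _).1 (hc01 _ _).2
    · intro a b hab
      simp only [ni]
      by_cases h : ∀ y ∈ I, ¬ ∀ e ∈ E y, a e = false
      · have h' : ∀ y ∈ I, ¬ ∀ e ∈ E y, b e = false := by
          intro y hy h3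
          apply h y hy
          intro e he
          have h4 := hab e
          rw [h3 e he] at h4
          exact le_bot_iff.mp h4
        rw [if_pos h, if_pos h']
      · rw [if_neg h]; split_ifs <;> norm_num
    · exact fun ω => (hni01 ω).1
  have hmain : EX p (fun ω => c x ω * ni ω) - ∑ y ∈ D, EX p (fun ω => (c y ω * c x ω) * ni ω) ≤
      EX p (fun ω => c x ω * nl ω) := by
    rw [← EX_sum, ← EX_sub]
    apply EX_mono hp0 hp1
    intro ω
    have hnn : ∀ y ∈ D, 0 ≤ (c y ω * c x ω) * ni ω := fun y _ =>
      mul_nonneg (mul_nonneg (hc01 _ _).1 (hc01 _ _).1) (hni01 _).1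
    by_cases hall : ∀ y ∈ l, ¬ ∀ e ∈ E y, ω e = false
    · have h1 : nl ω = 1 := if_pos hall
      have h2 := Finset.sum_nonneg hnn
      have h3 : c x ω * ni ω ≤ c x ω := mul_le_of_le_one_right (hc01 _ _).1 (hni01 _).2
      rw [h1]; linarith
    · have h1 : nl ω = 0 := if_neg hall
      rw [h1]
      by_cases hI : ∀ y ∈ I, ¬ ∀ e ∈ E y, ω e = false
      · push Not at hall
        obtain ⟨y, hy, hcy⟩ := hall
        have hyD : y ∈ D := by
          refine Finset.mem_filter.mpr ⟨hy, fun hd => ?_⟩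
          exact hI y (Finset.mem_filter.mpr ⟨hy, hd⟩) hcy
        have h2 := Finset.single_le_sum hnn hyD
        have h3 : c y ω = 1 := if_pos hcy
        rw [h3, one_mul] at h2
        linarith
      · have h2 : ni ω = 0 := if_neg hI
        simp [h2]
  have hsum : ∑ y ∈ D, EX p (fun ω => (c y ω * c x ω) * ni ω) ≤ ((1 - p) ^ N / 2) * EX p ni := by
    calc _ ≤ ∑ y ∈ D, (1 - p) ^ (E y ∪ E x).card * EX p ni := Finset.sum_le_sum fun y _ => hcxy y
      _ = (∑ y ∈ D, (1 - p) ^ (E y ∪ E x).card) * EX p ni := by rw [Finset.sum_mul]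
      _ ≤ _ := by
        apply mul_le_mul_of_nonneg_right _ (hnl0.trans hle)
        refine le_trans (le_of_eq ?_) hR
        rw [Finset.sum_filter]
        refine Finset.sum_congr rfl fun y _ => ?_
        split_ifs <;> simp_all
  rw [hnl, hins]
  have hpos : 0 ≤ (1 - p) ^ N / 2 := by
    have : 0 < 1 - p := by linarith
    positivity
  nlinarith [mul_le_mul_of_nonneg_left hle hpos]

lemma janson (hp0 : 0 < p) (hp1 : p < 1) {X : Type*} [Fintype X] [Nonempty X]
    (E : X → Finset ι) (N : ℕ) (hE : ∀ x, (E x).card = N) (ρ : ℝ)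
    (hρ : ∀ y, ∑ x, (if Disjoint (E y) (E x) then (0:ℝ) else (1 - p) ^ (E y ∪ E x).card)
      ≤ ρ * Fintype.card X) (hρ0 : 0 ≤ ρ) (K : ℕ) (hK : K * ρ ≤ (1 - p) ^ N / 2) :
    Pr p {ω : ι → Bool | ∀ x, ¬ ∀ e ∈ E x, ω e = false} ≤ (1 - (1 - p) ^ N / 2) ^ K := by
  have hq0 : 0 < 1 - p := by linarith
  have hq1 : (1 - p) ^ N ≤ 1 := pow_le_one₀ hq0.le (by linarith)
  suffices h : ∃ l : Finset X, l.card ≤ K ∧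
      Pr p {ω : ι → Bool | ∀ y ∈ l, ¬ ∀ e ∈ E y, ω e = false} ≤ (1 - (1 - p) ^ N / 2) ^ K by
    obtain ⟨l, -, hl⟩ := h
    refine le_trans (Pr_mono hp0 hp1 ?_) hl
    intro ω h y _
    exact h y
  induction K with
  | zero =>
    refine ⟨∅, by simp, ?_⟩
    rw [pow_zero, Pr_compl]
    linarith [Pr_nonneg hp0 hp1 ({ω : ι → Bool | ∀ y ∈ (∅ : Finset X), ¬ ∀ e ∈ E y, ω e = false}ᶜ)]
  | succ K ih =>
    have hK' : (K:ℝ) * ρ ≤ (1 - p) ^ N / 2 := by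
      push_cast at hK; nlinarith
    obtain ⟨l, hlc, hl⟩ := ih hK'
    have : ∃ x ∈ (Finset.univ : Finset X),
        ∑ y ∈ l, (if Disjoint (E y) (E x) then (0:ℝ) else (1 - p) ^ (E y ∪ E x).card) ≤ K * ρ := by
      apply Finset.exists_le_of_sum_le Finset.univ_nonempty
      rw [Finset.sum_comm]
      calc _ ≤ ∑ y ∈ l, ρ * Fintype.card X := Finset.sum_le_sum fun y _ => hρ y
        _ = l.card * (ρ * Fintype.card X) := by simp
        _ ≤ K * (ρ * Fintype.card X) := by gcongr
        _ = _ := by simp; ring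
    obtain ⟨x, -, hx⟩ := this
    refine ⟨insert x l, (Finset.card_insert_le _ _).trans (by omega), ?_⟩
    refine (janson_step hp0 hp1 E N hE l x (hx.trans hK')).trans ?_
    rw [pow_succ, mul_comm]
    exact mul_le_mul_of_nonneg_right hl (by linarith)

end Janson


section IndepSet

open scoped Classical

lemma graphOf_adj {n : ℕ} (ω : EdgeType n → Bool) (u v : Fin n) :
    (graphOf ω).Adj u v ↔ ∃ h : ¬ (s(u, v) : Sym2 (Fin n)).IsDiag, ω ⟨s(u, v), h⟩ = true := by
  unfold graphOf
  rw [SimpleGraph.fromEdgeSet_adj]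
  constructor
  · rintro ⟨h, _⟩; exact h
  · rintro ⟨h, h'⟩
    exact ⟨⟨h, h'⟩, by simpa using h⟩

/-- The vertex map of a transversal. -/
def trv {n r w : ℕ} (φ : Fin r × Fin w → Fin n) (f : Fin r → Fin w) (a : Fin r) : Fin n :=
  φ (a, f a)

lemma trv_inj {n r w : ℕ} {φ : Fin r × Fin w → Fin n} (hφ : Function.Injective φ)
    (f : Fin r → Fin w) : Function.Injective (trv φ f) := by
  intro a b h
  have := hφ h
  exact (Prod.ext_iff.mp this).1

/-- Edge embedding of a transversal. -/
def emb {n r w : ℕ} {φ : Fin r × Fin w → Fin n} (hφ : Function.Injective φ)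
    (f : Fin r → Fin w) : EdgeType r ↪ EdgeType n where
  toFun e := ⟨Sym2.map (trv φ f) e.1, by
    have := e.2
    rwa [Sym2.isDiag_map (trv_inj hφ f)]⟩
  inj' := by
    intro e e' h
    have := congrArg Subtype.val h
    exact Subtype.ext (Sym2.map.injective (trv_inj hφ f) this)

lemma emb_inter {n r w : ℕ} {φ : Fin r × Fin w → Fin n} (hφ : Function.Injective φ)
    (f g : Fin r → Fin w) :
    ((Finset.univ.map (emb hφ f)) ∩ (Finset.univ.map (emb hφ g))).card ≤
      (Finset.univ.filter (fun a => g a = f a)).card.choose 2 := by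
  rw [← Sym2.card_image_offDiag]
  rw [← Finset.card_map (Function.Embedding.subtype _)]
  refine le_trans (Finset.card_le_card ?_) (Finset.card_image_le (f := Sym2.map (trv φ f)))
  intro z hz
  simp only [Finset.mem_map, Finset.mem_inter, Finset.mem_univ, true_and] at hz
  obtain ⟨_, ⟨⟨e, rfl⟩, ⟨e', he'⟩⟩, rfl⟩ := hz
  have h1 : Sym2.map (trv φ g) e'.1 = Sym2.map (trv φ f) e.1 := congrArg Subtype.val he'
  refine Finset.mem_image.mpr ⟨e.1, ?_, rfl⟩
  obtain ⟨e, hne⟩ := e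
  obtain ⟨e', hne'⟩ := e'
  simp only at h1 ⊢
  induction e using Sym2.ind with
  | _ a b =>
  induction e' using Sym2.ind with
  | _ a' b' =>
  have hab : a ≠ b := by simpa using hne
  rw [Sym2.map_mk, Sym2.map_mk] at h1
  have key : ∀ x y, trv φ g x = trv φ f y → g y = f y := by
    intro x y h
    have h2 := Prod.ext_iff.mp (hφ h)
    simp only at h2
    rw [← h2.1, h2.2, h2.1]
  refine Finset.mem_image.mpr ⟨(a, b), ?_, rfl⟩
  simp only [Finset.mem_offDiag, Finset.mem_filter, Finset.mem_univ, true_and]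
  rcases Sym2.eq_iff.mp h1 with ⟨h2, h3⟩ | ⟨h2, h3⟩
  · exact ⟨key _ _ h2, key _ _ h3, hab⟩
  · exact ⟨key _ _ h3, key _ _ h2, hab⟩

/-- The second moment sum. -/
noncomputable def rhoSum (r w : ℕ) (b : ℝ) : ℝ :=
  ∑ i ∈ Finset.range (r + 1), (r.choose i : ℝ) *
    ((if 2 ≤ i then b ^ (i.choose 2) else 0) * ((w : ℝ) ^ i)⁻¹)

lemma card_agree {r w : ℕ} (hw : 0 < w) (f : Fin r → Fin w) (A : Finset (Fin r)) :
    ((Finset.univ.filter (fun x : Fin r → Fin w => ∀ a ∈ A, x a = f a)).card : ℝ) =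
      (w : ℝ) ^ r * ((w : ℝ) ^ A.card)⁻¹ := by
  have h : Finset.univ.filter (fun x : Fin r → Fin w => ∀ a ∈ A, x a = f a) =
      Fintype.piFinset (fun a => if a ∈ A then {f a} else Finset.univ) := by
    ext x
    simp only [Finset.mem_filter, Finset.mem_univ, true_and, Fintype.mem_piFinset]
    refine forall_congr' fun a => ?_
    by_cases ha : a ∈ A <;> simp [ha]
  rw [h, Fintype.card_piFinset]
  have h2 : ∀ a : Fin r, (if a ∈ A then ({f a} : Finset (Fin w)) else Finset.univ).card =
      if a ∈ A then 1 else w := by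
    intro a; split_ifs <;> simp
  simp_rw [h2]
  rw [eq_mul_inv_iff_mul_eq₀ (by positivity)]
  rw [Finset.prod_ite]
  simp only [Finset.prod_const, one_pow, one_mul]
  push_cast
  rw [← pow_add]
  congr 1
  have := Finset.card_filter_add_card_filter_not (s := (Finset.univ : Finset (Fin r))) (fun a => a ∈ A)
  simp at this
  simpa [add_comm] using this

end IndepSet


section IndepSet2

open scoped Classical

lemma sum_agree_le {r w : ℕ} (hw : 0 < w) {b : ℝ} (hb : 0 ≤ b) (f : Fin r → Fin w) :
    ∑ x : Fin r → Fin w, (if 2 ≤ (Finset.univ.filter (fun a => x a = f a)).card then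
      b ^ ((Finset.univ.filter (fun a => x a = f a)).card.choose 2) else 0) ≤
      rhoSum r w b * (w : ℝ) ^ r := by
  let h : ℕ → ℝ := fun i => if 2 ≤ i then b ^ (i.choose 2) else 0
  have hh : ∀ i, 0 ≤ h i := by
    intro i; simp only [h]; split_ifs
    · positivity
    · norm_num
  calc _ ≤ ∑ x : Fin r → Fin w, ∑ A ∈ (Finset.univ : Finset (Fin r)).powerset,
        (if ∀ a ∈ A, x a = f a then h A.card else 0) := by
        refine Finset.sum_le_sum fun x _ => ?_
        have h1 : ∀ A ∈ (Finset.univ : Finset (Fin r)).powerset,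
            0 ≤ (if ∀ a ∈ A, x a = f a then h A.card else 0) := by
          intro A _; split_ifs
          · exact hh _
          · exact le_rfl
        have h2 := Finset.single_le_sum h1
          (Finset.mem_powerset.mpr (Finset.subset_univ (Finset.univ.filter (fun a => x a = f a))))
        rw [if_pos (by intro a ha; exact (Finset.mem_filter.mp ha).2)] at h2
        exact h2
    _ = ∑ A ∈ (Finset.univ : Finset (Fin r)).powerset,
        h A.card * ((w : ℝ) ^ r * ((w : ℝ) ^ A.card)⁻¹) := by
        rw [Finset.sum_comm]
        refine Finset.sum_congr rfl fun A _ => ?_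
        rw [← card_agree hw f A, ← Finset.sum_filter]
        simp [mul_comm]
    _ = rhoSum r w b * (w : ℝ) ^ r := by
        rw [Finset.sum_powerset_apply_card (fun i => h i * ((w : ℝ) ^ r * ((w : ℝ) ^ i)⁻¹))]
        unfold rhoSum
        rw [Finset.sum_mul]
        simp only [Finset.card_univ, Fintype.card_fin, nsmul_eq_mul]
        refine Finset.sum_congr rfl fun i _ => ?_
        simp only [h]
        ring

lemma indep_transversal {p : ℝ} (hp0 : 0 < p) (hp1 : p < 1) {n r w : ℕ} (hw : 0 < w)
    {φ : Fin r × Fin w → Fin n} (hφ : Function.Injective φ) {ρ : ℝ} (hρ0 : 0 < ρ)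
    (hρ : rhoSum r w (1 / (1 - p)) ≤ ρ) :
    Pr p {ω : EdgeType n → Bool | ∀ f : Fin r → Fin w,
      ¬ ∀ e ∈ Finset.univ.map (emb hφ f), ω e = false} ≤ Real.exp (-(1 / (4 * ρ)) + 1 / 2) := by
  have hq0 : 0 < 1 - p := by linarith
  set N := Fintype.card (EdgeType r) with hN
  have : Nonempty (Fin w) := ⟨⟨0, hw⟩⟩
  set μ := (1 - p) ^ N with hμ
  have hμ0 : 0 < μ := by positivity
  have hμ1 : μ ≤ 1 := pow_le_one₀ hq0.le (by linarith)
  have hcard : ∀ f, (Finset.univ.map (emb hφ f)).card = N := by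
    intro f; rw [Finset.card_map, Finset.card_univ]
  have hJ := janson hp0 hp1 (fun f => Finset.univ.map (emb hφ f)) N hcard (ρ * μ ^ 2) (by
    intro f
    calc _ ≤ ∑ x : Fin r → Fin w, μ ^ 2 *
        (if 2 ≤ (Finset.univ.filter (fun a => x a = f a)).card then
      (1 / (1 - p)) ^ ((Finset.univ.filter (fun a => x a = f a)).card.choose 2) else 0) := by
          refine Finset.sum_le_sum fun x _ => ?_
          have hi := emb_inter hφ f x
          have hr : (0:ℝ) ≤ (if 2 ≤ (Finset.univ.filter (fun a => x a = f a)).card then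
      (1 / (1 - p)) ^ ((Finset.univ.filter (fun a => x a = f a)).card.choose 2) else 0) := by
            split_ifs
            · positivity
            · exact le_rfl
          split_ifs with h1 h2 h2
          · positivity
          · simp
          · have hU := Finset.card_union_add_card_inter (Finset.univ.map (emb hφ f))
              (Finset.univ.map (emb hφ x))
            rw [hcard, hcard] at hU
            have e1 : (1 - p) ^ ((Finset.univ.map (emb hφ f)) ∪ (Finset.univ.map (emb hφ x))).card
                = μ ^ 2 * (1 / (1 - p)) ^
                  ((Finset.univ.map (emb hφ f)) ∩ (Finset.univ.map (emb hφ x))).card := by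
              rw [hμ, ← pow_mul, mul_two, ← hU, pow_add, mul_assoc, ← mul_pow,
                mul_one_div_cancel hq0.ne', one_pow, mul_one]
            refine le_trans (le_of_eq (Eq.trans (by congr!) e1)) ?_
            apply mul_le_mul_of_nonneg_left _ (by positivity)
            apply pow_le_pow_right₀ _ hi
            rw [le_div_iff₀ hq0]; linarith
          · exfalso
            apply h1
            rw [Finset.disjoint_iff_inter_eq_empty, ← Finset.card_eq_zero]
            rw [Nat.choose_eq_zero_of_lt (by omega)] at hi
            omega
      _ ≤ μ ^ 2 * (rhoSum r w (1 / (1 - p)) * (w : ℝ) ^ r) := by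
          rw [← Finset.mul_sum]
          exact mul_le_mul_of_nonneg_left (sum_agree_le hw (by positivity) f) (by positivity)
      _ ≤ μ ^ 2 * (ρ * (w : ℝ) ^ r) := by gcongr
      _ = _ := by simp; ring) (by positivity) ⌊1 / (2 * μ * ρ)⌋₊ (by
    have := Nat.floor_le (a := 1 / (2 * μ * ρ)) (by positivity)
    calc (⌊1 / (2 * μ * ρ)⌋₊ : ℝ) * (ρ * μ ^ 2) ≤ 1 / (2 * μ * ρ) * (ρ * μ ^ 2) := by gcongr
      _ = μ / 2 := by field_simp)
  refine hJ.trans ?_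
  have h1 : 1 - μ / 2 ≤ Real.exp (-(μ / 2)) := by
    have := Real.add_one_le_exp (-(μ / 2)); linarith
  calc (1 - μ / 2) ^ ⌊1 / (2 * μ * ρ)⌋₊ ≤ (Real.exp (-(μ / 2))) ^ ⌊1 / (2 * μ * ρ)⌋₊ :=
        pow_le_pow_left₀ (by linarith) h1 _
    _ = Real.exp (⌊1 / (2 * μ * ρ)⌋₊ * (-(μ / 2))) := by rw [← Real.exp_nat_mul]
    _ ≤ _ := by
      apply Real.exp_le_exp.mpr
      have h2 := Nat.sub_one_lt_floor (1 / (2 * μ * ρ))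
      have h3 : (1 / (2 * μ * ρ) - 1) * (μ / 2) ≤ ⌊1 / (2 * μ * ρ)⌋₊ * (μ / 2) := by gcongr
      have h4 : (1 / (2 * μ * ρ) - 1) * (μ / 2) = 1 / (4 * ρ) - μ / 2 := by field_simp; ring
      linarith

/-- `I` is an independent set of `Γ`. -/
def Indep {n : ℕ} (Γ : SimpleGraph (Fin n)) (I : Finset (Fin n)) : Prop :=
  ∀ x ∈ I, ∀ y ∈ I, ¬ Γ.Adj x y

lemma indep_in_set {p : ℝ} (hp0 : 0 < p) (hp1 : p < 1) {n r w : ℕ} (hw : 0 < w)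
    (S : Finset (Fin n)) (hS : r * w ≤ S.card) {ρ : ℝ} (hρ0 : 0 < ρ)
    (hρ : rhoSum r w (1 / (1 - p)) ≤ ρ) :
    Pr p {ω : EdgeType n → Bool | ¬ ∃ I ⊆ S, I.card = r ∧ Indep (graphOf ω) I}
      ≤ Real.exp (-(1 / (4 * ρ)) + 1 / 2) := by
  have hex : ∃ φ : Fin r × Fin w → Fin n, Function.Injective φ ∧ ∀ x, φ x ∈ S := by
    have hc : Fintype.card (Fin r × Fin w) ≤ Fintype.card S := by simpa using hS
    obtain ⟨g⟩ := Function.Embedding.nonempty_of_card_le hc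
    exact ⟨fun x => (g x).1, fun a b h => g.injective (Subtype.ext h), fun x => (g x).2⟩
  obtain ⟨φ, hφ, hφS⟩ := hex
  refine le_trans (Pr_mono hp0 hp1 ?_) (indep_transversal hp0 hp1 hw hφ hρ0 hρ)
  intro ω hω f hf
  apply hω
  refine ⟨Finset.univ.image (trv φ f), ?_, ?_, ?_⟩
  · intro x hx
    obtain ⟨a, -, rfl⟩ := Finset.mem_image.mp hx
    exact hφS _
  · rw [Finset.card_image_of_injective _ (trv_inj hφ f)]; simp
  · intro x hx y hy hadj
    obtain ⟨a, -, rfl⟩ := Finset.mem_image.mp hx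
    obtain ⟨b, -, rfl⟩ := Finset.mem_image.mp hy
    rw [graphOf_adj] at hadj
    obtain ⟨h, ht⟩ := hadj
    have hab : ¬ (s(a, b) : Sym2 (Fin r)).IsDiag := by
      intro h'
      apply h
      simp only [Sym2.mk_isDiag_iff] at h' ⊢
      rw [h']
    have := hf (emb hφ f ⟨s(a, b), hab⟩) (Finset.mem_map_of_mem _ (Finset.mem_univ _))
    have h2 : emb hφ f ⟨s(a, b), hab⟩ = ⟨s(trv φ f a, trv φ f b), h⟩ := rfl
    rw [h2, ht] at this
    exact absurd this (by simp)

end IndepSet2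


section Det

open scoped Classical

/-- Greedy extraction of independent sets in neighbourhoods of centers. -/
lemma greedy {n : ℕ} (Γ : SimpleGraph (Fin n)) (s0 s1 d r : ℕ) (hr : 0 < r)
    (hA : ∀ S : Finset (Fin n), s0 ≤ S.card → ∃ I ⊆ S, I.card = r ∧ Indep Γ I)
    (hB : ∀ S D : Finset (Fin n), Disjoint S D → s1 ≤ S.card → d ≤ D.card →
      ∃ c ∈ D, s0 ≤ (S.filter (fun u => Γ.Adj c u)).card) :
    ∀ (N : ℕ) (U D : Finset (Fin n)), U.card ≤ N → Disjoint U D → U.card + d * r ≤ D.card * r →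
      ∃ R ⊆ U, R.card ≤ s1 ∧ ∃ σ : Fin n → Fin n, (∀ u ∈ U, u ∉ R → σ u ∈ D ∧ Γ.Adj (σ u) u) ∧
        ∀ u ∈ U, ∀ u' ∈ U, u ∉ R → u' ∉ R → σ u = σ u' → ¬ Γ.Adj u u' := by
  intro N
  induction N with
  | zero =>
    intro U D hU _ _
    have : U = ∅ := Finset.card_eq_zero.mp (by omega)
    subst this
    exact ⟨∅, by simp, by simp, id, by simp, by simp⟩
  | succ N ih =>
    intro U D hU hUD hc
    by_cases hs : U.card < s1
    · exact ⟨U, le_rfl, hs.le, id, fun u h h' => absurd h h', fun u h _ _ h' => absurd h h'⟩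
    push Not at hs
    have hdD : d ≤ D.card := by
      have : d * r ≤ D.card * r := by omega
      exact Nat.le_of_mul_le_mul_right this hr
    obtain ⟨c, hcD, hcS⟩ := hB U D hUD hs hdD
    obtain ⟨I, hIS, hIr, hI⟩ := hA _ hcS
    have hIU : I ⊆ U := hIS.trans (Finset.filter_subset _ _)
    have hcard : (U \ I).card = U.card - r := by rw [Finset.card_sdiff_of_subset hIU, hIr]
    have hIle : r ≤ U.card := hIr ▸ Finset.card_le_card hIU
    obtain ⟨R, hRU, hR, σ, h1, h2⟩ := ih (U \ I) (D.erase c) (by omega)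
      (Finset.disjoint_of_subset_left Finset.sdiff_subset
        (Finset.disjoint_of_subset_right (Finset.erase_subset _ _) hUD))
      (by
        rw [Finset.card_erase_of_mem hcD, hcard, Nat.sub_mul, one_mul]
        omega)
    refine ⟨R, hRU.trans Finset.sdiff_subset, hR, fun u => if u ∈ I then c else σ u, ?_, ?_⟩
    · intro u hu huR
      by_cases huI : u ∈ I
      · simp only [huI, if_true]
        exact ⟨hcD, (Finset.mem_filter.mp (hIS huI)).2⟩
      · simp only [huI, if_false]
        have := h1 u (Finset.mem_sdiff.mpr ⟨hu, huI⟩) huR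
        exact ⟨Finset.mem_of_mem_erase this.1, this.2⟩
    · intro u hu u' hu' huR huR' heq
      by_cases huI : u ∈ I <;> by_cases huI' : u' ∈ I
      · exact hI u huI u' huI'
      · simp only [huI, huI', if_true, if_false] at heq
        have := h1 u' (Finset.mem_sdiff.mpr ⟨hu', huI'⟩) huR'
        exact absurd heq.symm (Finset.ne_of_mem_erase this.1)
      · simp only [huI, huI', if_true, if_false] at heq
        have := h1 u (Finset.mem_sdiff.mpr ⟨hu, huI⟩) huR
        exact absurd heq (Finset.ne_of_mem_erase this.1)
      · simp only [huI, huI', if_false] at heq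
        exact h2 u (Finset.mem_sdiff.mpr ⟨hu, huI⟩) u' (Finset.mem_sdiff.mpr ⟨hu', huI'⟩) huR huR' heq

lemma matching {n : ℕ} {α : Type*} (R : Finset (Fin n)) (s1 : ℕ) (hR : R.card ≤ s1)
    (P : Fin n → Finset α) (hP : ∀ u ∈ R, s1 ≤ (P u).card) :
    ∃ τ : R → α, Function.Injective τ ∧ ∀ u : R, τ u ∈ P u := by
  have := (Finset.all_card_le_biUnion_card_iff_exists_injective (fun u : R => P u)).mp (by
    intro s
    rcases s.eq_empty_or_nonempty with rfl | ⟨u, hu⟩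
    · simp
    · calc s.card ≤ Fintype.card R := Finset.card_le_univ s
        _ = R.card := by simp
        _ ≤ s1 := hR
        _ ≤ (P u).card := hP u u.2
        _ ≤ _ := Finset.card_le_card (Finset.subset_biUnion_of_mem (fun u : R => P u) hu))
  exact this

/-- A tuple is good with respect to `v` and `u`. -/
def Good {n k : ℕ} {α : Type*} (Γ : SimpleGraph (Fin n)) (v : Fin n) (T : α → ZMod k → Fin n)
    (i : α) (u : Fin n) : Prop :=
  (∀ a b, Γ.Adj (T i a) (T i b) ↔ (cycGraph k).Adj a b) ∧ (∀ a, Γ.Adj v (T i a)) ∧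
    ∀ a, Γ.Adj u (T i a)

/-- The deterministic part of the argument. -/
lemma deterministic {n k : ℕ} [NeZero k] (Γ : SimpleGraph (Fin n)) (v : Fin n)
    (s0 s1 d r t : ℕ) (hr : 0 < r)
    (hA : ∀ S : Finset (Fin n), s0 ≤ S.card → ∃ I ⊆ S, I.card = r ∧ Indep Γ I)
    (hB : ∀ S D : Finset (Fin n), Disjoint S D → s1 ≤ S.card → d ≤ D.card →
      ∃ c ∈ D, s0 ≤ (S.filter (fun u => Γ.Adj c u)).card)
    {α : Type*} (J1 J2 : Finset α) (hJ : Disjoint J1 J2) (T : α → ZMod k → Fin n)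
    (hT : ∀ i j a b, T i a = T j b → i = j ∧ a = b)
    (hC : ∀ u, s1 ≤ (J1.filter (fun i => Good Γ v T i u)).card)
    (hD : t ≤ (J2.filter (fun i => Good Γ v T i v)).card)
    (hJt : J1.card ≤ t) (hcount : n + d * r ≤ (k * (t - J1.card)) * r) :
    ∃ (c : Fin (k * t) → Fin n) (L : Fin (k * t) → Set (Fin n)),
      IsStarFactor Γ v (k * t) c L ∧ HasInducedCycleFactorOn Γ k (Set.range c) := by
  set G1 := J1.filter (fun i => Good Γ v T i v) with hG1
  have hG1c : G1.card ≤ J1.card := Finset.card_filter_le _ _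
  obtain ⟨G2, hG2, hG2c⟩ := Finset.exists_subset_card_eq (n := t - G1.card) (by
    exact (Nat.sub_le _ _).trans hD)
  have hG2J : G2 ⊆ J2 := hG2.trans (Finset.filter_subset _ _)
  have hdisj : Disjoint G1 G2 :=
    Finset.disjoint_of_subset_left (Finset.filter_subset _ _)
      (Finset.disjoint_of_subset_right hG2J hJ)
  set G := G1 ∪ G2 with hG
  have hGc : G.card = t := by rw [hG, Finset.card_union_of_disjoint hdisj, hG2c]; omega
  have hgood : ∀ i ∈ G, Good Γ v T i v := by
    intro i hi
    rcases Finset.mem_union.mp hi with h | h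
    · exact (Finset.mem_filter.mp h).2
    · exact (Finset.mem_filter.mp (hG2 h)).2
  let cen : Finset α → Finset (Fin n) := fun s =>
    (s ×ˢ (Finset.univ : Finset (ZMod k))).image (fun x => T x.1 x.2)
  have hcenc : ∀ s, (cen s).card = s.card * k := by
    intro s
    simp only [cen]
    rw [Finset.card_image_of_injective, Finset.card_product, Finset.card_univ, ZMod.card]
    intro x y h
    have := hT _ _ _ _ h
    exact Prod.ext this.1 this.2
  have hmem : ∀ s x, x ∈ cen s ↔ ∃ i ∈ s, ∃ a, T i a = x := by
    intro s x
    simp only [cen, Finset.mem_image, Finset.mem_product, Finset.mem_univ, and_true, Prod.exists]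
    constructor
    · rintro ⟨i, a, hi, h⟩; exact ⟨i, hi, a, h⟩
    · rintro ⟨i, hi, a, h⟩; exact ⟨i, a, hi, h⟩
  set U : Finset (Fin n) := Finset.univ.filter (fun u => u ≠ v ∧ u ∉ cen G) with hU
  have hUD : Disjoint U (cen G2) := by
    rw [Finset.disjoint_left]
    intro x hx hx2
    apply (Finset.mem_filter.mp hx).2.2
    obtain ⟨i, hi, a, h⟩ := (hmem _ _).mp hx2
    exact (hmem _ _).mpr ⟨i, Finset.mem_union_right _ hi, a, h⟩
  obtain ⟨R, hRU, hR, σ, h1, h2⟩ := greedy Γ s0 s1 d r hr hA hB U.card U (cen G2) le_rfl hUD (by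
    rw [hcenc, hG2c]
    have hUn : U.card ≤ n := by simpa using Finset.card_le_univ U
    calc U.card + d * r ≤ n + d * r := by omega
      _ ≤ _ := hcount
      _ ≤ (t - G1.card) * k * r := by
        apply Nat.mul_le_mul_right
        rw [mul_comm]
        apply Nat.mul_le_mul_right
        omega)
  obtain ⟨τ, hτi, hτ⟩ := matching R s1 hR (fun u => J1.filter (fun i => Good Γ v T i u))
    (fun u _ => hC u)
  have hτG : ∀ u, τ u ∈ G1 := by
    intro u
    have := Finset.mem_filter.mp (hτ u)
    exact Finset.mem_filter.mpr ⟨this.1, this.2.1, this.2.2.1, this.2.2.1⟩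
  -- the total assignment
  let S : Fin n → Fin n := fun u => if h : u ∈ R then T (τ ⟨u, h⟩) 0 else σ u
  have hS1 : ∀ u ∈ U, S u ∈ cen G ∧ Γ.Adj (S u) u := by
    intro u hu
    by_cases h : u ∈ R
    · have hs : S u = T (τ ⟨u, h⟩) 0 := dif_pos h
      rw [hs]
      refine ⟨(hmem _ _).mpr ⟨_, Finset.mem_union_left _ (hτG _), _, rfl⟩, ?_⟩
      exact ((Finset.mem_filter.mp (hτ ⟨u, h⟩)).2.2.2 0).symm
    · have hs : S u = σ u := dif_neg h
      rw [hs]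
      obtain ⟨ha, hb⟩ := h1 u hu h
      obtain ⟨i, hi, a, h⟩ := (hmem _ _).mp ha
      exact ⟨(hmem _ _).mpr ⟨i, Finset.mem_union_right _ hi, a, h⟩, hb⟩
  have hcross : ∀ u ∈ U, ∀ u', u ∉ R → ∀ h : u' ∈ R, S u ≠ S u' := by
    intro u hu u' h h' heq
    have hs : S u = σ u := dif_neg h
    have hs' : S u' = T (τ ⟨u', h'⟩) 0 := dif_pos h'
    rw [hs, hs'] at heq
    obtain ⟨i, hi, a, h3⟩ := (hmem _ _).mp (h1 u hu h).1
    rw [← h3] at heq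
    have := (hT _ _ _ _ heq).1
    exact Finset.disjoint_left.mp hdisj (hτG ⟨u', h'⟩) (this ▸ hi)
  have hS2 : ∀ u ∈ U, ∀ u' ∈ U, u ≠ u' → S u = S u' → ¬ Γ.Adj u u' := by
    intro u hu u' hu' hne heq
    by_cases h : u ∈ R <;> by_cases h' : u' ∈ R
    · exfalso
      have hs : S u = T (τ ⟨u, h⟩) 0 := dif_pos h
      have hs' : S u' = T (τ ⟨u', h'⟩) 0 := dif_pos h'
      rw [hs, hs'] at heq
      have := hτi (hT _ _ _ _ heq).1
      exact hne (congrArg Subtype.val this)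
    · exact absurd heq.symm (hcross u' hu' u h' h)
    · exact absurd heq (hcross u hu u' h h')
    · have hs : S u = σ u := dif_neg h
      have hs' : S u' = σ u' := dif_neg h'
      rw [hs, hs'] at heq
      exact h2 u hu u' hu' h h' heq
  -- enumeration
  let eG : Fin t ≃ G := (Finset.equivFinOfCardEq hGc).symm
  have hcardE : Fintype.card (Fin t × ZMod k) = k * t := by
    rw [Fintype.card_prod, ZMod.card, Fintype.card_fin, mul_comm]
  let eC : Fin (k * t) ≃ Fin t × ZMod k := (Fintype.equivFinOfCardEq hcardE).symm
  let c : Fin (k * t) → Fin n := fun x => T (eG (eC x).1) (eC x).2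
  have hcinj : Function.Injective c := by
    intro x y h
    have h3 := hT _ _ _ _ h
    apply eC.injective
    exact Prod.ext (eG.injective (Subtype.ext h3.1)) h3.2
  have hcmem : ∀ x, c x ∈ cen G := fun x => (hmem _ _).mpr ⟨_, (eG (eC x).1).2, _, rfl⟩
  have hcsurj : ∀ y ∈ cen G, ∃ x, c x = y := by
    intro y hy
    obtain ⟨i, hi, a, h⟩ := (hmem _ _).mp hy
    refine ⟨eC.symm (eG.symm ⟨i, hi⟩, a), ?_⟩
    simp only [c, Equiv.apply_symm_apply]
    exact h
  have hUcen : ∀ u ∈ U, u ∉ cen G := fun u hu => (Finset.mem_filter.mp hu).2.2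
  have hvcen : ∀ y ∈ cen G, Γ.Adj v y := by
    intro y hy
    obtain ⟨i, hi, a, rfl⟩ := (hmem _ _).mp hy
    exact (hgood i hi).2.1 a
  refine ⟨c, fun x => {u | u ∈ U ∧ S u = c x}, ⟨?_, ?_, ?_, ?_, ?_, ?_⟩, ?_⟩
  · exact fun x => hvcen _ (hcmem x)
  · rintro x ⟨h, -⟩
    exact hUcen _ h (hcmem x)
  · rintro x u ⟨hu, hux⟩
    rw [← hux]; exact (hS1 u hu).2
  · rintro x u ⟨hu, hux⟩ u' ⟨hu', hux'⟩ hne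
    exact hS2 u hu u' hu' hne (hux.trans hux'.symm)
  · intro x _ y _ hxy
    rw [Function.onFun, Set.disjoint_left]
    rintro z hz hz'
    rcases Set.mem_insert_iff.mp hz with rfl | ⟨hu, hux⟩ <;>
    rcases Set.mem_insert_iff.mp hz' with h | ⟨hu', hux'⟩
    · exact hxy (hcinj h)
    · exact hUcen _ hu' (hcmem x)
    · exact hUcen _ hu (h ▸ hcmem y)
    · exact hxy (hcinj (hux.symm.trans hux'))
  · ext z
    simp only [Set.mem_iUnion, Set.mem_insert_iff, Set.mem_setOf_eq, Set.mem_compl_iff,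
      Set.mem_singleton_iff]
    constructor
    · rintro ⟨x, rfl | ⟨hu, -⟩⟩
      · exact (hvcen _ (hcmem x)).ne'
      · exact (Finset.mem_filter.mp hu).2.1
    · intro hz
      by_cases hzc : z ∈ cen G
      · obtain ⟨x, hx⟩ := hcsurj z hzc
        exact ⟨x, Or.inl hx.symm⟩
      · have hzU : z ∈ U := Finset.mem_filter.mpr ⟨Finset.mem_univ _, hz, hzc⟩
        obtain ⟨x, hx⟩ := hcsurj _ (hS1 z hzU).1
        exact ⟨x, Or.inr ⟨hzU, hx.symm⟩⟩
  · refine ⟨t, fun i a => T (eG i) a, ?_, ?_, ?_, ?_⟩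
    · intro i a b h
      exact (hT _ _ _ _ h).2
    · intro i _ j _ hij
      rw [Function.onFun, Set.disjoint_left]
      rintro _ ⟨a, rfl⟩ ⟨b, h⟩
      exact hij (eG.injective (Subtype.ext (hT _ _ _ _ h).1)).symm
    · ext z
      simp only [Set.mem_iUnion, Set.mem_range]
      constructor
      · rintro ⟨i, a, rfl⟩
        exact hcsurj _ ((hmem _ _).mpr ⟨_, (eG i).2, a, rfl⟩)
      · rintro ⟨x, rfl⟩
        exact ⟨(eC x).1, (eC x).2, rfl⟩
    · intro i a b
      exact (hgood _ (eG i).2).1 a b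

end Det


section Bounds

open scoped Classical

/-- The coordinates relevant for a tuple. -/
def tupF {n k : ℕ} (v u : Fin n) (τ : ZMod k → Fin n) : Set (EdgeType n) :=
  {e | (∃ a, τ a ∈ e.1) ∧ ∀ y ∈ e.1, (∃ a, τ a = y) ∨ y = v ∨ y = u}

lemma tupF_mem {n k : ℕ} {v u : Fin n} {τ : ZMod k → Fin n} {y : Fin n} (a : ZMod k)
    (hy : (∃ a, τ a = y) ∨ y = v ∨ y = u) (h : ¬ (s(y, τ a) : Sym2 (Fin n)).IsDiag) :
    (⟨s(y, τ a), h⟩ : EdgeType n) ∈ tupF v u τ := by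
  refine ⟨⟨a, by simp⟩, ?_⟩
  intro z hz
  rcases Sym2.mem_iff.mp hz with rfl | rfl
  · exact hy
  · exact Or.inl ⟨a, rfl⟩

lemma good_dep {n k : ℕ} {α : Type*} (v u : Fin n) (T : α → ZMod k → Fin n) (i : α) :
    DependsOn (fun ω : EdgeType n → Bool => ω ∈ {ω | Good (graphOf ω) v T i u})
      (tupF v u (T i)) := by
  intro ω ω' h
  have key : ∀ y a, ((∃ a, T i a = y) ∨ y = v ∨ y = u) →
      ((graphOf ω).Adj y (T i a) ↔ (graphOf ω').Adj y (T i a)) := by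
    intro y a hy
    rw [graphOf_adj, graphOf_adj]
    refine exists_congr fun hd => ?_
    rw [h _ (tupF_mem a hy hd)]
  apply propext
  simp only [Set.mem_setOf_eq, Good]
  refine and_congr ?_ (and_congr ?_ ?_)
  · refine forall₂_congr fun a b => ?_
    rw [key _ b (Or.inl ⟨a, rfl⟩)]
  · exact forall_congr' fun a => key _ a (Or.inr (Or.inl rfl))
  · exact forall_congr' fun a => key _ a (Or.inr (Or.inr rfl))

lemma tupF_card {n k : ℕ} [NeZero k] (v u : Fin n) (τ : ZMod k → Fin n) :
    (Finset.univ.filter (fun e => e ∈ tupF v u τ)).card ≤ (k + 2) ^ 2 := by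
  let V : Finset (Fin n) := Finset.univ.image τ ∪ {v, u}
  have hV : V.card ≤ k + 2 := by
    refine (Finset.card_union_le _ _).trans (add_le_add ?_ Finset.card_le_two)
    refine Finset.card_image_le.trans ?_
    rw [Finset.card_univ, ZMod.card]
  rw [← Finset.card_map (Function.Embedding.subtype _)]
  calc _ ≤ ((V ×ˢ V).image (fun x => s(x.1, x.2))).card := by
        apply Finset.card_le_card
        intro z hz
        obtain ⟨e, he, rfl⟩ := Finset.mem_map.mp hz
        have he2 := (Finset.mem_filter.mp he).2.2
        obtain ⟨e, hd⟩ := e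
        induction e using Sym2.ind with
        | _ x y =>
        have hin : ∀ y, ((∃ a, τ a = y) ∨ y = v ∨ y = u) → y ∈ V := by
          intro y hy
          rcases hy with ⟨a, rfl⟩ | rfl | rfl
          · exact Finset.mem_union_left _ (Finset.mem_image_of_mem _ (Finset.mem_univ _))
          · exact Finset.mem_union_right _ (by simp)
          · exact Finset.mem_union_right _ (by simp)
        refine Finset.mem_image.mpr ⟨(x, y), Finset.mem_product.mpr ⟨?_, ?_⟩, rfl⟩
        · exact hin _ (he2 x (by simp))
        · exact hin _ (he2 y (by simp))
    _ ≤ (V ×ˢ V).card := Finset.card_image_le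
    _ = V.card ^ 2 := by rw [Finset.card_product, sq]
    _ ≤ _ := Nat.pow_le_pow_left hV 2

lemma good_prob {p : ℝ} (hp0 : 0 < p) (hp1 : p < 1) {n k : ℕ} [NeZero k] {α : Type*}
    (v u : Fin n) (T : α → ZMod k → Fin n) (i : α) (hTi : Function.Injective (T i))
    (hv : ∀ a, T i a ≠ v) (hu : ∀ a, T i a ≠ u) :
    (min p (1 - p)) ^ ((k + 2) ^ 2) ≤
      Pr p {ω : EdgeType n → Bool | Good (graphOf ω) v T i u} := by
  let pat : EdgeType n → Bool := fun e => decide (v ∈ e.1 ∨ u ∈ e.1 ∨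
    ∃ a b, (cycGraph k).Adj a b ∧ e.1 = s(T i a, T i b))
  refine (Pr_cyl_ge hp0 hp1 _ pat _ (tupF_card v u (T i))).trans (Pr_mono hp0 hp1 ?_)
  intro ω hω
  have hω' : ∀ e ∈ tupF v u (T i), ω e = pat e := fun e he =>
    hω e (Finset.mem_filter.mpr ⟨Finset.mem_univ _, he⟩)
  refine ⟨?_, ?_, ?_⟩
  · intro a b
    rw [graphOf_adj]
    constructor
    · rintro ⟨hd, h⟩
      rw [hω' _ (tupF_mem b (Or.inl ⟨a, rfl⟩) hd)] at h
      rcases of_decide_eq_true h with h | h | ⟨a', b', hab, h⟩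
      · rcases Sym2.mem_iff.mp h with h | h
        · exact absurd h.symm (hv a)
        · exact absurd h.symm (hv b)
      · rcases Sym2.mem_iff.mp h with h | h
        · exact absurd h.symm (hu a)
        · exact absurd h.symm (hu b)
      · rcases Sym2.eq_iff.mp h with ⟨h1, h2⟩ | ⟨h1, h2⟩
        · rw [hTi h1, hTi h2]; exact hab
        · rw [hTi h1, hTi h2]; exact hab.symm
    · intro hab
      have hd : ¬ (s(T i a, T i b) : Sym2 (Fin n)).IsDiag := by
        simp only [Sym2.mk_isDiag_iff]
        exact fun h => hab.ne (hTi h)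
      refine ⟨hd, ?_⟩
      rw [hω' _ (tupF_mem b (Or.inl ⟨a, rfl⟩) hd)]
      exact decide_eq_true (Or.inr (Or.inr ⟨a, b, hab, rfl⟩))
  · intro a
    rw [graphOf_adj]
    have hd : ¬ (s(v, T i a) : Sym2 (Fin n)).IsDiag := by
      simp only [Sym2.mk_isDiag_iff]
      exact fun h => hv a h.symm
    refine ⟨hd, ?_⟩
    rw [hω' _ (tupF_mem a (Or.inr (Or.inl rfl)) hd)]
    exact decide_eq_true (Or.inl (by simp))
  · intro a
    rw [graphOf_adj]
    have hd : ¬ (s(u, T i a) : Sym2 (Fin n)).IsDiag := by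
      simp only [Sym2.mk_isDiag_iff]
      exact fun h => hu a h.symm
    refine ⟨hd, ?_⟩
    rw [hω' _ (tupF_mem a (Or.inr (Or.inr rfl)) hd)]
    exact decide_eq_true (Or.inr (Or.inl (by simp)))

/-- The conclusion of the Chernoff lemma. -/
def ChernoffAt (p δ θ κ : ℝ) : Prop :=
  ∀ (ι : Type) [Fintype ι] (α : Type)
    (s : Finset α) (F : α → Set ι) (A : α → Set (ι → Bool)),
    (s : Set α).PairwiseDisjoint F →
    (∀ a ∈ s, DependsOn (fun ω => ω ∈ A a) (F a)) → (∀ a ∈ s, δ ≤ Pr p (A a)) →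
    Pr p {ω | ((s.filter (fun a => ω ∈ A a)).card : ℝ) ≤ θ * s.card} ≤ κ ^ s.card

lemma good_count {p θ κ : ℝ} (hp0 : 0 < p) (hp1 : p < 1) {n k : ℕ} [NeZero k]
    (hch : ChernoffAt p ((min p (1 - p)) ^ ((k + 2) ^ 2)) θ κ) {α : Type}
    (v u : Fin n) (T : α → ZMod k → Fin n) (hT : ∀ i j a b, T i a = T j b → i = j ∧ a = b)
    (hv : ∀ i a, T i a ≠ v) (J : Finset α) (hu : ∀ i ∈ J, ∀ a, T i a ≠ u) :
    Pr p {ω : EdgeType n → Bool |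
      ((J.filter (fun i => Good (graphOf ω) v T i u)).card : ℝ) ≤ θ * J.card} ≤ κ ^ J.card := by
  refine hch (EdgeType n) α J (fun i => tupF v u (T i))
    (fun i => {ω | Good (graphOf ω) v T i u}) ?_ ?_ ?_
  · intro i hi j hj hij
    rw [Function.onFun, Set.disjoint_left]
    rintro e ⟨⟨a, ha⟩, -⟩ ⟨-, h⟩
    rcases h _ ha with ⟨b, hb⟩ | hb | hb
    · exact hij (hT _ _ _ _ hb).1.symm
    · exact hv i a hb
    · exact hu i hi a hb
  · intro i _
    exact good_dep v u T i
  · intro i hi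
    exact good_prob hp0 hp1 v u T i (fun a b h => (hT _ _ _ _ h).2) (hv i) (hu i hi)

lemma bip_count {p θ κ : ℝ} (hp0 : 0 < p) (hp1 : p < 1) {n k : ℕ} [NeZero k]
    (hch : ChernoffAt p ((min p (1 - p)) ^ ((k + 2) ^ 2)) θ κ)
    (S D : Finset (Fin n)) (hSD : Disjoint S D) (s0 : ℕ) (hs0 : (s0 : ℝ) ≤ θ * S.card) :
    Pr p {ω : EdgeType n → Bool | ¬ ∃ c ∈ D, s0 ≤ (S.filter (fun u => (graphOf ω).Adj c u)).card}
      ≤ κ ^ (S.card * D.card) := by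
  have h := hch (EdgeType n) (Fin n × Fin n) (D ×ˢ S) (fun x => {e | e.1 = s(x.1, x.2)})
    (fun x => {ω | (graphOf ω).Adj x.1 x.2}) ?_ ?_ ?_
  · rw [Finset.card_product, mul_comm D.card S.card] at h
    refine le_trans (Pr_mono hp0 hp1 ?_) h
    intro ω hω
    have hω' : ∀ c ∈ D, (S.filter (fun u => (graphOf ω).Adj c u)).card ≤ s0 := by
      intro c hc
      by_contra hcon
      exact hω ⟨c, hc, by omega⟩
    have hcard : ((D ×ˢ S).filter (fun x => (graphOf ω).Adj x.1 x.2)).card =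
        ∑ c ∈ D, (S.filter (fun u => (graphOf ω).Adj c u)).card := by
      rw [Finset.card_filter, Finset.sum_product]
      simp_rw [Finset.card_filter]
    have h1 : ((D ×ˢ S).filter (fun x => (graphOf ω).Adj x.1 x.2)).card ≤ D.card * s0 := by
      rw [hcard]
      exact (Finset.sum_le_sum hω').trans (by simp)
    show (((D ×ˢ S).filter (fun x => (graphOf ω).Adj x.1 x.2)).card : ℝ) ≤ θ * ↑(S.card * D.card)
    calc (((D ×ˢ S).filter (fun x => (graphOf ω).Adj x.1 x.2)).card : ℝ) ≤ D.card * s0 := by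
          exact_mod_cast h1
      _ ≤ D.card * (θ * S.card) := by gcongr
      _ = _ := by push_cast; ring
  · rintro ⟨c, u⟩ hx ⟨c', u'⟩ hy hne
    rw [Function.onFun, Set.disjoint_left]
    rintro e he he'
    have h1 : e.1 = s(c, u) := he
    have h2 : e.1 = s(c', u') := he'
    rw [h1] at h2
    simp only [Finset.coe_product, Set.mem_prod, Finset.mem_coe] at hx hy
    rcases Sym2.eq_iff.mp h2 with ⟨h3, h4⟩ | ⟨h3, h4⟩
    · exact hne (by rw [h3, h4])
    · exact Finset.disjoint_left.mp hSD hy.2 (h3 ▸ hx.1)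
  · rintro ⟨c, u⟩ _ ω ω' hag
    apply propext
    simp only [Set.mem_setOf_eq]
    rw [graphOf_adj, graphOf_adj]
    refine exists_congr fun hd => ?_
    rw [hag ⟨s(c, u), hd⟩ rfl]
  · rintro ⟨c, u⟩ hx
    have hx' := Finset.mem_product.mp hx
    have hd : ¬ (s(c, u) : Sym2 (Fin n)).IsDiag := by
      simp only [Sym2.mk_isDiag_iff]
      intro h
      exact Finset.disjoint_left.mp hSD hx'.2 (h ▸ hx'.1)
    refine (Pr_cyl_ge hp0 hp1 {⟨s(c, u), hd⟩} (fun _ => true) _ ?_).trans (Pr_mono hp0 hp1 ?_)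
    · rw [Finset.card_singleton]; exact Nat.one_le_pow _ _ (by omega)
    · intro ω hω
      show (graphOf ω).Adj c u
      rw [graphOf_adj]
      exact ⟨hd, hω _ (Finset.mem_singleton_self _)⟩

/-- The finite bound on the failure probability. -/
lemma finite_bound {p θ κ : ℝ} (hp0 : 0 < p) (hp1 : p < 1) {n k : ℕ} [NeZero k]
    (hκ0 : 0 < κ) (hκ1 : κ < 1) (hθ0 : 0 < θ)
    (hch : ChernoffAt p ((min p (1 - p)) ^ ((k + 2) ^ 2)) θ κ)
    (v : Fin n) (s1 d r t w M M2 : ℕ) (ρ : ℝ) (hr : 0 < r) (hw : 0 < w)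
    (hρ0 : 0 < ρ) (hρ : rhoSum r w (1 / (1 - p)) ≤ ρ)
    (hs0 : ((r * w : ℕ) : ℝ) ≤ θ * s1)
    (hM : 1 ≤ M) (hs1 : (s1 : ℝ) ≤ θ * ((M : ℝ) - 1)) (ht : (t : ℝ) ≤ θ * M2)
    (hMt : M ≤ t) (hn : (M + M2) * k + 1 ≤ n)
    (hcount : n + d * r ≤ (k * (t - M)) * r) :
    Pr p {ω : EdgeType n → Bool | ¬ ∃ (c : Fin (k * t) → Fin n) (L : Fin (k * t) → Set (Fin n)),
      IsStarFactor (graphOf ω) v (k * t) c L ∧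
        HasInducedCycleFactorOn (graphOf ω) k (Set.range c)} ≤
      2 ^ n * Real.exp (-(1 / (4 * ρ)) + 1 / 2) + 4 ^ n * κ ^ (s1 * d) + n * κ ^ (M - 1)
        + κ ^ M2 := by
  -- tuples
  have hex : ∃ T : (Fin M ⊕ Fin M2) → ZMod k → Fin n,
      (∀ i j a b, T i a = T j b → i = j ∧ a = b) ∧ ∀ i a, T i a ≠ v := by
    have hc : Fintype.card ((Fin M ⊕ Fin M2) × ZMod k) ≤ Fintype.card {x : Fin n // x ≠ v} := by
      rw [Fintype.card_prod, Fintype.card_sum, ZMod.card, Fintype.card_fin, Fintype.card_fin]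
      have : Fintype.card {x : Fin n // x ≠ v} = n - 1 := by
        rw [Fintype.card_subtype_compl]; simp
      omega
    obtain ⟨g⟩ := Function.Embedding.nonempty_of_card_le hc
    refine ⟨fun i a => (g (i, a)).1, ?_, fun i a => (g (i, a)).2⟩
    intro i j a b h
    exact Prod.ext_iff.mp (g.injective (Subtype.ext h))
  obtain ⟨T, hT, hTv⟩ := hex
  let J1 : Finset (Fin M ⊕ Fin M2) := Finset.univ.map Function.Embedding.inl
  let J2 : Finset (Fin M ⊕ Fin M2) := Finset.univ.map Function.Embedding.inr
  have hJ1 : J1.card = M := by simp [J1]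
  have hJ2 : J2.card = M2 := by simp [J2]
  have hJ : Disjoint J1 J2 := Finset.disjoint_map_inl_map_inr _ _
  -- bad events
  let bA : Set (EdgeType n → Bool) := {ω | ∃ S ∈ (Finset.univ : Finset (Finset (Fin n))).filter
    (fun S => r * w ≤ S.card), ω ∈ {ω | ¬ ∃ I ⊆ S, I.card = r ∧ Indep (graphOf ω) I}}
  let bB : Set (EdgeType n → Bool) := {ω | ∃ x ∈ (Finset.univ :
    Finset (Finset (Fin n) × Finset (Fin n))).filter
      (fun x => Disjoint x.1 x.2 ∧ s1 ≤ x.1.card ∧ d ≤ x.2.card),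
      ω ∈ {ω | ¬ ∃ c ∈ x.2, r * w ≤ (x.1.filter (fun u => (graphOf ω).Adj c u)).card}}
  let bC : Set (EdgeType n → Bool) := {ω | ∃ u ∈ (Finset.univ : Finset (Fin n)),
    ω ∈ {ω | (((J1.filter (fun i => ∀ a, T i a ≠ u)).filter
      (fun i => Good (graphOf ω) v T i u)).card : ℝ) ≤
        θ * (J1.filter (fun i => ∀ a, T i a ≠ u)).card}}
  let bD : Set (EdgeType n → Bool) := {ω |
    ((J2.filter (fun i => Good (graphOf ω) v T i v)).card : ℝ) ≤ θ * J2.card}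
  have hpA : Pr p bA ≤ 2 ^ n * Real.exp (-(1 / (4 * ρ)) + 1 / 2) := by
    refine (Pr_biUnion_le hp0 hp1 _ _).trans ?_
    refine (Finset.sum_le_card_nsmul _ _ (Real.exp (-(1 / (4 * ρ)) + 1 / 2)) ?_).trans ?_
    · intro S hS
      exact indep_in_set hp0 hp1 hw S (Finset.mem_filter.mp hS).2 hρ0 hρ
    · rw [nsmul_eq_mul]
      apply mul_le_mul_of_nonneg_right _ (Real.exp_nonneg _)
      have h1 := Finset.card_filter_le (Finset.univ : Finset (Finset (Fin n)))
        (fun S => r * w ≤ S.card)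
      rw [Finset.card_univ, Fintype.card_finset, Fintype.card_fin] at h1
      exact_mod_cast h1
  have hpB : Pr p bB ≤ 4 ^ n * κ ^ (s1 * d) := by
    refine (Pr_biUnion_le hp0 hp1 _ _).trans ?_
    refine (Finset.sum_le_card_nsmul _ _ (κ ^ (s1 * d)) ?_).trans ?_
    · intro x hx
      obtain ⟨h1, h2, h3⟩ := (Finset.mem_filter.mp hx).2
      refine (bip_count hp0 hp1 hch x.1 x.2 h1 (r * w) ?_).trans ?_
      · refine hs0.trans ?_
        gcongr
      · exact pow_le_pow_of_le_one hκ0.le hκ1.le (Nat.mul_le_mul h2 h3)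
    · rw [nsmul_eq_mul]
      apply mul_le_mul_of_nonneg_right _ (by positivity)
      have h1 := Finset.card_filter_le (Finset.univ : Finset (Finset (Fin n) × Finset (Fin n)))
        (fun x => Disjoint x.1 x.2 ∧ s1 ≤ x.1.card ∧ d ≤ x.2.card)
      rw [Finset.card_univ, Fintype.card_prod, Fintype.card_finset, Fintype.card_fin,
        ← mul_pow] at h1
      exact_mod_cast h1
  have hcardu : ∀ u, M - 1 ≤ (J1.filter (fun i => ∀ a, T i a ≠ u)).card := by
    intro u
    have h1 := Finset.card_filter_add_card_filter_not (s := J1) (fun i => ∀ a, T i a ≠ u)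
    have h2 : (J1.filter (fun i => ¬ ∀ a, T i a ≠ u)).card ≤ 1 := by
      rw [Finset.card_le_one]
      intro i hi j hj
      have hi' := (Finset.mem_filter.mp hi).2
      have hj' := (Finset.mem_filter.mp hj).2
      push Not at hi' hj'
      obtain ⟨a, ha⟩ := hi'
      obtain ⟨b, hb⟩ := hj'
      exact (hT _ _ _ _ (ha.trans hb.symm)).1
    omega
  have hpC : Pr p bC ≤ n * κ ^ (M - 1) := by
    refine (Pr_biUnion_le hp0 hp1 _ _).trans ?_
    refine (Finset.sum_le_card_nsmul _ _ (κ ^ (M - 1)) ?_).trans ?_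
    · intro u _
      refine (good_count hp0 hp1 hch v u T hT hTv _ ?_).trans ?_
      · intro i hi; exact (Finset.mem_filter.mp hi).2
      · exact pow_le_pow_of_le_one hκ0.le hκ1.le (hcardu u)
    · simp
  have hpD : Pr p bD ≤ κ ^ M2 := by
    have := good_count hp0 hp1 hch v v T hT hTv J2 (fun i _ => hTv i)
    calc Pr p bD ≤ κ ^ J2.card := by convert this
      _ = κ ^ M2 := by rw [hJ2]
  have hsub : {ω : EdgeType n → Bool | ¬ ∃ (c : Fin (k * t) → Fin n)
      (L : Fin (k * t) → Set (Fin n)), IsStarFactor (graphOf ω) v (k * t) c L ∧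
        HasInducedCycleFactorOn (graphOf ω) k (Set.range c)} ⊆ ((bA ∪ bB) ∪ bC) ∪ bD := by
    intro ω hω
    by_contra hnot
    simp only [Set.mem_union, not_or] at hnot
    obtain ⟨⟨⟨hA, hB⟩, hC⟩, hD⟩ := hnot
    apply hω
    refine deterministic (graphOf ω) v (r * w) s1 d r t hr ?_ ?_ J1 J2 hJ T hT ?_ ?_ ?_ ?_
    · intro S hS
      by_contra hcon
      exact hA ⟨S, Finset.mem_filter.mpr ⟨Finset.mem_univ _, hS⟩, hcon⟩
    · intro S D h1 h2 h3
      by_contra hcon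
      exact hB ⟨(S, D), Finset.mem_filter.mpr ⟨Finset.mem_univ _, h1, h2, h3⟩, hcon⟩
    · intro u
      by_contra hcon
      apply hC
      refine ⟨u, Finset.mem_univ _, ?_⟩
      have h1 : ((J1.filter (fun i => ∀ a, T i a ≠ u)).filter
          (fun i => Good (graphOf ω) v T i u)).card ≤ s1 := by
        refine le_trans (Finset.card_le_card ?_) (not_le.mp hcon).le
        exact Finset.filter_subset_filter _ (Finset.filter_subset _ _)
      show (((J1.filter (fun i => ∀ a, T i a ≠ u)).filter
          (fun i => Good (graphOf ω) v T i u)).card : ℝ) ≤ _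
      have h2 : ((M:ℝ) - 1) ≤ ((J1.filter (fun i => ∀ a, T i a ≠ u)).card : ℝ) := by
        have := hcardu u
        have h3 : M ≤ (J1.filter (fun i => ∀ a, T i a ≠ u)).card + 1 := by omega
        have h4 : (M:ℝ) ≤ (J1.filter (fun i => ∀ a, T i a ≠ u)).card + 1 := by exact_mod_cast h3
        linarith
      calc _ ≤ (s1 : ℝ) := by exact_mod_cast h1
        _ ≤ θ * ((M:ℝ) - 1) := hs1
        _ ≤ _ := by gcongr
    · by_contra hcon
      apply hD
      show ((J2.filter (fun i => Good (graphOf ω) v T i v)).card : ℝ) ≤ θ * J2.card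
      rw [hJ2]
      refine le_trans ?_ ht
      exact_mod_cast (not_le.mp hcon).le
    · rw [hJ1]; exact hMt
    · rw [hJ1]; exact hcount
  have h1 := Pr_mono hp0 hp1 hsub
  have h2 := Pr_union_le hp0 hp1 ((bA ∪ bB) ∪ bC) bD
  have h3 := Pr_union_le hp0 hp1 (bA ∪ bB) bC
  have h4 := Pr_union_le hp0 hp1 bA bB
  linarith

end Bounds

section Asymp

lemma rhoSum_bound {r w i0 : ℕ} {b B z A : ℝ} (hb : 1 ≤ b) (hw : 0 < w) (hB : 0 ≤ B)
    (hbB : b ^ r ≤ B ^ 2) (hy : (r : ℝ) / w ≤ 1) (hz : B * ((r : ℝ) / w) ≤ z) (hz1 : z ≤ 1)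
    (hA : z ^ i0 ≤ A) :
    rhoSum r w b ≤ (r + 1) * (A + b ^ (i0 ^ 2) * ((r : ℝ) / w) ^ 2) := by
  have hw' : (0 : ℝ) < w := by exact_mod_cast hw
  set y : ℝ := (r : ℝ) / w with hydef
  have hy0 : 0 ≤ y := by positivity
  have hz0 : 0 ≤ z := le_trans (by positivity) hz
  have hA0 : 0 ≤ A := le_trans (by positivity) hA
  have hb0 : 0 < b := by linarith
  unfold rhoSum
  refine (Finset.sum_le_card_nsmul _ _ (A + b ^ (i0 ^ 2) * y ^ 2) ?_).trans ?_
  · intro i hi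
    have hir : i ≤ r := by have := Finset.mem_range.mp hi; omega
    split_ifs with h2
    · have h1 : (r.choose i : ℝ) ≤ (r : ℝ) ^ i := by exact_mod_cast Nat.choose_le_pow r i
      have hterm : (r.choose i : ℝ) * (b ^ (i.choose 2) * ((w : ℝ) ^ i)⁻¹)
          ≤ b ^ (i.choose 2) * y ^ i := by
        calc (r.choose i : ℝ) * (b ^ (i.choose 2) * ((w : ℝ) ^ i)⁻¹)
            ≤ (r : ℝ) ^ i * (b ^ (i.choose 2) * ((w : ℝ) ^ i)⁻¹) := by gcongr
          _ = b ^ (i.choose 2) * y ^ i := by rw [hydef, div_pow]; ring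
      refine hterm.trans ?_
      have hch : i.choose 2 * 2 = i * (i - 1) := by
        rw [Nat.choose_two_right]
        exact Nat.div_mul_cancel (Nat.even_mul_pred_self i).two_dvd
      by_cases hi0 : i < i0
      · have e1 : i.choose 2 ≤ i0 ^ 2 := by
          have : i * (i - 1) ≤ i0 * i0 := Nat.mul_le_mul hi0.le (by omega)
          nlinarith
        have e2 : b ^ (i.choose 2) ≤ b ^ (i0 ^ 2) := pow_le_pow_right₀ hb e1
        have e3 : y ^ i ≤ y ^ 2 := pow_le_pow_of_le_one hy0 hy h2
        calc b ^ (i.choose 2) * y ^ i ≤ b ^ (i0 ^ 2) * y ^ 2 := by gcongr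
          _ ≤ _ := by linarith
      · have e1 : b ^ (i.choose 2) ≤ B ^ i := by
          refine le_of_sq_le_sq ?_ (by positivity)
          calc (b ^ (i.choose 2)) ^ 2 = b ^ (i * (i - 1)) := by rw [← pow_mul, hch]
            _ ≤ b ^ (r * i) := pow_le_pow_right₀ hb (by
                rw [mul_comm r i]; exact Nat.mul_le_mul_left _ (by omega))
            _ = (b ^ r) ^ i := by rw [pow_mul]
            _ ≤ (B ^ 2) ^ i := by gcongr
            _ = (B ^ i) ^ 2 := by rw [← pow_mul, ← pow_mul, mul_comm]
        calc b ^ (i.choose 2) * y ^ i ≤ B ^ i * y ^ i := by gcongr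
          _ = (B * y) ^ i := by rw [mul_pow]
          _ ≤ z ^ i := by gcongr
          _ ≤ z ^ i0 := pow_le_pow_of_le_one hz0 hz1 (by omega)
          _ ≤ A := hA
          _ ≤ _ := by have : 0 ≤ b ^ (i0 ^ 2) * y ^ 2 := by positivity
                      linarith
    · simp only [zero_mul, mul_zero]; positivity
  · rw [Finset.card_range, nsmul_eq_mul]; push_cast; exact le_rfl

lemma ev_log_le (C a : ℝ) (j : ℕ) (ha : 0 < a) :
    ∀ᶠ n : ℕ in atTop, C * (Real.log n) ^ j ≤ (n : ℝ) ^ a := by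
  have h := isLittleO_log_rpow_rpow_atTop (j : ℝ) ha
  have h' := h.comp_tendsto tendsto_natCast_atTop_atTop
  have h2 := h'.bound (c := 1 / (|C| + 1)) (by positivity)
  filter_upwards [h2, eventually_ge_atTop 1] with n hn hn1
  have hn1' : (1 : ℝ) ≤ n := by exact_mod_cast hn1
  have hl : 0 ≤ Real.log n := Real.log_nonneg hn1'
  simp only [Function.comp, Real.rpow_natCast, Real.norm_eq_abs] at hn
  rw [abs_of_nonneg (show 0 ≤ Real.log n ^ j by positivity),
    abs_of_nonneg (show 0 ≤ (n : ℝ) ^ a by positivity)] at hn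
  rw [div_mul_eq_mul_div, le_div_iff₀ (by positivity)] at hn
  have : C * Real.log n ^ j ≤ |C| * Real.log n ^ j := by gcongr; exact le_abs_self C
  have h3 : 0 ≤ Real.log n ^ j := by positivity
  nlinarith

end Asymp

section Core

set_option maxHeartbeats 1000000 in
lemma core_params {θ e c b L x : ℝ} {n k : ℕ} (hk : 0 < k) (hθ : 0 < θ) (he : 0 < e) (he1 : e ≤ 1)
    (hc : c = θ * e / (8 * k)) (hL : 0 < L) (hx : 0 < x) (hN : (n : ℝ) = 2 * L * x)
    (h1 : 10 ≤ e * L) (h2 : 16 * k ≤ e * x) (h3 : 8 * x ≤ θ * n) (h3' : 4 * x ≤ n)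
    (hN4 : 4 * (k : ℝ) ≤ n) (h4 : 2 ≤ c * x) (h5 : 8 * L ≤ θ * c * x)
    (h6 : 32 / (θ * c) * L ^ 3 ≤ (n : ℝ) ^ (e / 20)) (h7 : 2 * L + 1 ≤ (n : ℝ) ^ (1 / 10 : ℝ))
    (hb : 1 < b) (hbL : b ^ L = n)
    (h8 : b ^ (⌈40 / e⌉₊ ^ 2) + 1 ≤ (n : ℝ) ^ (1 / 10 : ℝ)) :
    ∃ s1 d r t w M M2 : ℕ, 0 < r ∧ 0 < w ∧
      rhoSum r w b ≤ (n : ℝ) ^ (-(3 / 2) : ℝ) ∧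
      ((r * w : ℕ) : ℝ) ≤ θ * s1 ∧ 1 ≤ M ∧ (s1 : ℝ) ≤ θ * ((M : ℝ) - 1) ∧ (t : ℝ) ≤ θ * M2 ∧
      M ≤ t ∧ (M + M2) * k + 1 ≤ n ∧ n + d * r ≤ (k * (t - M)) * r ∧
      |((k * t : ℕ) : ℝ) - x| ≤ e * x ∧ e * x / (8 * k) ≤ (M : ℝ) - 1 ∧ c * x / 2 ≤ s1 ∧
      e * x / 16 ≤ d ∧ (n : ℝ) / (4 * k) ≤ M2 := by
  have hk' : (1 : ℝ) ≤ k := by exact_mod_cast hk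
  have hk0 : (0 : ℝ) < k := by linarith
  have hc0 : 0 < c := by rw [hc]; positivity
  have hn1 : (1 : ℝ) ≤ n := by linarith
  have hn0 : (0 : ℝ) < n := by linarith
  obtain ⟨t, htd⟩ : ∃ t : ℕ, t = ⌊(1 + e) * x / k⌋₊ := ⟨_, rfl⟩
  obtain ⟨M, hMd⟩ : ∃ t : ℕ, t = ⌊e * x / (4 * k)⌋₊ := ⟨_, rfl⟩
  obtain ⟨M2, hM2d⟩ : ∃ t : ℕ, t = ⌊(n : ℝ) / (2 * k)⌋₊ := ⟨_, rfl⟩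
  obtain ⟨d, hdd⟩ : ∃ t : ℕ, t = ⌊e * x / 8⌋₊ := ⟨_, rfl⟩
  obtain ⟨s1, hsd⟩ : ∃ t : ℕ, t = ⌊c * x⌋₊ := ⟨_, rfl⟩
  obtain ⟨r, hrd⟩ : ∃ t : ℕ, t = ⌊(2 - 2 * (e / 10)) * L⌋₊ := ⟨_, rfl⟩
  obtain ⟨w, hwd⟩ : ∃ t : ℕ, t = ⌊θ * s1 / r⌋₊ := ⟨_, rfl⟩
  have fl : ∀ (m : ℕ) (y : ℝ), 0 ≤ y → m = ⌊y⌋₊ → (m : ℝ) ≤ y ∧ y - 1 < m := by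
    intro m y hy h
    subst h
    exact ⟨Nat.floor_le hy, by have := Nat.lt_floor_add_one y; linarith⟩
  obtain ⟨t1, t2⟩ := fl _ _ (by positivity) htd
  obtain ⟨M1, M1'⟩ := fl _ _ (by positivity) hMd
  obtain ⟨M21, M22⟩ := fl _ _ (by positivity) hM2d
  obtain ⟨d1, d2⟩ := fl _ _ (by positivity) hdd
  obtain ⟨s11, s12⟩ := fl _ _ (by positivity) hsd
  have hγ : 0 ≤ (2 - 2 * (e / 10)) * L := mul_nonneg (by linarith) hL.le
  obtain ⟨r1, r2⟩ := fl _ _ hγ hrd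
  obtain ⟨w1, w2⟩ := fl _ _ (by positivity) hwd
  have hex : 2 ≤ e * x / (8 * k) := by rw [le_div_iff₀ (by positivity)]; linarith
  have hex2 : e * x / (4 * k) = 2 * (e * x / (8 * k)) := by field_simp; norm_num
  have hM' : e * x / (8 * k) ≤ (M : ℝ) - 1 := by linarith
  have hMpos : (1 : ℝ) ≤ M := by linarith
  have hcx : c * x = θ * (e * x / (8 * k)) := by rw [hc]; ring
  have hs1 : (s1 : ℝ) ≤ θ * ((M : ℝ) - 1) := by
    refine s11.trans ?_; rw [hcx]; gcongr
  have hn4k : 1 ≤ (n : ℝ) / (4 * k) := by rw [le_div_iff₀ (by positivity)]; linarith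
  have hn2k : (n : ℝ) / (2 * k) = 2 * (n / (4 * k)) := by field_simp; norm_num
  have hM2 : (n : ℝ) / (4 * k) ≤ M2 := by linarith
  have hrlow : (2 - 3 * (e / 10)) * L ≤ r := by linarith
  have hrup : (r : ℝ) ≤ 2 * L := by
    have := mul_pos he hL
    linarith
  have hL1 : 1 ≤ L := by
    have := mul_le_mul_of_nonneg_right he1 hL.le
    linarith
  have hr0 : (0 : ℝ) < r := lt_of_lt_of_le (mul_pos (by linarith) hL) hrlow
  have hs1low : c * x / 2 ≤ s1 := by linarith
  have hd : e * x / 16 ≤ d := by linarith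
  have hktu : (k : ℝ) * t ≤ (1 + e) * x := by
    have := mul_le_mul_of_nonneg_left t1 hk0.le
    rwa [mul_div_cancel₀ _ hk0.ne'] at this
  have hktl : (1 + e) * x - k ≤ (k : ℝ) * t := by
    have := mul_le_mul_of_nonneg_left t2.le hk0.le
    rw [mul_sub, mul_div_cancel₀ _ hk0.ne'] at this
    linarith
  have hkM : (k : ℝ) * M ≤ e * x / 4 := by
    have := mul_le_mul_of_nonneg_left M1 hk0.le
    have h' : (k : ℝ) * (e * x / (4 * k)) = e * x / 4 := by field_simp
    linarith
  have hkM2 : (k : ℝ) * M2 ≤ n / 2 := by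
    have := mul_le_mul_of_nonneg_left M21 hk0.le
    have h' : (k : ℝ) * (n / (2 * k)) = n / 2 := by field_simp
    linarith
  have hMt : M ≤ t := by
    rw [htd, hMd]
    apply Nat.floor_mono
    rw [div_le_div_iff₀ (by positivity) hk0]
    have q1 := mul_pos hx hk0
    have q2 := mul_pos (mul_pos he hx) hk0
    linarith
  -- the width
  have hwlow : θ * c * x / (8 * L) ≤ w := by
    have e1 : θ * c * x / (4 * L) ≤ θ * s1 / r := by
      rw [div_le_div_iff₀ (by positivity) hr0]
      have : θ * c * x * r ≤ θ * c * x * (2 * L) := by gcongr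
      have h' : θ * (c * x / 2) * (4 * L) ≤ θ * s1 * (4 * L) := by gcongr
      linarith
    have e2 : θ * c * x / (4 * L) = 2 * (θ * c * x / (8 * L)) := by field_simp; norm_num
    have e3 : 1 ≤ θ * c * x / (8 * L) := by rw [le_div_iff₀ (by positivity)]; linarith
    linarith
  have hw0 : (0 : ℝ) < w := lt_of_lt_of_le (by positivity) hwlow
  have hy : (r : ℝ) / w ≤ (n : ℝ) ^ (e / 20 - 1) := by
    calc (r : ℝ) / w ≤ (2 * L) / (θ * c * x / (8 * L)) := by gcongr
      _ = (32 / (θ * c) * L ^ 3) / n := by rw [hN]; field_simp; norm_num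
      _ ≤ (n : ℝ) ^ (e / 20) / n := by gcongr
      _ = _ := by rw [Real.rpow_sub_one hn0.ne']
  have hy1 : (r : ℝ) / w ≤ 1 := hy.trans (Real.rpow_le_one_of_one_le_of_nonpos hn1 (by linarith))
  have hbr : b ^ r ≤ ((n : ℝ) ^ (1 - e / 10)) ^ 2 := by
    calc b ^ r = b ^ (r : ℝ) := (Real.rpow_natCast b r).symm
      _ ≤ b ^ ((2 - 2 * (e / 10)) * L) := Real.rpow_le_rpow_of_exponent_le hb.le r1
      _ = (b ^ L) ^ (2 - 2 * (e / 10)) := by rw [mul_comm, Real.rpow_mul (by linarith)]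
      _ = (n : ℝ) ^ (2 - 2 * (e / 10)) := by rw [hbL]
      _ = _ := by rw [← Real.rpow_natCast, ← Real.rpow_mul hn0.le]; congr 1; push_cast; ring
  have hz : (n : ℝ) ^ (1 - e / 10) * ((r : ℝ) / w) ≤ (n : ℝ) ^ (-(e / 20)) := by
    calc (n : ℝ) ^ (1 - e / 10) * ((r : ℝ) / w)
        ≤ (n : ℝ) ^ (1 - e / 10) * (n : ℝ) ^ (e / 20 - 1) := by gcongr
      _ = _ := by rw [← Real.rpow_add hn0]; congr 1; ring
  have hA : ((n : ℝ) ^ (-(e / 20))) ^ ⌈40 / e⌉₊ ≤ (n : ℝ) ^ (-2 : ℝ) := by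
    rw [← Real.rpow_natCast, ← Real.rpow_mul hn0.le]
    apply Real.rpow_le_rpow_of_exponent_le hn1
    have : 40 / e ≤ (⌈40 / e⌉₊ : ℝ) := Nat.le_ceil _
    have h' : e / 20 * (40 / e) ≤ e / 20 * (⌈40 / e⌉₊ : ℝ) := by gcongr
    have h'' : e / 20 * (40 / e) = 2 := by field_simp; norm_num
    linarith
  have hrho := rhoSum_bound hb.le (by exact_mod_cast hw0) (by positivity) hbr hy1 hz
    (Real.rpow_le_one_of_one_le_of_nonpos hn1 (by linarith)) hA
  have hrho2 : rhoSum r w b ≤ (n : ℝ) ^ (-(3 / 2) : ℝ) := by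
    refine hrho.trans ?_
    have g1 : ((r : ℝ) / w) ^ 2 ≤ (n : ℝ) ^ (-(19 / 10) : ℝ) := by
      calc ((r : ℝ) / w) ^ 2 ≤ ((n : ℝ) ^ (e / 20 - 1)) ^ 2 := by gcongr
        _ = (n : ℝ) ^ ((e / 20 - 1) * 2) := by
            rw [← Real.rpow_natCast, ← Real.rpow_mul hn0.le]; norm_num
        _ ≤ _ := Real.rpow_le_rpow_of_exponent_le hn1 (by linarith)
    have g2 : (n : ℝ) ^ (-2 : ℝ) ≤ (n : ℝ) ^ (-(19 / 10) : ℝ) :=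
      Real.rpow_le_rpow_of_exponent_le hn1 (by norm_num)
    have g3 : (0 : ℝ) ≤ b ^ (⌈40 / e⌉₊ ^ 2) := by positivity
    calc ((r : ℝ) + 1) * ((n : ℝ) ^ (-2 : ℝ) + b ^ (⌈40 / e⌉₊ ^ 2) * ((r : ℝ) / w) ^ 2)
        ≤ (n : ℝ) ^ (1 / 10 : ℝ) * ((n : ℝ) ^ (-(19 / 10) : ℝ)
            + b ^ (⌈40 / e⌉₊ ^ 2) * (n : ℝ) ^ (-(19 / 10) : ℝ)) := by
          have : (r : ℝ) + 1 ≤ (n : ℝ) ^ (1 / 10 : ℝ) := by linarith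
          gcongr
      _ = (n : ℝ) ^ (1 / 10 : ℝ) * ((b ^ (⌈40 / e⌉₊ ^ 2) + 1) * (n : ℝ) ^ (-(19 / 10) : ℝ)) := by
          ring
      _ ≤ (n : ℝ) ^ (1 / 10 : ℝ) * ((n : ℝ) ^ (1 / 10 : ℝ) * (n : ℝ) ^ (-(19 / 10) : ℝ)) := by
          gcongr
      _ = (n : ℝ) ^ (-(17 / 10) : ℝ) := by
          rw [← Real.rpow_add hn0, ← Real.rpow_add hn0]; norm_num
      _ ≤ _ := Real.rpow_le_rpow_of_exponent_le hn1 (by norm_num)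
  refine ⟨s1, d, r, t, w, M, M2, by exact_mod_cast hr0, by exact_mod_cast hw0, hrho2, ?_,
    by exact_mod_cast hMpos, hs1, ?_, hMt, ?_, ?_, ?_, hM', hs1low, hd, hM2⟩
  · push_cast
    have := mul_le_mul_of_nonneg_left w1 hr0.le
    rwa [mul_div_cancel₀ _ hr0.ne'] at this
  · have : (k : ℝ) * t ≤ k * (θ * M2) := by
      have a1 : (k : ℝ) * (θ * (n / (4 * k))) ≤ k * (θ * M2) := by gcongr
      have a2 : (k : ℝ) * (θ * (n / (4 * k))) = θ * n / 4 := by field_simp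
      have a3 := mul_le_mul_of_nonneg_right he1 hx.le
      linarith
    exact le_of_mul_le_mul_left this hk0
  · have : (((M + M2) * k + 1 : ℕ) : ℝ) ≤ n := by
      push_cast
      have a3 := mul_le_mul_of_nonneg_right he1 hx.le
      linarith
    exact_mod_cast this
  · have : ((n + d * r : ℕ) : ℝ) ≤ ((k * (t - M) * r : ℕ) : ℝ) := by
      push_cast [Nat.cast_sub hMt]
      have a1 : (1 + e / 2) * x ≤ k * ((t : ℝ) - M) - d := by linarith
      have a2 : (1 + e / 2) * x * ((2 - 3 * (e / 10)) * L) ≤ (k * ((t : ℝ) - M) - d) * r := by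
        apply mul_le_mul a1 hrlow (mul_nonneg (by linarith) hL.le)
        exact le_trans (by positivity) a1
      have a3 : 0 ≤ L * x := by positivity
      have a4 : 2 * L * x ≤ (1 + e / 2) * x * ((2 - 3 * (e / 10)) * L) := by
        have : (2 : ℝ) ≤ (1 + e / 2) * (2 - 3 * (e / 10)) := by
          have := mul_le_mul_of_nonneg_left he1 he.le
          linarith
        have := mul_le_mul_of_nonneg_right this a3
        linarith
      linarith
    exact_mod_cast this
  · push_cast
    rw [abs_le]
    constructor <;> linarith

end Core

section Final

lemma kpow_exp {κ : ℝ} (hκ0 : 0 < κ) (j : ℕ) : κ ^ j = Real.exp (-(-Real.log κ * j)) := by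
  rw [neg_mul, neg_neg, mul_comm, Real.exp_nat_mul, Real.exp_log hκ0]

lemma tail_bound {κ β e c L x : ℝ} {n k s1 d M M2 : ℕ} (hk : 0 < k) (hκ0 : 0 < κ) (hκ1 : κ < 1)
    (he : 0 < e) (hc0 : 0 < c) (hL : 1 ≤ L) (hx : 0 < x) (hN : (n : ℝ) = 2 * L * x)
    (hlog : Real.log n = β * L) (hN144 : (144 : ℝ) ≤ n)
    (hxL1 : 192 / (-Real.log κ * c * e) * L ≤ x)
    (hxL2 : 2 * β * (8 * k) / (-Real.log κ * e) * L ≤ x)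
    (hxL3 : β * (4 * k) / (-Real.log κ) * L ≤ x)
    (hM1 : 1 ≤ M)
    (hM : e * x / (8 * k) ≤ (M : ℝ) - 1) (hs : c * x / 2 ≤ s1)
    (hd : e * x / 16 ≤ d) (hM2 : (n : ℝ) / (4 * k) ≤ M2) :
    2 ^ n * Real.exp (-(1 / (4 * (n : ℝ) ^ (-(3 / 2) : ℝ))) + 1 / 2) + 4 ^ n * κ ^ (s1 * d)
      + n * κ ^ (M - 1) + κ ^ M2 ≤ 4 * (n : ℝ)⁻¹ := by
  have hk0 : (0 : ℝ) < k := by exact_mod_cast hk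
  have hn0 : (0 : ℝ) < n := by linarith
  have hlam : 0 < -Real.log κ := by have := Real.log_neg hκ0 hκ1; linarith
  obtain ⟨lam, hlamd⟩ : ∃ lam, lam = -Real.log κ := ⟨_, rfl⟩
  rw [← hlamd] at hlam hxL1 hxL2 hxL3
  have hlogN : Real.log n ≤ n := (Real.log_le_sub_one_of_pos hn0).trans (by linarith)
  have hinv : (n : ℝ)⁻¹ = Real.exp (-Real.log n) := by rw [Real.exp_neg, Real.exp_log hn0]
  have h2e : (2 : ℝ) ≤ Real.exp 1 := by have := Real.add_one_le_exp (1 : ℝ); linarith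
  have T1 : 2 ^ n * Real.exp (-(1 / (4 * (n : ℝ) ^ (-(3 / 2) : ℝ))) + 1 / 2) ≤ (n : ℝ)⁻¹ := by
    calc 2 ^ n * Real.exp (-(1 / (4 * (n : ℝ) ^ (-(3 / 2) : ℝ))) + 1 / 2)
        ≤ (Real.exp 1) ^ n * Real.exp (-(1 / (4 * (n : ℝ) ^ (-(3 / 2) : ℝ))) + 1 / 2) := by gcongr
      _ = Real.exp (n + (-(1 / (4 * (n : ℝ) ^ (-(3 / 2) : ℝ))) + 1 / 2)) := by
          rw [← Real.exp_nat_mul, ← Real.exp_add, mul_one]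
      _ ≤ Real.exp (-Real.log n) := by
          apply Real.exp_le_exp.mpr
          have g : 1 / (4 * (n : ℝ) ^ (-(3 / 2) : ℝ)) = (n * Real.sqrt n) / 4 := by
            rw [Real.rpow_neg hn0.le, show (3 / 2 : ℝ) = 1 + 1 / 2 by norm_num,
              Real.rpow_add hn0, Real.rpow_one, ← Real.sqrt_eq_rpow]
            field_simp
          have g2 : (12 : ℝ) ≤ Real.sqrt n := Real.le_sqrt_of_sq_le (by linarith)
          have g3 : (n : ℝ) * 12 ≤ n * Real.sqrt n := by gcongr
          rw [g]; linarith
      _ = _ := hinv.symm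
  have T2 : 4 ^ n * κ ^ (s1 * d) ≤ (n : ℝ)⁻¹ := by
    have hx2 : 192 * L ≤ lam * c * e * x := by
      rw [div_mul_eq_mul_div, div_le_iff₀ (by positivity)] at hxL1; linarith
    have hsd : (c * x / 2) * (e * x / 16) ≤ (s1 : ℝ) * d := by gcongr
    have h4 : (4 : ℝ) ≤ Real.exp 2 := by
      have : Real.exp 2 = Real.exp 1 * Real.exp 1 := by rw [← Real.exp_add]; norm_num
      nlinarith
    calc 4 ^ n * κ ^ (s1 * d) ≤ (Real.exp 2) ^ n * κ ^ (s1 * d) := by gcongr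
      _ = Real.exp (n * 2 + -(lam * ((s1 * d : ℕ) : ℝ))) := by
          rw [kpow_exp hκ0, ← Real.exp_nat_mul, ← Real.exp_add, hlamd]
      _ ≤ Real.exp (-Real.log n) := by
          apply Real.exp_le_exp.mpr
          push_cast
          have a1 : lam * ((c * x / 2) * (e * x / 16)) ≤ lam * ((s1 : ℝ) * d) := by gcongr
          have a2 : 192 * L * x ≤ lam * c * e * x * x := by gcongr
          linarith
      _ = _ := hinv.symm
  have T3 : n * κ ^ (M - 1) ≤ (n : ℝ)⁻¹ := by
    calc n * κ ^ (M - 1) = Real.exp (Real.log n + -(lam * ((M - 1 : ℕ) : ℝ))) := by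
          rw [kpow_exp hκ0, Real.exp_add, Real.exp_log hn0, hlamd]
      _ ≤ Real.exp (-Real.log n) := by
          apply Real.exp_le_exp.mpr
          push_cast [Nat.cast_sub hM1]
          have a1 : lam * (e * x / (8 * k)) ≤ lam * ((M : ℝ) - 1) := by gcongr
          rw [div_mul_eq_mul_div, div_le_iff₀ (by positivity)] at hxL2
          have a2 : 2 * β * L ≤ lam * (e * x / (8 * k)) := by
            rw [← mul_div_assoc, le_div_iff₀ (by positivity)]; linarith
          rw [hlog]; linarith
      _ = _ := hinv.symm
  have T4 : κ ^ M2 ≤ (n : ℝ)⁻¹ := by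
    calc κ ^ M2 = Real.exp (-(lam * (M2 : ℝ))) := by rw [kpow_exp hκ0, hlamd]
      _ ≤ Real.exp (-Real.log n) := by
          apply Real.exp_le_exp.mpr
          have a1 : lam * ((n : ℝ) / (4 * k)) ≤ lam * M2 := by gcongr
          rw [div_mul_eq_mul_div, div_le_iff₀ (by positivity)] at hxL3
          have a3 : x ≤ n := by rw [hN]; nlinarith
          have a4 : x * lam ≤ n * lam := by gcongr
          have a2 : β * L ≤ lam * ((n : ℝ) / (4 * k)) := by
            rw [← mul_div_assoc, le_div_iff₀ (by positivity)]; linarith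
          rw [hlog]; linarith
      _ = _ := hinv.symm
  linarith

lemma main_bound (p : ℝ) (hp0 : 0 < p) (hp1 : p < 1) (k : ℕ) [NeZero k] (ε : ℝ) (hε : 0 < ε) :
    ∀ᶠ n : ℕ in atTop, ∀ v : Fin n, ∃ ℓ : ℕ,
      |(ℓ : ℝ) - n / (2 * Real.logb (1 / (1 - p)) n)|
            ≤ ε * (n / (2 * Real.logb (1 / (1 - p)) n)) ∧
      Pr p {ω : EdgeType n → Bool | ¬ ∃ (c : Fin ℓ → Fin n) (L : Fin ℓ → Set (Fin n)),
        IsStarFactor (graphOf ω) v ℓ c L ∧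
        HasInducedCycleFactorOn (graphOf ω) k (Set.range c)} ≤ 4 * (n : ℝ)⁻¹ := by
  have hk : 0 < k := Nat.pos_of_ne_zero (NeZero.ne k)
  have hk0 : (0 : ℝ) < k := by exact_mod_cast hk
  have hq : 0 < 1 - p := by linarith
  have hb : 1 < 1 / (1 - p) := by rw [lt_div_iff₀ hq]; linarith
  obtain ⟨b, hbd⟩ : ∃ b, b = 1 / (1 - p) := ⟨_, rfl⟩
  rw [← hbd] at hb
  have hβ : 0 < Real.log b := Real.log_pos hb
  obtain ⟨β, hβd⟩ : ∃ β, β = Real.log b := ⟨_, rfl⟩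
  rw [← hβd] at hβ
  have hmin : 0 < min p (1 - p) := lt_min hp0 hq
  have hmin1 : min p (1 - p) ≤ 1 := (min_le_left _ _).trans hp1.le
  obtain ⟨θ, hθ, κ, hκ0, hκ1, hch⟩ := chernoff (p := p)
    (δ := (min p (1 - p)) ^ ((k + 2) ^ 2)) hp0 hp1 (pow_pos hmin _) (pow_le_one₀ hmin.le hmin1)
  have hlam : 0 < -Real.log κ := by have := Real.log_neg hκ0 hκ1; linarith
  obtain ⟨e, hed⟩ : ∃ e, e = min ε 1 := ⟨_, rfl⟩
  have he : 0 < e := by rw [hed]; exact lt_min hε one_pos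
  have he1 : e ≤ 1 := by rw [hed]; exact min_le_right _ _
  have heε : e ≤ ε := by rw [hed]; exact min_le_left _ _
  obtain ⟨c, hc⟩ : ∃ c, c = θ * e / (8 * k) := ⟨_, rfl⟩
  have hc0 : 0 < c := by rw [hc]; positivity
  have hcast : Tendsto (fun n : ℕ => (n : ℝ)) atTop atTop := tendsto_natCast_atTop_atTop
  have hlogt : Tendsto (fun n : ℕ => Real.log n) atTop atTop := Real.tendsto_log_atTop.comp hcast
  have hLt : Tendsto (fun n : ℕ => Real.log n / β) atTop atTop := hlogt.atTop_div_const hβ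
  have evL : ∀ C : ℝ, ∀ᶠ n : ℕ in atTop, C ≤ Real.log n / β :=
    fun C => hLt.eventually_ge_atTop C
  have evN : ∀ C : ℝ, ∀ᶠ n : ℕ in atTop, C ≤ (n : ℝ) := fun C => hcast.eventually_ge_atTop C
  have evP : ∀ C : ℝ, ∀ᶠ n : ℕ in atTop, C ≤ (n : ℝ) ^ (1 / 10 : ℝ) := fun C =>
    ((tendsto_rpow_atTop (by norm_num : (0 : ℝ) < 1 / 10)).comp hcast).eventually_ge_atTop C
  have evX : ∀ C : ℝ, ∀ᶠ n : ℕ in atTop,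
      C * (Real.log n / β) ≤ (n : ℝ) / (2 * (Real.log n / β)) := by
    intro C
    filter_upwards [ev_log_le (2 * C / β ^ 2) 1 2 one_pos, evL 1] with n h1 h2
    rw [Real.rpow_one] at h1
    rw [le_div_iff₀ (by linarith)]
    calc C * (Real.log n / β) * (2 * (Real.log n / β)) = 2 * C / β ^ 2 * Real.log n ^ 2 := by
          field_simp
      _ ≤ n := h1
  filter_upwards [evL 1, evL (10 / e), evL (4 / θ), evL 2, evN 144, evN (4 * k),
    evX (16 * k / e), evX (2 / c), evX (8 / (θ * c)), evX (192 / (-Real.log κ * c * e)),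
    evX (2 * β * (8 * k) / (-Real.log κ * e)), evX (β * (4 * k) / (-Real.log κ)),
    ev_log_le (32 / (θ * c) / β ^ 3) (e / 20) 3 (by positivity),
    ev_log_le (3 / β) (1 / 10) 1 (by norm_num), evP (b ^ (⌈40 / e⌉₊ ^ 2) + 1)]
    with n l1 l2 l3 l4 n1 n2 x1 x2 x3 x4 x5 x6 y1 y2 y3
  intro v
  have hn0 : (0 : ℝ) < n := by linarith
  have hLeq : Real.logb (1 / (1 - p)) n = Real.log n / β := by
    rw [← hbd, hβd]; rfl
  rw [hLeq]
  obtain ⟨L, hLd⟩ : ∃ L, L = Real.log n / β := ⟨_, rfl⟩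
  have hlog : Real.log n = β * L := by rw [hLd]; field_simp
  rw [← hLd] at l1 l2 l3 l4 x1 x2 x3 x4 x5 x6 ⊢
  rw [hlog] at y1 y2
  obtain ⟨x, hxd⟩ : ∃ x, x = (n : ℝ) / (2 * L) := ⟨_, rfl⟩
  rw [← hxd] at x1 x2 x3 x4 x5 x6 ⊢
  have hL0 : 0 < L := by linarith
  have hx : 0 < x := by rw [hxd]; positivity
  have hN : (n : ℝ) = 2 * L * x := by rw [hxd]; field_simp
  have hbL : b ^ L = n := by
    rw [Real.rpow_def_of_pos (by linarith), ← hβd, ← hlog, Real.exp_log hn0]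
  have up : ∀ C : ℝ, 0 ≤ C → C * L ≤ x → C ≤ x := by
    intro C hC h
    have := mul_le_mul_of_nonneg_left l1 hC
    linarith
  have h1 : 10 ≤ e * L := by rw [div_le_iff₀ he] at l2; linarith
  have h2 : 16 * k ≤ e * x := by
    have := up _ (by positivity) x1
    rw [div_le_iff₀ he] at this; linarith
  have h3 : 8 * x ≤ θ * n := by
    rw [div_le_iff₀ hθ] at l3
    have := mul_le_mul_of_nonneg_right l3 hx.le
    rw [hN]; linarith
  have h3' : 4 * x ≤ n := by
    have := mul_le_mul_of_nonneg_right l4 hx.le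
    rw [hN]; linarith
  have h4 : 2 ≤ c * x := by
    have := up _ (by positivity) x2
    rw [div_le_iff₀ hc0] at this; linarith
  have h5 : 8 * L ≤ θ * c * x := by
    rw [div_mul_eq_mul_div, div_le_iff₀ (by positivity)] at x3; linarith
  have h6 : 32 / (θ * c) * L ^ 3 ≤ (n : ℝ) ^ (e / 20) := by
    refine le_of_eq_of_le ?_ y1
    field_simp
  have h7 : 2 * L + 1 ≤ (n : ℝ) ^ (1 / 10 : ℝ) := by
    have : 3 / β * (β * L) ^ 1 = 3 * L := by field_simp
    linarith
  obtain ⟨s1, d, r, t, w, M, M2, hr, hw, hrho, hs0, hM, hs1, ht, hMt, hnn, hcount, habs,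
    g1, g2, g3, g4⟩ := core_params hk hθ he he1 hc hL0 hx hN h1 h2 h3 h3' n2 h4 h5 h6 h7 hb hbL y3
  refine ⟨k * t, habs.trans (by gcongr), ?_⟩
  refine (finite_bound hp0 hp1 hκ0 hκ1 hθ hch v s1 d r t w M M2 ((n : ℝ) ^ (-(3 / 2) : ℝ))
    hr hw (by positivity) (by rw [← hbd]; exact hrho) hs0 hM hs1 ht hMt hnn hcount).trans ?_
  exact tail_bound hk hκ0 hκ1 he hc0 l1 hx hN hlog n1 x4 x5 x6 hM g1 g2 g3 g4

end Final

end RG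

/-- For fixed `p ∈ (0,1)` and `m ≥ 5`, whp `G(n,p)` has a
`1`-factor `{S_1,…,S_ℓ}` with `ℓ = (n/(2·log_{1/(1−p)} n))·(1+o(1))` whose set of
central vertices induces a subgraph containing an induced `C_{m−2}`-factor.
(Vertex `1` is the vertex `⟨0, _⟩ : Fin n`; the `o(1)` is rendered by `ε > 0`.) -/
theorem one_factor_with_cycle_factor (p : ℝ) (hp0 : 0 < p) (hp1 : p < 1)
    (m : ℕ) (hm : 5 ≤ m) (ε : ℝ) (hε : 0 < ε) :
    Tendsto (fun n : ℕ =>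
      erMeasure n p {ω | ∀ hn : 0 < n,
        ∃ (ℓ : ℕ) (c : Fin ℓ → Fin n) (L : Fin ℓ → Set (Fin n)),
          IsStarFactor (graphOf ω) ⟨0, hn⟩ ℓ c L ∧
          |(ℓ : ℝ) - n / (2 * Real.logb (1 / (1 - p)) n)|
            ≤ ε * (n / (2 * Real.logb (1 / (1 - p)) n)) ∧
          HasInducedCycleFactorOn (graphOf ω) (m - 2) (Set.range c)})
      atTop (nhds 1) := by
  haveI : NeZero (m - 2) := ⟨by omega⟩
  have hmain := RG.main_bound p hp0 hp1 (m - 2) ε hε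
  have hlim : Tendsto (fun n : ℕ => ENNReal.ofReal (1 - 4 * (n : ℝ)⁻¹)) atTop (nhds 1) := by
    have h0 : Tendsto (fun n : ℕ => 1 - 4 * (n : ℝ)⁻¹) atTop (nhds (1 - 4 * 0)) :=
      tendsto_const_nhds.sub (tendsto_inv_atTop_nhds_zero_nat.const_mul 4)
    have := ENNReal.tendsto_ofReal h0
    simpa using this
  refine tendsto_of_tendsto_of_tendsto_of_le_of_le' hlim tendsto_const_nhds ?_ ?_
  · filter_upwards [hmain, eventually_gt_atTop 0] with n h hn
    obtain ⟨ℓ, hℓ, hb⟩ := h ⟨0, hn⟩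
    rw [RG.erMeasure_eq n hp0 hp1, RG.Pr_compl]
    apply ENNReal.ofReal_le_ofReal
    have := RG.Pr_mono hp0 hp1 (A := {ω | ∀ hn : 0 < n,
        ∃ (ℓ : ℕ) (c : Fin ℓ → Fin n) (L : Fin ℓ → Set (Fin n)),
          IsStarFactor (graphOf ω) ⟨0, hn⟩ ℓ c L ∧
          |(ℓ : ℝ) - n / (2 * Real.logb (1 / (1 - p)) n)|
            ≤ ε * (n / (2 * Real.logb (1 / (1 - p)) n)) ∧
          HasInducedCycleFactorOn (graphOf ω) (m - 2) (Set.range c)}ᶜ)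
      (B := {ω : EdgeType n → Bool | ¬ ∃ (c : Fin ℓ → Fin n) (L : Fin ℓ → Set (Fin n)),
        IsStarFactor (graphOf ω) ⟨0, hn⟩ ℓ c L ∧
        HasInducedCycleFactorOn (graphOf ω) (m - 2) (Set.range c)}) (by
        intro ω hω hex
        obtain ⟨c, L, h1, h2⟩ := hex
        exact hω fun _ => ⟨ℓ, c, L, h1, hℓ, h2⟩)
    linarith
  · filter_upwards with n
    rw [RG.erMeasure_eq n hp0 hp1, RG.Pr_compl]
    have := RG.Pr_nonneg hp0 hp1 ({ω : EdgeType n → Bool | ∀ hn : 0 < n,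
        ∃ (ℓ : ℕ) (c : Fin ℓ → Fin n) (L : Fin ℓ → Set (Fin n)),
          IsStarFactor (graphOf ω) ⟨0, hn⟩ ℓ c L ∧
          |(ℓ : ℝ) - n / (2 * Real.logb (1 / (1 - p)) n)|
            ≤ ε * (n / (2 * Real.logb (1 / (1 - p)) n)) ∧
          HasInducedCycleFactorOn (graphOf ω) (m - 2) (Set.range c)}ᶜ)
    exact ENNReal.ofReal_le_one.mpr (by linarith)
end

section
/- Let p ∈ (0,1) be fixed, let m ≥ 5 be a fixed integer, and let ℓ = ℓ(n) be divisible by m−2 with c₁·n/ln n ≤ ℓ(n) ≤ c₂·n/ln n for some constants c₂ ≥ c₁ > 0. Then with high probability (as n→∞) the binomial random graph G(ℓ(n), p) contains an induced C_{m−2}-factor, i.e., its vertex set can be partitioned into ℓ(n)/(m−2) sets each inducing a cycle on m−2 vertices. -/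
open MeasureTheory Filter Real

section CoreArgument
open ProbabilityTheory

/-- The event `A` is determined by the coordinates in `S`. -/
def DetBy {ι : Type*} (S : Set ι) (A : Set (ι → Bool)) : Prop :=
  ∀ ω ω' : ι → Bool, (∀ e ∈ S, ω e = ω' e) → ω ∈ A → ω' ∈ A

lemma detBy_mono {ι : Type*} {S T : Set ι} {A : Set (ι → Bool)} (h : S ⊆ T) (hA : DetBy S A) :
    DetBy T A := fun ω ω' hh hω => hA ω ω' (fun e he => hh e (h he)) hω

lemma detBy_compl {ι : Type*} {S : Set ι} {A : Set (ι → Bool)} (hA : DetBy S A) :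
    DetBy S Aᶜ := fun ω ω' hh hω hω' => hω (hA ω' ω (fun e he => (hh e he).symm) hω')

lemma indep_two {ι : Type*} [Fintype ι] (ν : Measure Bool) [IsProbabilityMeasure ν]
    {S T : Set ι} (hST : Disjoint S T) {A B : Set (ι → Bool)} (hA : DetBy S A) (hB : DetBy T B) :
    (Measure.pi fun _ : ι => ν).real (A ∩ B) =
      (Measure.pi fun _ : ι => ν).real A * (Measure.pi fun _ : ι => ν).real B := by
  classical
  have h1 : iIndepFun (fun (i : ι) (ω : ι → Bool) => ω i) (Measure.pi fun _ : ι => ν) :=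
    iIndepFun_pi (X := fun _ x => x) (fun _ => aemeasurable_id)
  have h2 := h1.indepFun_finset S.toFinset T.toFinset (by simpa using hST)
    (fun i => measurable_pi_apply i)
  have key : ∀ (R : Set ι) (C : Set (ι → Bool)), DetBy R C →
      (fun (a : ι → Bool) (i : R.toFinset) => a i) ⁻¹'
        ((fun (a : ι → Bool) (i : R.toFinset) => a i) '' C) = C := by
    intro R C hC
    apply Set.Subset.antisymm _ (Set.subset_preimage_image _ _)
    rintro ω ⟨ω', hω', h⟩
    refine hC ω' ω (fun e he => ?_) hω'
    exact congrFun h ⟨e, by simpa using he⟩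
  have h3 := h2.measure_inter_preimage_eq_mul
    ((fun (a : ι → Bool) (i : S.toFinset) => a i) '' A)
    ((fun (a : ι → Bool) (i : T.toFinset) => a i) '' B)
    (Set.toFinite _).measurableSet (Set.toFinite _).measurableSet
  rw [key S A hA, key T B hB] at h3
  simp only [Measure.real, h3, ENNReal.toReal_mul]

lemma indep_many {ι β : Type*} [Fintype ι] (ν : Measure Bool) [IsProbabilityMeasure ν]
    (F : Finset β) (S : β → Set ι) (A : β → Set (ι → Bool))
    (hS : ∀ b ∈ F, ∀ b' ∈ F, b ≠ b' → Disjoint (S b) (S b')) (hA : ∀ b ∈ F, DetBy (S b) (A b)) :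
    (Measure.pi fun _ : ι => ν).real (⋂ b ∈ F, A b) =
      ∏ b ∈ F, (Measure.pi fun _ : ι => ν).real (A b) := by
  classical
  induction F using Finset.induction_on with
  | empty => simp
  | insert a F ha ih =>
    rw [Finset.prod_insert ha, Finset.set_biInter_insert]
    rw [indep_two ν (S := S a) (T := ⋃ b ∈ F, S b) _ (hA a (by simp))]
    · rw [ih]
      · intro b hb b' hb' h
        exact hS b (by simp [hb]) b' (by simp [hb']) h
      · intro b hb
        exact hA b (by simp [hb])
    · intro ω ω' hh hω
      simp only [Set.mem_iInter] at hω ⊢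
      intro b hb
      refine hA b (by simp [hb]) ω ω' (fun e he => hh e ?_) (hω b hb)
      simp only [Set.mem_iUnion]
      exact ⟨b, hb, he⟩
    · simp only [Set.disjoint_iUnion_right]
      intro b hb
      exact hS a (by simp) b (by simp [hb]) (fun h => ha (h ▸ hb))

lemma prob_coord {ι : Type*} [Fintype ι] (ν : Measure Bool) [IsProbabilityMeasure ν]
    (e : ι) (b : Bool) :
    (Measure.pi fun _ : ι => ν).real {ω | ω e = b} = ν.real {b} := by
  have h := (measurePreserving_eval (fun _ : ι => ν) e).measure_preimage
    (s := {b}) (by simp : MeasurableSet ({b} : Set Bool)).nullMeasurableSet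
  simp only [Measure.real, ← h]
  rfl

/-- Numerical estimate for a single term in the union bound. -/
lemma term_bound (t s : ℕ) (hs1 : 1 ≤ s) (hst : s ≤ t) (y : ℝ) (hy0 : 0 ≤ y) (hy1 : y ≤ 1)
    (hx : (t : ℝ) ^ 2 * y ^ (t / 2) ≤ 1) :
    (t.choose s : ℝ) * (t.choose (t + 1 - s)) * y ^ (s * (t + 1 - s)) ≤
      (t : ℝ) ^ 2 * y ^ (t / 2) := by
  obtain ⟨u, hu⟩ : ∃ u, t + 1 - s = u := ⟨_, rfl⟩
  rw [hu]
  have hx0 : 0 ≤ (t : ℝ) ^ 2 * y ^ (t / 2) := by positivity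
  have ht1 : (1 : ℝ) ≤ t := by exact_mod_cast hs1.trans hst
  have main : ∀ a : ℕ, 1 ≤ a → (t.choose s : ℝ) ≤ (t : ℝ) ^ a → (t.choose u : ℝ) ≤ (t : ℝ) ^ a →
      (t / 2) * a ≤ s * u → (t.choose s : ℝ) * (t.choose u) * y ^ (s * u) ≤
      (t : ℝ) ^ 2 * y ^ (t / 2) := by
    intro a ha h1 h2 h3
    calc (t.choose s : ℝ) * (t.choose u) * y ^ (s * u)
        ≤ (t : ℝ) ^ a * (t : ℝ) ^ a * y ^ ((t / 2) * a) := by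
          gcongr ?_ * ?_ * ?_
          exact pow_le_pow_of_le_one hy0 hy1 h3
      _ = ((t : ℝ) ^ 2 * y ^ (t / 2)) ^ a := by
          rw [mul_pow, ← pow_mul, ← pow_mul]; ring
      _ ≤ ((t : ℝ) ^ 2 * y ^ (t / 2)) ^ 1 := pow_le_pow_of_le_one hx0 hx ha
      _ = _ := pow_one _
  have cle : ∀ r : ℕ, (t.choose r : ℝ) ≤ (t : ℝ) ^ r := fun r => by
    exact_mod_cast Nat.choose_le_pow t r
  have cle' : ∀ r a : ℕ, r ≤ t → t - r ≤ a → (t.choose r : ℝ) ≤ (t : ℝ) ^ a := fun r a hr h => by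
    rw [← Nat.choose_symm hr]
    exact (cle _).trans (pow_le_pow_right₀ ht1 h)
  rcases le_total s u with h | h
  · apply main s hs1 (cle s) (cle' u s (by omega) (by omega))
    rw [mul_comm]
    exact Nat.mul_le_mul_left _ (by omega)
  · apply main u (by omega) (cle' s u hst (by omega)) (cle u)
    exact Nat.mul_le_mul_right _ (by omega)

/-- A relation with no perfect matching has a Hall obstruction. -/
lemma hall_obstruction {t : ℕ} (R : Fin t → Fin t → Prop)
    (h : ¬ ∃ τ : Equiv.Perm (Fin t), ∀ i, R i (τ i)) :
    ∃ s ∈ Finset.Icc 1 t, ∃ P ∈ (Finset.univ : Finset (Fin t)).powersetCard s ×ˢ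
      (Finset.univ : Finset (Fin t)).powersetCard (t + 1 - s),
      ∀ b ∈ P.1 ×ˢ P.2, ¬ R b.1 b.2 := by
  classical
  by_contra hcon
  push Not at hcon
  apply h
  have := (Fintype.all_card_le_filter_rel_iff_exists_injective R).1 ?_
  · obtain ⟨f, hf, hR⟩ := this
    exact ⟨Equiv.ofBijective f (Finite.injective_iff_bijective.1 hf), hR⟩
  · intro A
    by_contra hA
    have hA : (Finset.univ.filter fun b => ∃ a ∈ A, R a b).card < A.card := by
      refine lt_of_le_of_lt (le_of_eq ?_) (not_le.1 hA)
      congr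
    have hAt : A.card ≤ t := by simpa using A.card_le_univ
    have hc : (Finset.univ.filter fun b => ∃ a ∈ A, R a b)ᶜ.card =
      t - (Finset.univ.filter fun b => ∃ a ∈ A, R a b).card := by
      rw [Finset.card_compl]; simp
    obtain ⟨U, hU, hUc⟩ := Finset.exists_subset_card_eq
      (s := (Finset.univ.filter fun b => ∃ a ∈ A, R a b)ᶜ) (n := t + 1 - A.card) (by omega)
    obtain ⟨b, hb, hRb⟩ := hcon A.card (Finset.mem_Icc.2 ⟨by omega, hAt⟩) (A, U) (by
      simp [Finset.mem_powersetCard, hUc])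
    rw [Finset.mem_product] at hb
    have := hU hb.2
    simp only [Finset.mem_compl, Finset.mem_filter, Finset.mem_univ, true_and] at this
    exact this ⟨b.1, hb.1, hRb⟩

/-- A random bipartite relation with independent entries has a perfect matching. -/
lemma matching_prob {ι : Type*} [Fintype ι] (ν : Measure Bool) [IsProbabilityMeasure ν]
    {t : ℕ} (R : Fin t → Fin t → Set (ι → Bool)) (S : Fin t × Fin t → Set ι)
    (hS : ∀ b b', b ≠ b' → Disjoint (S b) (S b')) (hR : ∀ b, DetBy (S b) (R b.1 b.2))
    (q : ℝ) (hq0 : 0 ≤ q) (hq1 : q ≤ 1)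
    (hq : ∀ i x, q ≤ (Measure.pi fun _ : ι => ν).real (R i x))
    (hx : (t : ℝ) ^ 2 * (1 - q) ^ (t / 2) ≤ 1) :
    (Measure.pi fun _ : ι => ν).real {ω | ¬ ∃ τ : Equiv.Perm (Fin t), ∀ i, ω ∈ R i (τ i)} ≤
      t * ((t : ℝ) ^ 2 * (1 - q) ^ (t / 2)) := by
  classical
  set μ := Measure.pi fun _ : ι => ν
  have hsub : {ω | ¬ ∃ τ : Equiv.Perm (Fin t), ∀ i, ω ∈ R i (τ i)} ⊆
      ⋃ s ∈ Finset.Icc 1 t, ⋃ P ∈ (Finset.univ : Finset (Fin t)).powersetCard s ×ˢ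
      (Finset.univ : Finset (Fin t)).powersetCard (t + 1 - s),
      ⋂ b ∈ P.1 ×ˢ P.2, (R b.1 b.2)ᶜ := by
    intro ω hω
    obtain ⟨s, hs, P, hP, h⟩ := hall_obstruction (fun i x => ω ∈ R i x) hω
    simp only [Set.mem_iUnion, Set.mem_iInter]
    exact ⟨s, hs, P, hP, h⟩
  have hq' : ∀ b : Fin t × Fin t, μ.real (R b.1 b.2)ᶜ ≤ 1 - q := by
    intro b
    rw [probReal_compl_eq_one_sub (Set.toFinite _).measurableSet]
    linarith [hq b.1 b.2]
  calc _ ≤ μ.real _ := measureReal_mono hsub (measure_ne_top _ _)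
    _ ≤ ∑ s ∈ Finset.Icc 1 t, _ := measureReal_biUnion_finset_le _ _
    _ ≤ ∑ s ∈ Finset.Icc 1 t, ((t : ℝ) ^ 2 * (1 - q) ^ (t / 2)) := by
        refine Finset.sum_le_sum fun s hs => ?_
        rw [Finset.mem_Icc] at hs
        refine (measureReal_biUnion_finset_le _ _).trans ?_
        refine le_trans ?_ (term_bound t s hs.1 hs.2 (1 - q) (by linarith) (by linarith) hx)
        calc _ ≤ ∑ P ∈ (Finset.univ : Finset (Fin t)).powersetCard s ×ˢ
              (Finset.univ : Finset (Fin t)).powersetCard (t + 1 - s),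
              (1 - q) ^ (s * (t + 1 - s)) := by
              refine Finset.sum_le_sum fun P hP => ?_
              rw [Finset.mem_product, Finset.mem_powersetCard, Finset.mem_powersetCard] at hP
              rw [indep_many ν _ S (fun b => (R b.1 b.2)ᶜ) (fun b _ b' _ h => hS b b' h)
                (fun b _ => detBy_compl (hR b))]
              refine (Finset.prod_le_prod (fun _ _ => measureReal_nonneg)
                (fun b _ => hq' b)).trans ?_
              rw [Finset.prod_const, Finset.card_product, hP.1.2, hP.2.2]
          _ = _ := by
              rw [Finset.sum_const, Finset.card_product, Finset.card_powersetCard,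
                Finset.card_powersetCard]
              simp
    _ = _ := by simp

/-- The event that `σ` describes correct partial tuples on the first `j` columns. -/
def validEv {ι : Type*} {k t : ℕ} (ed : Fin k → Fin t → Fin k → Fin t → ι)
    (c : Fin k → Fin k → Bool) (j : ℕ) (σ : Fin k → Equiv.Perm (Fin t)) : Set (ι → Bool) :=
  {ω | ∀ i, ∀ r s : Fin k, r < s → s.val < j → ω (ed r (σ r i) s (σ s i)) = c r s}

lemma stage_prob {ι : Type*} [Fintype ι] (ν : Measure Bool) [IsProbabilityMeasure ν]
    {k t : ℕ} (ed : Fin k → Fin t → Fin k → Fin t → ι)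
    (hed : ∀ r i s x r' i' s' x', r < s → r' < s' → ed r i s x = ed r' i' s' x' →
      r = r' ∧ i = i' ∧ s = s' ∧ x = x')
    (c : Fin k → Fin k → Bool) (a : ℝ) (ha0 : 0 ≤ a) (ha1 : a ≤ 1) (ha : ∀ b, a ≤ ν.real {b})
    (hx : (t : ℝ) ^ 2 * (1 - a ^ k) ^ (t / 2) ≤ 1) (j : Fin k) (σ : Fin k → Equiv.Perm (Fin t)) :
    (Measure.pi fun _ : ι => ν).real {ω | ¬ ∃ τ : Equiv.Perm (Fin t), ∀ i,
      ω ∈ {ω : ι → Bool | ∀ r, r < j → ω (ed r (σ r i) j (τ i)) = c r j}} ≤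
      t * ((t : ℝ) ^ 2 * (1 - a ^ k) ^ (t / 2)) := by
  classical
  refine matching_prob ν (fun i x => {ω : ι → Bool | ∀ r, r < j → ω (ed r (σ r i) j x) = c r j})
    (fun b => {e | ∃ r, r < j ∧ e = ed r (σ r b.1) j b.2}) ?_ ?_ (a ^ k) (by positivity)
    (pow_le_one₀ ha0 ha1) ?_ hx
  · intro b b' hb
    rw [Set.disjoint_left]
    rintro e ⟨r, hr, rfl⟩ ⟨r', hr', h⟩
    obtain ⟨h1, h2, -, h4⟩ := hed _ _ _ _ _ _ _ _ hr hr' h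
    subst h1
    exact hb (Prod.ext ((σ r).injective h2) h4)
  · rintro b ω ω' h hω r hr
    rw [← h _ ⟨r, hr, rfl⟩]
    exact hω r hr
  · intro i x
    have hset : {ω : ι → Bool | ∀ r, r < j → ω (ed r (σ r i) j x) = c r j} =
        ⋂ r ∈ Finset.univ.filter (fun r => r < j), {ω | ω (ed r (σ r i) j x) = c r j} := by
      ext ω; simp
    rw [hset, indep_many ν _ (fun r => {ed r (σ r i) j x})]
    · simp only [prob_coord]
      calc a ^ k ≤ a ^ (Finset.univ.filter (fun r => r < j)).card := by
            apply pow_le_pow_of_le_one ha0 ha1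
            simpa using Finset.card_le_univ (Finset.univ.filter (fun r => r < j))
        _ = ∏ r ∈ Finset.univ.filter (fun r => r < j), a := by simp
        _ ≤ _ := Finset.prod_le_prod (fun _ _ => ha0) (fun _ _ => ha _)
    · intro r hr r' hr' h
      rw [Set.disjoint_singleton]
      intro h'
      simp only [Finset.mem_filter, Finset.mem_univ, true_and] at hr hr'
      exact h (hed _ _ _ _ _ _ _ _ hr hr' h').1
    · intro r _ ω ω' h hω
      have := h _ rfl
      simp only [Set.mem_ofPred_eq] at hω ⊢
      rw [← this, hω]

/-- Averaging over a choice determined by coordinates independent of the bad events. -/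
lemma choice_prob {ι Θ : Type*} [Fintype ι] [Fintype Θ] (ν : Measure Bool)
    [IsProbabilityMeasure ν] (S : Set ι) (V B : Θ → Set (ι → Bool))
    (hV : ∀ σ, DetBy S (V σ)) (hB : ∀ σ, DetBy Sᶜ (B σ)) (δ : ℝ) (hδ0 : 0 ≤ δ)
    (hδ : ∀ σ, (Measure.pi fun _ : ι => ν).real (B σ) ≤ δ) :
    (Measure.pi fun _ : ι => ν).real {ω | (∃ σ, ω ∈ V σ) ∧ ∀ σ, ω ∈ V σ → ω ∈ B σ} ≤ δ := by
  classical
  set μ := Measure.pi fun _ : ι => ν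
  let f : (ι → Bool) → Option Θ := fun ω =>
    if h : ∃ σ, ω ∈ V σ then some h.choose else none
  have hf : ∀ ω σ, f ω = some σ → ω ∈ V σ := by
    intro ω σ h
    by_cases h' : ∃ σ, ω ∈ V σ
    · simp only [f, dif_pos h', Option.some.injEq] at h
      rw [← h]; exact h'.choose_spec
    · simp [f, dif_neg h'] at h
  have hfe : ∀ ω ω', (∀ e ∈ S, ω e = ω' e) → f ω = f ω' := by
    intro ω ω' h
    have : (fun σ => ω ∈ V σ) = (fun σ => ω' ∈ V σ) := by
      funext σ
      exact propext ⟨hV σ ω ω' h, hV σ ω' ω (fun e he => (h e he).symm)⟩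
    have hcong : ∀ P Q : Θ → Prop, P = Q →
      (if h : ∃ σ, P σ then some h.choose else none) =
        (if h : ∃ σ, Q σ then some h.choose else none) := by
      rintro P Q rfl; rfl
    exact hcong _ _ this
  have hdet : ∀ σ, DetBy S {ω | f ω = some σ} := by
    intro σ ω ω' h hω
    simp only [Set.mem_ofPred_eq] at hω ⊢
    rw [← hfe ω ω' h, hω]
  have hsub : {ω | (∃ σ, ω ∈ V σ) ∧ ∀ σ, ω ∈ V σ → ω ∈ B σ} ⊆
      ⋃ σ ∈ (Finset.univ : Finset Θ), ({ω | f ω = some σ} ∩ B σ) := by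
    rintro ω ⟨h1, h2⟩
    simp only [Set.mem_iUnion]
    exact ⟨h1.choose, Finset.mem_univ _, by
      show f ω = _
      simp only [f, dif_pos h1], h2 _ h1.choose_spec⟩
  calc _ ≤ μ.real _ := measureReal_mono hsub (measure_ne_top _ _)
    _ ≤ ∑ σ, μ.real ({ω | f ω = some σ} ∩ B σ) := measureReal_biUnion_finset_le _ _
    _ ≤ ∑ σ, μ.real {ω | f ω = some σ} * δ := by
        refine Finset.sum_le_sum fun σ _ => ?_
        rw [indep_two ν disjoint_compl_right (hdet σ) (hB σ)]
        exact mul_le_mul_of_nonneg_left (hδ σ) measureReal_nonneg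
    _ = μ.real (⋃ σ ∈ (Finset.univ : Finset Θ), {ω | f ω = some σ}) * δ := by
        rw [← Finset.sum_mul, measureReal_biUnion_finset]
        · intro σ _ σ' _ h
          rw [Function.onFun, Set.disjoint_left]
          intro ω h1 h2
          exact h (Option.some.inj (h1.symm.trans h2))
        · exact fun _ _ => (Set.toFinite _).measurableSet
    _ ≤ 1 * δ := mul_le_mul_of_nonneg_right measureReal_le_one hδ0
    _ = δ := one_mul _

lemma core_prob {ι : Type*} [Fintype ι] (ν : Measure Bool) [IsProbabilityMeasure ν]
    {k t : ℕ} (ed : Fin k → Fin t → Fin k → Fin t → ι)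
    (hed : ∀ r i s x r' i' s' x', r < s → r' < s' → ed r i s x = ed r' i' s' x' →
      r = r' ∧ i = i' ∧ s = s' ∧ x = x')
    (c : Fin k → Fin k → Bool) (a : ℝ) (ha0 : 0 ≤ a) (ha1 : a ≤ 1) (ha : ∀ b, a ≤ ν.real {b})
    (hx : (t : ℝ) ^ 2 * (1 - a ^ k) ^ (t / 2) ≤ 1) (j : ℕ) (hj : j ≤ k) :
    (Measure.pi fun _ : ι => ν).real {ω | ¬ ∃ σ, ω ∈ validEv ed c j σ} ≤
      j * (t * ((t : ℝ) ^ 2 * (1 - a ^ k) ^ (t / 2))) := by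
  classical
  set μ := Measure.pi fun _ : ι => ν
  have hak : a ^ k ≤ 1 := pow_le_one₀ ha0 ha1
  have hδ0 : 0 ≤ t * ((t : ℝ) ^ 2 * (1 - a ^ k) ^ (t / 2)) := by
    have : 0 ≤ 1 - a ^ k := by linarith
    positivity
  set δ := t * ((t : ℝ) ^ 2 * (1 - a ^ k) ^ (t / 2)) with hδ
  induction j with
  | zero =>
    have : {ω | ¬ ∃ σ, ω ∈ validEv ed c 0 σ} = ∅ := by
      ext ω
      simp [validEv]
    rw [this]; simp
  | succ j ih =>
    have hjk : j < k := hj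
    specialize ih (by omega)
    let J : Fin k := ⟨j, hjk⟩
    let S : Set ι := {e | ∃ r i s x, r < s ∧ s < J ∧ e = ed r i s x}
    let B : (Fin k → Equiv.Perm (Fin t)) → Set (ι → Bool) := fun σ =>
      {ω | ¬ ∃ τ : Equiv.Perm (Fin t), ∀ i,
      ω ∈ {ω : ι → Bool | ∀ r, r < J → ω (ed r (σ r i) J (τ i)) = c r J}}
    have hch := choice_prob ν S (validEv ed c j) B ?_ ?_ δ hδ0
      (fun σ => stage_prob ν ed hed c a ha0 ha1 ha hx J σ)
    · have hsub : {ω | ¬ ∃ σ, ω ∈ validEv ed c (j + 1) σ} ⊆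
        {ω | ¬ ∃ σ, ω ∈ validEv ed c j σ} ∪
          {ω | (∃ σ, ω ∈ validEv ed c j σ) ∧ ∀ σ, ω ∈ validEv ed c j σ → ω ∈ B σ} := by
        intro ω hω
        by_cases h : ∃ σ, ω ∈ validEv ed c j σ
        · right
          refine ⟨h, fun σ hσ hτ => hω ?_⟩
          obtain ⟨τ, hτ⟩ := hτ
          refine ⟨Function.update σ J τ, fun i r s hrs hs => ?_⟩
          rcases Nat.lt_succ_iff_lt_or_eq.1 hs with h1 | h1
          · have hsJ : s ≠ J := fun h => by simp [h, J] at h1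
            have hrJ : r ≠ J := fun h => by
              rw [Fin.lt_def, h] at hrs
              simp only [J] at hrs
              omega
            rw [Function.update_of_ne hsJ, Function.update_of_ne hrJ]
            exact hσ i r s hrs h1
          · have hsJ : s = J := Fin.ext h1
            subst hsJ
            rw [Function.update_self, Function.update_of_ne hrs.ne]
            exact hτ i r hrs
        · left; exact h
      have h1 := (measureReal_mono hsub (μ := μ)).trans (measureReal_union_le _ _)
      push_cast
      linarith
    · intro σ ω ω' h hω i r s hrs hs
      rw [← h _ ⟨r, σ r i, s, σ s i, hrs, hs, rfl⟩]
      exact hω i r s hrs hs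
    · intro σ
      apply detBy_compl
      rintro ω ω' h ⟨τ, hτ⟩
      refine ⟨τ, fun i r hr => ?_⟩
      rw [← h]
      · exact hτ i r hr
      · rintro ⟨r', i', s, x, h1, h2, h3⟩
        exact h2.ne (hed _ _ _ _ _ _ _ _ hr h1 h3).2.2.1.symm

lemma delta_tendsto (y : ℝ) (hy0 : 0 ≤ y) (hy1 : y < 1) :
    Tendsto (fun t : ℕ => (t : ℝ) * ((t : ℝ) ^ 2 * y ^ (t / 2))) atTop (nhds 0) := by
  have h1 : Tendsto (fun h : ℕ => (h : ℝ) ^ 3 * y ^ h) atTop (nhds 0) :=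
    tendsto_pow_const_mul_const_pow_of_lt_one 3 hy0 hy1
  have h2 : Tendsto (fun t : ℕ => t / 2) atTop atTop := Nat.tendsto_div_const_atTop (by norm_num)
  have h3 := (h1.comp h2).const_mul 27
  rw [mul_zero] at h3
  refine squeeze_zero' (Eventually.of_forall fun t => by positivity) ?_ h3
  filter_upwards [eventually_ge_atTop 2] with t ht
  have h4 : (t : ℝ) ≤ 3 * ((t / 2 : ℕ) : ℝ) := by
    have : t ≤ 3 * (t / 2) := by omega
    exact_mod_cast this
  simp only [Function.comp]
  calc (t : ℝ) * ((t : ℝ) ^ 2 * y ^ (t / 2)) = (t : ℝ) ^ 3 * y ^ (t / 2) := by ring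
    _ ≤ (3 * ((t / 2 : ℕ) : ℝ)) ^ 3 * y ^ (t / 2) := by gcongr
    _ = _ := by ring

end CoreArgument

lemma graphOf_adj {n : ℕ} (ω : EdgeType n → Bool) (x y : Fin n) (h : ¬ (s(x, y)).IsDiag) :
    (graphOf ω).Adj x y ↔ ω ⟨s(x, y), h⟩ = true := by
  have hne : x ≠ y := by simpa using h
  simp only [graphOf, SimpleGraph.fromEdgeSet_adj]
  constructor
  · rintro ⟨⟨_, h'⟩, _⟩
    exact h'
  · intro h'
    exact ⟨⟨h, h'⟩, hne⟩

lemma factor_prob (p : ℝ) (hp0 : 0 < p) (hp1 : p < 1) (k : ℕ) (hk : 3 ≤ k) :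
    ∃ a : ℝ, 0 < a ∧ a ≤ 1 ∧ (0 < a ^ k ∧ a ^ k ≤ 1) ∧ ∀ t : ℕ, 1 ≤ t →
      (t : ℝ) ^ 2 * (1 - a ^ k) ^ (t / 2) ≤ 1 → ∀ N, N = t * k →
      (erMeasure N p).real {ω | HasInducedCycleFactorOn (graphOf ω) k Set.univ}ᶜ ≤
        k * (t * ((t : ℝ) ^ 2 * (1 - a ^ k) ^ (t / 2))) := by
  classical
  have ha0 : 0 < min p (1 - p) := lt_min hp0 (by linarith)
  have ha1 : min p (1 - p) ≤ 1 := (min_le_left _ _).trans hp1.le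
  refine ⟨min p (1 - p), ha0, ha1, ⟨by positivity, pow_le_one₀ ha0.le ha1⟩, ?_⟩
  rintro t ht hx N rfl
  have : NeZero k := ⟨by omega⟩
  let v : Fin t × Fin k ≃ Fin (t * k) := finProdFinEquiv
  have hnd : ∀ (r s : Fin k) (i x : Fin t), r ≠ s → ¬ (s(v (i, r), v (x, s))).IsDiag := by
    intro r s i x h
    simp [h]
  let d : EdgeType (t * k) := ⟨s(v (⟨0, ht⟩, ⟨0, by omega⟩), v (⟨0, ht⟩, ⟨1, by omega⟩)),
    hnd _ _ _ _ (by simp)⟩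
  let ed : Fin k → Fin t → Fin k → Fin t → EdgeType (t * k) := fun r i s x =>
    if h : r ≠ s then ⟨s(v (i, r), v (x, s)), hnd r s i x h⟩ else d
  let φ : Fin k ≃ ZMod k := (ZMod.finEquiv k).toEquiv
  let c : Fin k → Fin k → Bool := fun r s => decide ((cycGraph k).Adj (φ r) (φ s))
  have hed : ∀ r i s x r' i' s' x', r < s → r' < s' → ed r i s x = ed r' i' s' x' →
      r = r' ∧ i = i' ∧ s = s' ∧ x = x' := by
    intro r i s x r' i' s' x' h h' he
    simp only [ed, dif_pos h.ne, dif_pos h'.ne, Subtype.mk.injEq, Sym2.eq_iff,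
      v.injective.eq_iff, Prod.mk.injEq] at he
    rcases he with he | he
    · exact ⟨he.1.2, he.1.1, he.2.2, he.2.1⟩
    · exfalso
      rw [he.1.2, he.2.2] at h
      exact lt_asymm h h'
  have hmin : min p.toNNReal 1 = p.toNNReal := min_eq_left (by simpa using hp1.le)
  have hν : ∀ b, min p (1 - p) ≤
      ((PMF.bernoulli (min (Real.toNNReal p) 1) (min_le_right _ _)).toMeasure).real {b} := by
    intro b
    rw [Measure.real, PMF.toMeasure_apply_singleton _ _ (by simp), PMF.bernoulli_apply]
    cases b
    · simp only [cond_false, hmin]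
      rw [ENNReal.coe_toReal, NNReal.coe_sub (by simpa using hp1.le)]
      simp [hp0.le]
    · simp [hmin, hp0.le]
  refine le_trans ?_ (core_prob _ ed hed c (min p (1 - p)) ha0.le ha1 hν hx k le_rfl)
  unfold erMeasure
  refine measureReal_mono ?_ (measure_ne_top _ _)
  intro ω hω hσ
  apply hω
  obtain ⟨σ, hσ⟩ := hσ
  have hadj : ∀ (i : Fin t) (r s : Fin k), r < s →
      ((graphOf ω).Adj (v (σ r i, r)) (v (σ s i, s)) ↔ (cycGraph k).Adj (φ r) (φ s)) := by
    intro i r s h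
    rw [graphOf_adj ω _ _ (hnd r s _ _ h.ne)]
    have := hσ i r s h s.isLt
    simp only [ed, dif_pos h.ne, c] at this
    rw [this]
    simp
  refine ⟨t, fun i b => v (σ (φ.symm b) i, φ.symm b), ?_, ?_, ?_, ?_⟩
  · intro i b b' h
    have := (Prod.mk.inj (v.injective h)).2
    exact φ.symm.injective this
  · intro i _ i' _ h
    rw [Function.onFun, Set.disjoint_left]
    rintro _ ⟨b, rfl⟩ ⟨b', h'⟩
    obtain ⟨h1, h2⟩ := Prod.mk.inj (v.injective h')
    rw [h2] at h1
    exact h ((σ _).injective h1).symm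
  · rw [Set.eq_univ_iff_forall]
    intro w
    obtain ⟨⟨x, r⟩, rfl⟩ := v.surjective w
    simp only [Set.mem_iUnion]
    exact ⟨(σ r).symm x, φ r, by simp⟩
  · intro i b b'
    obtain ⟨r, rfl⟩ := φ.surjective b
    obtain ⟨s, rfl⟩ := φ.surjective b'
    simp only [Equiv.symm_apply_apply]
    rcases lt_trichotomy r s with h | h | h
    · exact hadj i r s h
    · subst h; simp
    · rw [SimpleGraph.adj_comm, hadj i s r h, SimpleGraph.adj_comm]

/-- For fixed `p ∈ (0,1)`, `m ≥ 5` and `ℓ(n)` divisible by `m−2`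
with `c₁·n/ln n ≤ ℓ(n) ≤ c₂·n/ln n`, whp `G(ℓ(n),p)` contains an induced
`C_{m−2}`-factor. -/
theorem random_graph_induced_cycle_factor (p : ℝ) (hp0 : 0 < p) (hp1 : p < 1)
    (m : ℕ) (hm : 5 ≤ m) (ℓ : ℕ → ℕ) (c₁ c₂ : ℝ) (hc₁ : 0 < c₁) (hc : c₁ ≤ c₂)
    (hdvd : ∀ n : ℕ, (m - 2) ∣ ℓ n)
    (hlow : ∀ n : ℕ, 2 ≤ n → c₁ * n / Real.log n ≤ (ℓ n : ℝ))
    (hup : ∀ n : ℕ, 2 ≤ n → (ℓ n : ℝ) ≤ c₂ * n / Real.log n) :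
    Tendsto (fun n : ℕ =>
      erMeasure (ℓ n) p
        {ω | HasInducedCycleFactorOn (graphOf ω) (m - 2) Set.univ})
      atTop (nhds 1) := by
  obtain ⟨a, ha0, ha1, ha, hbound⟩ := factor_prob p hp0 hp1 (m - 2) (by omega)
  have hk : 0 < m - 2 := by omega
  choose t ht using hdvd
  have hlog : Tendsto (fun n : ℕ => c₁ * n / Real.log n) atTop atTop := by
    have h1 : Tendsto (fun x : ℝ => Real.log x / x) atTop (nhdsWithin 0 (Set.Ioi 0)) := by
      refine tendsto_nhdsWithin_iff.2 ⟨?_, ?_⟩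
      · exact Real.isLittleO_log_id_atTop.tendsto_div_nhds_zero
      · filter_upwards [eventually_gt_atTop 1] with x hx
        exact div_pos (Real.log_pos hx) (by linarith)
    have h2 := (h1.inv_tendsto_nhdsGT_zero.comp tendsto_natCast_atTop_atTop).const_mul_atTop hc₁
    refine h2.congr fun n => ?_
    simp [mul_div_assoc]
  have hl : Tendsto ℓ atTop atTop := by
    rw [← tendsto_natCast_atTop_iff (R := ℝ)]
    refine tendsto_atTop_mono' _ ?_ hlog
    filter_upwards [eventually_ge_atTop 2] with n hn using hlow n hn
  have htt : Tendsto t atTop atTop := by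
    rw [tendsto_atTop]
    intro b
    filter_upwards [hl.eventually_ge_atTop ((m - 2) * b)] with n hn
    rw [ht n] at hn
    exact Nat.le_of_mul_le_mul_left hn hk
  have hd := (delta_tendsto (1 - a ^ (m - 2)) (by linarith) (by linarith)).comp htt
  have hprob : ∀ n, IsProbabilityMeasure (erMeasure (ℓ n) p) := fun n => by
    unfold erMeasure; infer_instance
  have hreal : Tendsto (fun n : ℕ => (erMeasure (ℓ n) p).real
        {ω | HasInducedCycleFactorOn (graphOf ω) (m - 2) Set.univ}) atTop (nhds 1) := by
    have hlo : Tendsto (fun n : ℕ => 1 - ((m - 2 : ℕ) : ℝ) * ((t n : ℝ) * ((t n : ℝ) ^ 2 *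
        (1 - a ^ (m - 2)) ^ (t n / 2)))) atTop (nhds 1) := by
      simpa using (hd.const_mul ((m - 2 : ℕ) : ℝ)).const_sub 1
    refine tendsto_of_tendsto_of_tendsto_of_le_of_le' hlo tendsto_const_nhds ?_ ?_
    · filter_upwards [htt.eventually_ge_atTop 1, hd.eventually_le_const zero_lt_one]
        with n h1 h2
      have h0 : 0 ≤ (t n : ℝ) ^ 2 * (1 - a ^ (m - 2)) ^ (t n / 2) := by
        have : 0 ≤ 1 - a ^ (m - 2) := by linarith
        positivity
      have h1' : (1 : ℝ) ≤ t n := by exact_mod_cast h1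
      simp only [Function.comp] at h2
      have h3 := hbound (t n) h1 ((le_mul_of_one_le_left h0 h1').trans h2) (ℓ n)
        (by rw [ht n, mul_comm])
      rw [← compl_compl {ω | HasInducedCycleFactorOn (graphOf ω) (m - 2) Set.univ},
        probReal_compl_eq_one_sub (Set.toFinite _).measurableSet]
      exact sub_le_sub_left h3 1
    · exact Eventually.of_forall fun n => measureReal_le_one
  have := ENNReal.tendsto_ofReal hreal
  simpa [Measure.real, ENNReal.ofReal_toReal] using this
end
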